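/- arXiv:1104.3543 — 3 statements merged into one kernel-verified Lean document; each statement's English description precedes it below -/
import Mathlib

section
/- Let 𝒲 be a Banach space with a Schauder basis. Then either 𝒲 has a minimal infinite-dimensional closed subspace, or there exist a block subspace 𝒳 = [x_n] ⊆ 𝒲 and a countable ordinal α such that 𝒳 = [x_n] is both α-minimal and ω·α-tight. -/
open Filter Topology

namespace Rosendal

variable {𝒲 : Type} [NormedAddCommGroup 𝒲] [NormedSpace ℝ 𝒲]

/-- `(e n)` is a Schauder basis of the Banach space `𝒲`: every vector has a unique
representation as a norm-convergent series `∑ a n • e n`. -/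
def IsSchauderBasis (e : ℕ → 𝒲) : Prop :=
  ∀ x : 𝒲, ∃! a : ℕ → ℝ,
    Tendsto (fun N => ∑ i ∈ Finset.range N, a i • e i) atTop (𝓝 x)

/-- `x` is a linear combination of the vectors `b i`, `i ∈ s`. -/
def SuppIn (b : ℕ → 𝒲) (x : 𝒲) (s : Finset ℕ) : Prop :=
  ∃ a : ℕ → ℝ, x = ∑ i ∈ s, a i • b i

/-- `(y n)` is a block sequence with respect to the basic sequence `(b n)`: a sequence of
nonzero finite linear combinations of the `b i` with successive supports. -/
def IsBlockSeq (b : ℕ → 𝒲) (y : ℕ → 𝒲) : Prop :=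
  (∀ n, y n ≠ 0) ∧
  ∃ D : ℕ → Finset ℕ, (∀ n, SuppIn b (y n) (D n)) ∧
    ∀ n, ∀ i ∈ D n, ∀ j ∈ D (n + 1), i < j

/-- The closed linear span of a set. -/
noncomputable def closedSpan (S : Set 𝒲) : Submodule ℝ 𝒲 :=
  (Submodule.span ℝ S).topologicalClosure

/-- `(x i)_{i<k} ∼_K (y i)_{i<k}`:
`(1/K)‖∑ a i • x i‖ ≤ ‖∑ a i • y i‖ ≤ K‖∑ a i • x i‖` for all scalars. -/
def SeqEquiv (K : ℝ) (k : ℕ) (x y : ℕ → 𝒲) : Prop :=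
  ∀ a : ℕ → ℝ,
    (1 / K) * ‖∑ i ∈ Finset.range k, a i • x i‖ ≤ ‖∑ i ∈ Finset.range k, a i • y i‖ ∧
    ‖∑ i ∈ Finset.range k, a i • y i‖ ≤ K * ‖∑ i ∈ Finset.range k, a i • x i‖

/-- The tree `T((x n), Y, K)` of finite sequences `(y 0, …, y k)` of vectors of `Y` that are
`K`-equivalent to `(x 0, …, x k)`, ordered by end-extension. -/
def embTree (x : ℕ → 𝒲) (Y : Set 𝒲) (K : ℝ) : Set (List 𝒲) :=
  {l | (∀ v ∈ l, v ∈ Y) ∧ SeqEquiv K l.length (fun i => l.getD i 0) x}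

open Classical in
/-- The rank of a tree of finite sequences: if the proper end-extension relation is
well-founded (equivalently, for trees, there is no infinite branch), this is
`sup { ρ(s) + 1 : s ∈ T }` where `ρ` is the usual rank function; otherwise it is `∞ = ⊤`. -/
noncomputable def treeRank (T : Set (List 𝒲)) : WithTop Ordinal :=
  if h : WellFounded (fun t s : T => s.val <+: t.val ∧ s.val ≠ t.val) then
    ((⨆ s : T, Order.succ ((h.apply s).rank) : Ordinal) : WithTop Ordinal)
  else ⊤

open Classical in
/-- The embeddability index `Emb((x n), Y) = sup_{K ≥ 1} rank T((x n), Y, K)`. -/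
noncomputable def embIndex (x : ℕ → 𝒲) (Y : Set 𝒲) : WithTop Ordinal :=
  if ∃ K : ℝ, 1 ≤ K ∧ treeRank (embTree x Y K) = ⊤ then ⊤
  else ((sSup {o : Ordinal | ∃ K : ℝ, 1 ≤ K ∧
      (o : WithTop Ordinal) = treeRank (embTree x Y K)} : Ordinal) : WithTop Ordinal)

/-- `(I m)` is a sequence of successive nonempty finite intervals `I 0 < I 1 < …` of `ℕ`. -/
def IntervalSeq (I : ℕ → Finset ℕ) : Prop :=
  (∀ m, ∃ a b : ℕ, a ≤ b ∧ I m = Finset.Icc a b) ∧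
  ∀ m, ∀ i ∈ I m, ∀ j ∈ I (m + 1), i < j

/-- The closed subspace `[b n : n ∉ ⋃_{m ∈ A} I m]`. -/
noncomputable def residualSpace (b : ℕ → 𝒲) (I : ℕ → Finset ℕ) (A : Set ℕ) :
    Submodule ℝ 𝒲 :=
  closedSpan {v | ∃ n : ℕ, (∀ m ∈ A, n ∉ I m) ∧ v = b n}

/-- The space `[b n]` with its basis `(b n)` is `α`-tight. -/
def IsAlphaTight (b : ℕ → 𝒲) (α : Ordinal) : Prop :=
  ∀ y : ℕ → 𝒲, IsBlockSeq b y →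
    ∃ I : ℕ → Finset ℕ, IntervalSeq I ∧
      ∀ A : Set ℕ, A.Infinite →
        embIndex y (residualSpace b I A : Set 𝒲) ≤ (α : WithTop Ordinal)

/-- The space `[b n]` with its basis `(b n)` is `α`-minimal: every block subspace `[z n]`
`α`-embeds into every infinite-dimensional subspace `Y ⊆ [b n]`. -/
def IsAlphaMinimal (b : ℕ → 𝒲) (α : Ordinal) : Prop :=
  ∀ z : ℕ → 𝒲, IsBlockSeq b z →
    ∀ Y : Submodule ℝ 𝒲, (Y : Set 𝒲) ⊆ (closedSpan (Set.range b) : Set 𝒲) →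
      ¬FiniteDimensional ℝ Y →
        (α : WithTop Ordinal) ≤ embIndex z (Y : Set 𝒲)

/-- `X` embeds isomorphically into `Y` (as an isomorphism onto its image). -/
def LinIsoEmbeds (X Y : Submodule ℝ 𝒲) : Prop :=
  ∃ T : X →ₗ[ℝ] 𝒲, (∀ v : X, T v ∈ Y) ∧
    ∃ c C : ℝ, 0 < c ∧ ∀ v : X, c * ‖v‖ ≤ ‖T v‖ ∧ ‖T v‖ ≤ C * ‖v‖

/-- `X` is a minimal space: it embeds isomorphically into every infinite-dimensional
closed subspace of itself. -/
def IsMinimalSpace (X : Submodule ℝ 𝒲) : Prop :=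
  ∀ Y : Submodule ℝ 𝒲, Y ≤ X → IsClosed (Y : Set 𝒲) → ¬FiniteDimensional ℝ Y →
    LinIsoEmbeds X Y

/-- `F` embeds into `Y` with constant `K`. -/
def KEmbeds (K : ℝ) (F Y : Submodule ℝ 𝒲) : Prop :=
  ∃ T : F →ₗ[ℝ] 𝒲, (∀ v : F, T v ∈ Y) ∧
    ∀ v : F, (1 / K) * ‖v‖ ≤ ‖T v‖ ∧ ‖T v‖ ≤ K * ‖v‖

end Rosendal

namespace Rosendal

abbrev RE := ℕ →₀ ℚ

def Blk (x x' : ℕ → RE) : Prop :=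
  (∀ n, x' n ≠ 0) ∧ ∃ N : ℕ → ℕ, StrictMono N ∧
    ∀ n, x' n ∈ Submodule.span ℚ (x '' Set.Ico (N n) (N (n+1)))

def Bls (x x' : ℕ → RE) : Prop := ∃ m, Blk x (fun n => x' (n + m))

noncomputable def tsp (x : ℕ → RE) (n : ℕ) : Submodule ℚ RE := Submodule.span ℚ (x '' Set.Ici n)

lemma Blk.ne {x x' : ℕ → RE} (h : Blk x x') : ∀ n, x' n ≠ 0 := h.1

lemma Blk.refl {x : ℕ → RE} (h : ∀ n, x n ≠ 0) : Blk x x :=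
  ⟨h, id, strictMono_id, fun n => Submodule.subset_span ⟨n, by simp, rfl⟩⟩

lemma span_Ico_le {x y : ℕ → RE} {N : ℕ → ℕ} (hN : StrictMono N)
    (h : ∀ n, y n ∈ Submodule.span ℚ (x '' Set.Ico (N n) (N (n+1)))) (a b : ℕ) :
    Submodule.span ℚ (y '' Set.Ico a b) ≤ Submodule.span ℚ (x '' Set.Ico (N a) (N b)) := by
  rw [Submodule.span_le]
  rintro _ ⟨i, hi, rfl⟩
  refine Submodule.span_mono (Set.image_mono ?_) (h i)
  exact Set.Ico_subset_Ico (hN.monotone hi.1) (hN.monotone hi.2)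

lemma Blk.trans {x y z : ℕ → RE} (h : Blk x y) (h' : Blk y z) : Blk x z := by
  obtain ⟨_, N, hN, hy⟩ := h
  obtain ⟨hz, M, hM, hz'⟩ := h'
  exact ⟨hz, N ∘ M, hN.comp hM, fun n => span_Ico_le hN hy _ _ (hz' n)⟩

lemma Blk.shift {x y : ℕ → RE} (h : Blk x y) (m : ℕ) : Blk x (fun n => y (n + m)) := by
  obtain ⟨hy, N, hN, h⟩ := h
  refine ⟨fun n => hy _, fun n => N (n + m), fun a b hab => hN (by omega), fun n => ?_⟩
  have := h (n + m)
  rwa [show n + m + 1 = n + 1 + m by omega] at this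

lemma Blk.shift_shift {x y : ℕ → RE} (h : Blk x y) (m : ℕ) :
    Blk (fun n => x (n + m)) (fun n => y (n + m)) := by
  obtain ⟨hy, N, hN, h⟩ := h
  have hg : ∀ n, n ≤ N n := fun n => hN.le_apply
  refine ⟨fun n => hy _, fun n => N (n + m) - m, fun a b hab => ?_, fun n => ?_⟩
  · have := hN (show a + m < b + m by omega)
    have := hg (a + m)
    simp only
    omega
  · have := h (n + m)
    refine Submodule.span_mono ?_ this
    rintro _ ⟨i, hi, rfl⟩
    have := hg (n + m)
    have h1 := hi.1
    have h2 := hi.2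
    rw [show n + m + 1 = n + 1 + m by omega] at h2
    refine ⟨i - m, ⟨?_, ?_⟩, ?_⟩
    · simp only; omega
    · simp only; omega
    · simp only; congr 1; omega

lemma Blk.bls {x y : ℕ → RE} (h : Blk x y) : Bls x y := ⟨0, by simpa using h⟩

lemma Bls.trans {x y z : ℕ → RE} (h : Bls x y) (h' : Bls y z) : Bls x z := by
  obtain ⟨m, h⟩ := h
  obtain ⟨k, h'⟩ := h'
  refine ⟨m + k, h.trans ?_⟩
  have := h'.shift_shift m
  simpa [add_assoc] using this

lemma tsp_mono {x : ℕ → RE} {m n : ℕ} (h : m ≤ n) : tsp x n ≤ tsp x m :=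
  Submodule.span_mono (Set.image_mono (Set.Ici_subset_Ici.2 h))

lemma Blk.tsp_le {x y : ℕ → RE} (h : Blk x y) (n : ℕ) : tsp y n ≤ tsp x n := by
  obtain ⟨_, N, hN, h⟩ := h
  rw [tsp, Submodule.span_le]
  rintro _ ⟨i, hi, rfl⟩
  refine Submodule.span_mono (Set.image_mono ?_) (h i)
  intro j hj
  exact le_trans (le_trans (show n ≤ i from hi) (hN.le_apply)) hj.1

lemma Bls.tsp_le {x y : ℕ → RE} (h : Bls x y) : ∀ n, ∃ n', tsp y n' ≤ tsp x n := by
  obtain ⟨m, h⟩ := h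
  intro n
  refine ⟨n + m, le_trans ?_ (h.tsp_le n)⟩
  rw [tsp, tsp, Submodule.span_le]
  rintro _ ⟨i, hi, rfl⟩
  have hi : n + m ≤ i := hi
  refine Submodule.subset_span ⟨i - m, ?_, ?_⟩
  · simp; omega
  · simp only; congr 1; omega

lemma bls_shift_self {x : ℕ → RE} (h : ∀ n, x n ≠ 0) (m : ℕ) :
    Bls (fun n => x (n + m)) x := ⟨m, Blk.refl (fun n => h _)⟩

/-- diagonal lemma -/
lemma diag_nat (Q : ℕ → (ℕ → RE) → Prop) (x0 : ℕ → RE) (h0 : ∀ n, x0 n ≠ 0)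
    (h1 : ∀ n x, Blk x0 x → ∃ x', Blk x x' ∧ Q n x')
    (h2 : ∀ n x x', (∀ i, x' i ≠ 0) → Q n x → Bls x x' → Q n x') :
    ∃ x, Blk x0 x ∧ ∀ n, Q n x := by
  classical
  choose! f hf hQ using h1
  let X : ℕ → (ℕ → RE) := fun n => Nat.rec x0 (fun n x => f n x) n
  have hX0 : ∀ n, Blk x0 (X n) := by
    intro n
    induction n with
    | zero => exact Blk.refl h0
    | succ n ih => exact ih.trans (hf n _ ih)
  have hXs : ∀ n, Blk (X n) (X (n+1)) := fun n => hf n _ (hX0 n)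
  choose hne N hN hNs using hXs
  have hXne : ∀ n i, X n i ≠ 0 := fun n i => (hX0 n).ne i
  have key : ∀ m, Blk (X m) (fun n => X (n + m) (n + m)) := by
    intro m
    let M : ℕ → ℕ → ℕ := fun n => Nat.rec id (fun n g => g ∘ N (m + n)) n
    have hM : ∀ n, StrictMono (M n) := by
      intro n
      induction n with
      | zero => exact strictMono_id
      | succ n ih => exact ih.comp (hN _)
    have hMs : ∀ n j, X (m + n) j ∈ Submodule.span ℚ (X m '' Set.Ico (M n j) (M n (j+1))) := by
      intro n
      induction n with
      | zero => intro j; exact Submodule.subset_span ⟨j, by simp [M], rfl⟩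
      | succ n ih =>
        intro j
        exact span_Ico_le (hM n) ih _ _ (hNs (m + n) j)
    have hMM : ∀ n j, M n j ≤ M (n+1) j := fun n j => (hM n).monotone ((hN (m+n)).le_apply)
    refine ⟨fun n => hXne _ _, fun n => M n (n + m), strictMono_nat_of_lt_succ fun n => ?_,
      fun n => ?_⟩
    · exact lt_of_lt_of_le (hM n (show n + m < n + 1 + m by omega)) (hMM n _)
    · have := hMs n (n + m)
      show X (n + m) (n + m) ∈ Submodule.span ℚ (X m '' Set.Ico (M n (n + m)) (M (n+1) (n + 1 + m)))
      rw [show X (n + m) = X (m + n) by rw [add_comm]]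
      refine Submodule.span_mono (Set.image_mono (Set.Ico_subset_Ico le_rfl ?_)) this
      rw [show n + m + 1 = n + 1 + m by omega]
      exact hMM n _
  refine ⟨fun n => X n n, key 0, fun n => ?_⟩
  exact h2 n (X (n+1)) _ (fun i => hXne _ _) (hQ n _ (hX0 n)) ⟨n + 1, key (n+1)⟩

lemma diag {I : Type*} [Countable I] (Q : I → (ℕ → RE) → Prop) (x0 : ℕ → RE) (h0 : ∀ n, x0 n ≠ 0)
    (h1 : ∀ n x, Blk x0 x → ∃ x', Blk x x' ∧ Q n x')
    (h2 : ∀ n x x', (∀ i, x' i ≠ 0) → Q n x → Bls x x' → Q n x') :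
    ∃ x, Blk x0 x ∧ ∀ n, Q n x := by
  rcases isEmpty_or_nonempty I with hI | hI
  · exact ⟨x0, Blk.refl h0, fun n => (hI.false n).elim⟩
  · obtain ⟨g, hg⟩ := exists_surjective_nat I
    obtain ⟨x, hx, h⟩ := diag_nat (fun n => Q (g n)) x0 h0 (fun n => h1 _) (fun n => h2 _)
    refine ⟨x, hx, fun n => ?_⟩
    obtain ⟨k, rfl⟩ := hg n
    exact h k

lemma stab {I : Type*} [Countable I] (Θ : I → (ℕ → RE) → Prop) (x0 : ℕ → RE)
    (h0 : ∀ n, x0 n ≠ 0) (hm : ∀ i x x', Bls x x' → Θ i x' → Θ i x) :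
    ∃ x, Blk x0 x ∧ ∀ i, Θ i x → ∀ x', Blk x x' → Θ i x' := by
  obtain ⟨x, hx, h⟩ := diag (fun i x => Θ i x → ∀ x', Blk x x' → Θ i x') x0 h0 (by
    intro i x hx
    by_cases h : ∃ x', Blk x x' ∧ ¬ Θ i x'
    · obtain ⟨x', h1, h2⟩ := h
      exact ⟨x', h1, fun h => absurd h h2⟩
    · push Not at h
      exact ⟨x, Blk.refl hx.ne, fun _ => h⟩) (by
    intro i x x' hx' hQ hb hΘ z hz
    have h1 := hQ (hm i _ _ hb hΘ)
    obtain ⟨m, hb⟩ := hb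
    have := h1 _ (hb.trans (hz.shift_shift m))
    exact hm i _ _ (Blk.shift (Blk.refl hz.ne) m).bls this)
  exact ⟨x, hx, h⟩

/-! ### Games -/

def Bdd (ν : RE → ℝ) (K : ℕ) (Γ : Submodule ℚ (RE × RE)) : Prop :=
  ∀ p ∈ Γ, ν p.1 ≤ K * ν p.2 ∧ ν p.2 ≤ K * ν p.1

def Legal (ν : RE → ℝ) (K : ℕ) (V C : Submodule ℚ RE) (Γ : Submodule ℚ (RE × RE))
    (G F : Submodule ℚ RE) (Γ' : Submodule ℚ (RE × RE)) : Prop :=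
  F.FG ∧ F ≤ V ∧ Γ'.FG ∧ Γ ≤ Γ' ∧ Γ'.map (LinearMap.snd ℚ RE RE) ≤ G ⊔ F ∧
    C ≤ Γ'.map (LinearMap.fst ℚ RE RE) ∧ Bdd ν K Γ'

def WS {L : Type*} (ν : RE → ℝ) (lt : L → L → Prop) (K : ℕ) (U : Submodule ℚ RE)
    (V : ℕ → Submodule ℚ RE) (S : L → Submodule ℚ (RE × RE) → Submodule ℚ RE → Prop) : Prop :=
  ∀ a Γ G, S a Γ G → ∀ b, lt b a → ∀ (n : ℕ) (C : Submodule ℚ RE), C.FG → C ≤ U →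
    ∃ F Γ', Legal ν K (V n) C Γ G F Γ' ∧ S b Γ' (G ⊔ F)

def WW {L : Type*} (ν : RE → ℝ) (lt : L → L → Prop) (K : ℕ) (U : Submodule ℚ RE)
    (V : ℕ → Submodule ℚ RE) (a : L) (Γ : Submodule ℚ (RE × RE)) (G : Submodule ℚ RE) : Prop :=
  ∃ S, S a Γ G ∧ WS ν lt K U V S

def WG {L : Type*} (ν : RE → ℝ) (lt : L → L → Prop) (K : ℕ) (U T : Submodule ℚ RE)
    (a : L) (Γ : Submodule ℚ (RE × RE)) : Prop :=
  ∃ S : L → Submodule ℚ (RE × RE) → Prop, S a Γ ∧ ∀ a Γ, S a Γ → ∀ b, lt b a →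
    ∀ C : Submodule ℚ RE, C.FG → C ≤ U →
    ∃ Γ', Γ ≤ Γ' ∧ Γ'.map (LinearMap.snd ℚ RE RE) ≤ T ∧ C ≤ Γ'.map (LinearMap.fst ℚ RE RE) ∧
      Bdd ν K Γ' ∧ S b Γ'

section
variable {L : Type*} {ν : RE → ℝ} {lt : L → L → Prop} {K : ℕ} {U U' : Submodule ℚ RE}
  {V V' : ℕ → Submodule ℚ RE} {a b : L} {Γ : Submodule ℚ (RE × RE)} {G : Submodule ℚ RE}

lemma WW.unfold (h : WW ν lt K U V a Γ G) {b : L} (hb : lt b a) (n : ℕ) (C : Submodule ℚ RE)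
    (hC : C.FG) (hCU : C ≤ U) :
    ∃ F Γ', Legal ν K (V n) C Γ G F Γ' ∧ WW ν lt K U V b Γ' (G ⊔ F) := by
  obtain ⟨S, hS, h⟩ := h
  obtain ⟨F, Γ', h1, h2⟩ := h a Γ G hS b hb n C hC hCU
  exact ⟨F, Γ', h1, S, h2, h⟩

lemma WW.fold (h : ∀ b, lt b a → ∀ (n : ℕ) (C : Submodule ℚ RE), C.FG → C ≤ U →
    ∃ F Γ', Legal ν K (V n) C Γ G F Γ' ∧ WW ν lt K U V b Γ' (G ⊔ F)) : WW ν lt K U V a Γ G := by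
  refine ⟨fun a' Γ' G' => (a' = a ∧ Γ' = Γ ∧ G' = G) ∨ WW ν lt K U V a' Γ' G', Or.inl ⟨rfl, rfl, rfl⟩, ?_⟩
  rintro a' Γ' G' (⟨rfl, rfl, rfl⟩ | h') b hb n C hC hCU
  · obtain ⟨F, Γ', h1, h2⟩ := h b hb n C hC hCU
    exact ⟨F, Γ', h1, Or.inr h2⟩
  · obtain ⟨F, Γ', h1, h2⟩ := h'.unfold hb n C hC hCU
    exact ⟨F, Γ', h1, Or.inr h2⟩

lemma WW.mono (hU : U' ≤ U) (hV : ∀ n, ∃ n', V n' ≤ V' n) (h : WW ν lt K U V a Γ G) :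
    WW ν lt K U' V' a Γ G := by
  obtain ⟨S, hS, h⟩ := h
  refine ⟨S, hS, fun a Γ G hS b hb n C hC hCU => ?_⟩
  obtain ⟨n', hn⟩ := hV n
  obtain ⟨F, Γ', ⟨h1, h1', h2⟩, h3⟩ := h a Γ G hS b hb n' C hC (hCU.trans hU)
  exact ⟨F, Γ', ⟨h1, h1'.trans hn, h2⟩, h3⟩

end

/-- composition of relations -/
def rcomp {R A B C : Type*} [Ring R] [AddCommGroup A] [AddCommGroup B] [AddCommGroup C]
    [Module R A] [Module R B] [Module R C] (Γ : Submodule R (A × B)) (Δ : Submodule R (B × C)) :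
    Submodule R (A × C) where
  carrier := {p | ∃ b, (p.1, b) ∈ Γ ∧ (b, p.2) ∈ Δ}
  zero_mem' := ⟨0, Γ.zero_mem, Δ.zero_mem⟩
  add_mem' := by
    rintro p q ⟨b, h1, h2⟩ ⟨c, h3, h4⟩
    exact ⟨b + c, Γ.add_mem h1 h3, Δ.add_mem h2 h4⟩
  smul_mem' := by
    rintro r p ⟨b, h1, h2⟩
    exact ⟨r • b, Γ.smul_mem r h1, Δ.smul_mem r h2⟩

lemma mem_rcomp {R A B C : Type*} [Ring R] [AddCommGroup A] [AddCommGroup B] [AddCommGroup C]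
    [Module R A] [Module R B] [Module R C] {Γ : Submodule R (A × B)} {Δ : Submodule R (B × C)}
    {p : A × C} : p ∈ rcomp Γ Δ ↔ ∃ b, (p.1, b) ∈ Γ ∧ (b, p.2) ∈ Δ := Iff.rfl

lemma core {L : Type*} [Countable L] (ν : RE → ℝ) (lt : L → L → Prop) (a0 : L) (x0 : ℕ → RE)
    (h0 : ∀ n, x0 n ≠ 0)
    (h : ∀ x, Blk x0 x → ∃ y, Blk x y ∧ ∃ K, WW ν lt K (tsp y 0) (tsp x) a0 ⊥ ⊥) :
    ∃ x, Blk x0 x ∧ ∃ y, Blk x y ∧ ∃ K, ∀ Z, Blk x Z → WG ν lt K (tsp y 0) (tsp Z 0) a0 ⊥ := by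
  classical
  -- uniformise K
  obtain ⟨K, x1, hx1, h1⟩ : ∃ K x1, Blk x0 x1 ∧ ∀ x, Blk x1 x →
      ∃ w, Blk x w ∧ WW ν lt K (tsp w 0) (tsp x) a0 ⊥ ⊥ := by
    by_contra hcon
    push Not at hcon
    obtain ⟨x, hx, hQ⟩ := diag (fun (K : ℕ) x => ∀ w, Blk x w →
        ¬ WW ν lt K (tsp w 0) (tsp x) a0 ⊥ ⊥) x0 h0 (fun K x hx => hcon K x hx) (by
      intro K x x' hx' hQ hb w hw hW
      obtain ⟨m, hm⟩ := id hb
      refine hQ _ (hm.trans (hw.shift_shift m)) ?_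
      exact hW.mono ((Blk.shift (Blk.refl hw.ne) m).tsp_le 0) hb.tsp_le)
    obtain ⟨y, hy, K, hW⟩ := h x hx
    exact hQ K y hy hW
  -- stabilise
  let Θ : L → Submodule ℚ (RE × RE) → Submodule ℚ RE → (ℕ → RE) → Prop := fun a Γ G x =>
    ∃ w, Blk x w ∧ WW ν lt K (tsp w 0) (tsp x) a Γ G
  let R : L → Submodule ℚ (RE × RE) → Submodule ℚ RE → Submodule ℚ RE → (ℕ → RE) → Prop :=
    fun b Γ G C x => ∀ n, ∃ F Γ', Legal ν K (tsp x n) C Γ G F Γ' ∧ Θ b Γ' (G ⊔ F) x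
  have Θmono : ∀ a Γ G x x', Bls x x' → Θ a Γ G x' → Θ a Γ G x := by
    rintro a Γ G x x' hb ⟨w, hw, hW⟩
    obtain ⟨m, hm⟩ := id hb
    exact ⟨_, hm.trans (hw.shift_shift m),
      hW.mono ((Blk.shift (Blk.refl hw.ne) m).tsp_le 0) hb.tsp_le⟩
  have Rmono : ∀ b Γ G C x x', Bls x x' → R b Γ G C x' → R b Γ G C x := by
    intro b Γ G C x x' hb hR n
    obtain ⟨n', hn⟩ := hb.tsp_le n
    obtain ⟨F, Γ', ⟨h1, h1', h2⟩, h3⟩ := hR n'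
    exact ⟨F, Γ', ⟨h1, h1'.trans hn, h2⟩, Θmono _ _ _ _ _ hb h3⟩
  obtain ⟨x2, hx2, hs⟩ := stab (I := (L × Finset (RE × RE) × Finset RE) ⊕
      (L × Finset (RE × RE) × Finset RE × Finset RE))
    (fun i x => match i with
      | Sum.inl (a, s, t) => Θ a (Submodule.span ℚ s) (Submodule.span ℚ t) x
      | Sum.inr (a, s, t, u) =>
        R a (Submodule.span ℚ s) (Submodule.span ℚ t) (Submodule.span ℚ u) x)
    x1 hx1.ne (by
      rintro (⟨a, s, t⟩ | ⟨a, s, t, u⟩) x x' hb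
      · exact Θmono _ _ _ _ _ hb
      · exact Rmono _ _ _ _ _ _ hb)
  have Θst : ∀ a (Γ : Submodule ℚ (RE × RE)) (G : Submodule ℚ RE), Γ.FG → G.FG → Θ a Γ G x2 →
      ∀ x', Blk x2 x' → Θ a Γ G x' := by
    rintro a _ _ ⟨s, rfl⟩ ⟨t, rfl⟩
    exact hs (Sum.inl (a, s, t))
  have Rst : ∀ a (Γ : Submodule ℚ (RE × RE)) (G C : Submodule ℚ RE), Γ.FG → G.FG → C.FG →
      R a Γ G C x2 → ∀ x', Blk x2 x' → R a Γ G C x' := by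
    rintro a _ _ _ ⟨s, rfl⟩ ⟨t, rfl⟩ ⟨u, rfl⟩
    exact hs (Sum.inr (a, s, t, u))
  -- Y
  obtain ⟨Y, hY, hYQ⟩ := diag (I := L × L × Finset (RE × RE) × Finset RE)
    (fun i x => lt i.2.1 i.1 → Θ i.1 (Submodule.span ℚ i.2.2.1) (Submodule.span ℚ i.2.2.2) x2 →
      ∃ m, ∀ C : Submodule ℚ RE, C.FG → C ≤ tsp x m →
        R i.2.1 (Submodule.span ℚ i.2.2.1) (Submodule.span ℚ i.2.2.2) C x2) x2 hx2.ne (by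
      rintro ⟨a, b, s, t⟩ x hx
      by_cases hΘ : Θ a (Submodule.span ℚ s) (Submodule.span ℚ t) x2
      · obtain ⟨w, hw, hW⟩ := Θst a _ _ ⟨s, rfl⟩ ⟨t, rfl⟩ hΘ x hx
        refine ⟨w, hw, fun hab _ => ⟨0, fun C hC hCw => ?_⟩⟩
        refine Rmono _ _ _ _ _ _ hx.bls fun n => ?_
        obtain ⟨F, Γ', h1, h2⟩ := hW.unfold hab n C hC hCw
        exact ⟨F, Γ', h1, w, hw, h2⟩
      · exact ⟨x, Blk.refl hx.ne, fun _ h => absurd h hΘ⟩) (by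
      rintro ⟨a, b, s, t⟩ x x' hx' hQ hb hab hΘ
      obtain ⟨m, hm⟩ := hQ hab hΘ
      obtain ⟨m', hm'⟩ := hb.tsp_le m
      exact ⟨m', fun C hC hCw => hm C hC (hCw.trans hm')⟩)
  have hY' : ∀ a b (Γ : Submodule ℚ (RE × RE)) (G : Submodule ℚ RE), lt b a → Γ.FG → G.FG →
      Θ a Γ G x2 → ∃ m, ∀ C : Submodule ℚ RE, C.FG → C ≤ tsp Y m → R b Γ G C x2 := by
    rintro a b _ _ hab ⟨s, rfl⟩ ⟨t, rfl⟩ hΘ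
    exact hYQ (a, b, s, t) hab hΘ
  obtain ⟨y, hy, hyW⟩ := h1 Y (hx2.trans hY)
  refine ⟨x2, hx1.trans hx2, y, hY.trans hy, K * K, fun Z hZ => ?_⟩
  refine ⟨fun a Γ => ∃ Γ1 G1 Γ2 G2, WW ν lt K (tsp y 0) (tsp Y) a Γ1 G1 ∧ Θ a Γ2 G2 x2 ∧
    G1 ≤ Γ2.map (LinearMap.fst ℚ RE RE) ∧ Γ2.FG ∧ G2.FG ∧ G2 ≤ tsp Z 0 ∧ Γ = rcomp Γ1 Γ2,
    ⟨⊥, ⊥, ⊥, ⊥, hyW, h1 x2 hx2, bot_le, Submodule.fg_bot, Submodule.fg_bot, bot_le, ?_⟩, ?_⟩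
  · symm
    rw [eq_bot_iff]
    rintro ⟨p, q⟩ ⟨b, h1, h2⟩
    simp only [Submodule.mem_bot, Prod.mk_eq_zero] at h1 h2
    simp [h1.1, h2.2]
  · rintro a Γ ⟨Γ1, G1, Γ2, G2, hW, hΘ, hG1, hΓ2, hG2, hG2Z, rfl⟩ b hb C hC hCy
    obtain ⟨m, hm⟩ := hY' a b Γ2 G2 hb hΓ2 hG2 hΘ
    obtain ⟨F, Γ1', ⟨hF, hFm, _, hle, hsnd, hfst, hB⟩, hW'⟩ := hW.unfold hb m C hC hCy
    obtain ⟨F2, Γ2', ⟨hF2, hF2m, hΓ2', hle2, hsnd2, hfst2, hB2⟩, hΘ'⟩ :=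
      Rst b Γ2 G2 F hΓ2 hG2 hF (hm F hF hFm) Z hZ 0
    have hGZ : G2 ⊔ F2 ≤ tsp Z 0 := sup_le hG2Z hF2m
    have hGF : G1 ⊔ F ≤ Γ2'.map (LinearMap.fst ℚ RE RE) :=
      sup_le (hG1.trans (Submodule.map_mono hle2)) hfst2
    refine ⟨rcomp Γ1' Γ2', ?_, ?_, ?_, ?_, Γ1', G1 ⊔ F, Γ2', G2 ⊔ F2, hW',
      Θmono _ _ _ _ _ hZ.bls hΘ', hGF, hΓ2', hG2.sup hF2, hGZ, rfl⟩
    · rintro p ⟨c, h1, h2⟩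
      exact ⟨c, hle h1, hle2 h2⟩
    · rintro _ ⟨p, ⟨c, h1, h2⟩, rfl⟩
      exact hGZ (hsnd2 ⟨(c, p.2), h2, rfl⟩)
    · intro c hc
      obtain ⟨⟨c', d⟩, hcd, rfl⟩ := hfst hc
      obtain ⟨⟨d', f⟩, hdf, hd⟩ := hGF (hsnd ⟨(c', d), hcd, rfl⟩)
      simp only [LinearMap.fst_apply, LinearMap.snd_apply] at hd
      subst hd
      exact ⟨(c', f), ⟨d', hcd, hdf⟩, rfl⟩
    · rintro ⟨p, q⟩ ⟨c, h1, h2⟩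
      have e1 := hB _ h1
      have e2 := hB2 _ h2
      simp only at e1 e2 ⊢
      have hK : (0:ℝ) ≤ K := Nat.cast_nonneg K
      push_cast
      constructor <;> nlinarith
end Rosendal

namespace Rosendal

section analysis
variable {𝒲 : Type} [NormedAddCommGroup 𝒲] [NormedSpace ℝ 𝒲]

def PR (b : ℕ → 𝒲) (C : ℝ) (Q : ℕ → 𝒲 →L[ℝ] 𝒲) : Prop :=
  1 ≤ C ∧ (∀ n, b n ≠ 0) ∧ (∀ k v, ‖Q k v‖ ≤ C * ‖v‖) ∧
    ∀ k i, Q k (b i) = if i < k then b i else 0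

lemma schauder_PR [CompleteSpace 𝒲] {e : ℕ → 𝒲} (he : IsSchauderBasis e) :
    ∃ C Q, PR e C Q := by
  classical
  choose A hA hAu using he
  have hAu : ∀ x a, Tendsto (fun N => ∑ i ∈ Finset.range N, a i • e i) atTop (𝓝 x) → a = A x :=
    fun x a h => hAu x a h
  have hA : ∀ x, Tendsto (fun N => ∑ i ∈ Finset.range N, A x i • e i) atTop (𝓝 x) :=
    fun x => hA x
  have Aadd : ∀ x y i, A (x + y) i = A x i + A y i := by
    intro x y i
    have := hAu (x + y) (fun i => A x i + A y i) (by
      simpa [add_smul, Finset.sum_add_distrib] using (hA x).add (hA y))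
    rw [← this]
  have Asmul : ∀ (r : ℝ) x i, A (r • x) i = r * A x i := by
    intro r x i
    have := hAu (r • x) (fun i => r * A x i) (by
      simpa [mul_smul, Finset.smul_sum] using (hA x).const_smul r)
    rw [← this]
  have hbd : ∀ x, ∃ M : ℝ, ∀ N, ‖∑ i ∈ Finset.range N, A x i • e i‖ ≤ M := by
    intro x
    obtain ⟨M, hM⟩ := (Metric.isBounded_range_of_tendsto _ (hA x)).exists_norm_le
    exact ⟨M, fun N => hM _ ⟨N, rfl⟩⟩
  choose M hM using hbd
  let T : 𝒲 →ₗ[ℝ] (BoundedContinuousFunction ℕ 𝒲) :=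
    { toFun := fun x => BoundedContinuousFunction.ofNormedAddCommGroupDiscrete
        (fun N => ∑ i ∈ Finset.range N, A x i • e i) (M x) (hM x)
      map_add' := by
        intro x y
        ext N
        simp [Aadd, add_smul, Finset.sum_add_distrib]
      map_smul' := by
        intro r x
        ext N
        simp [Asmul, mul_smul, Finset.smul_sum] }
  have hT : ∀ x N, T x N = ∑ i ∈ Finset.range N, A x i • e i := fun x N => rfl
  have hcont : Continuous T := by
    refine T.continuous_of_seq_closed_graph fun u x s hu hs => ?_
    have hsN : ∀ N, Tendsto (fun k => T (u k) N) atTop (𝓝 (s N)) := fun N =>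
      ((BoundedContinuousFunction.evalCLM ℝ N).continuous.tendsto s).comp hs
    have hstep : ∀ n, s (n+1) - s n ∈ Submodule.span ℝ {e n} := by
      intro n
      have hcl : IsClosed (Submodule.span ℝ {e n} : Set 𝒲) :=
        Submodule.closed_of_finiteDimensional _
      refine hcl.mem_of_tendsto ((hsN (n+1)).sub (hsN n)) (Eventually.of_forall fun k => ?_)
      rw [hT, hT, Finset.sum_range_succ, add_sub_cancel_left]
      exact Submodule.smul_mem _ _ (Submodule.mem_span_singleton_self _)
    have hs0 : s 0 = 0 := by
      refine tendsto_nhds_unique (hsN 0) ?_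
      simp [hT]
    choose b hb using fun n => Submodule.mem_span_singleton.1 (hstep n)
    have hsum : ∀ N, s N = ∑ i ∈ Finset.range N, b i • e i := by
      intro N
      induction N with
      | zero => simp [hs0]
      | succ n ih => rw [Finset.sum_range_succ, ← ih, hb]; abel
    have hlim : Tendsto (fun N => ∑ i ∈ Finset.range N, b i • e i) atTop (𝓝 x) := by
      rw [Metric.tendsto_atTop]
      intro ε hε
      have h1 := (Metric.tendsto_atTop.1 hu) (ε/3) (by positivity)
      have h2 := (Metric.tendsto_atTop.1 hs) (ε/3) (by positivity)
      obtain ⟨k1, h1⟩ := h1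
      obtain ⟨k2, h2⟩ := h2
      have h1 := h1 (max k1 k2) (le_max_left _ _)
      have h2 := h2 (max k1 k2) (le_max_right _ _)
      set k := max k1 k2
      obtain ⟨N0, h3⟩ := (Metric.tendsto_atTop.1 (hA (u k))) (ε/3) (by positivity)
      refine ⟨N0, fun N hN => ?_⟩
      have h3 := h3 N hN
      rw [← hsum]
      have h4 : dist (s N) (T (u k) N) < ε/3 := by
        rw [dist_comm]
        exact lt_of_le_of_lt (BoundedContinuousFunction.dist_coe_le_dist N) h2
      rw [hT] at h4
      calc dist (s N) x ≤ dist (s N) (∑ i ∈ Finset.range N, A (u k) i • e i) +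
            dist (∑ i ∈ Finset.range N, A (u k) i • e i) (u k) + dist (u k) x :=
              dist_triangle4 _ _ _ _
        _ < ε := by linarith
    ext N
    rw [hsum, hT, hAu x b hlim]
  let T' : 𝒲 →L[ℝ] (BoundedContinuousFunction ℕ 𝒲) := ⟨T, hcont⟩
  have hbasis : ∀ i, A (e i) = fun j => if j = i then 1 else 0 := by
    intro i
    symm
    refine hAu _ _ ?_
    refine tendsto_const_nhds.congr' ?_
    filter_upwards [eventually_gt_atTop i] with N hN
    simp [ite_smul, Finset.sum_ite_eq', hN]
  refine ⟨max 1 ‖T'‖, fun N => (BoundedContinuousFunction.evalCLM ℝ N).comp T', le_max_left _ _,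
    ?_, ?_, ?_⟩
  · intro n hn
    have h0 : (fun _ => 0) = A (0:𝒲) := hAu _ _ (by simp)
    have h1 := congrFun (hbasis n) n
    rw [hn, ← h0] at h1
    simp at h1
  · intro k v
    calc ‖T' v k‖ ≤ ‖T' v‖ := BoundedContinuousFunction.norm_coe_le_norm _ _
      _ ≤ ‖T'‖ * ‖v‖ := T'.le_opNorm v
      _ ≤ _ := by gcongr; exact le_max_right _ _
  · intro k i
    show T (e i) k = _
    rw [hT, hbasis]
    simp [ite_smul, Finset.sum_ite_eq']

/-! ι -/
noncomputable def io (e : ℕ → 𝒲) (f : RE) : 𝒲 := f.sum fun i q => (q : ℝ) • e i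

lemma io_add (e : ℕ → 𝒲) (f g : RE) : io e (f + g) = io e f + io e g := by
  unfold io
  exact Finsupp.sum_add_index' (by simp) (by intros; push_cast; rw [add_smul])

lemma io_smul (e : ℕ → 𝒲) (q : ℚ) (f : RE) : io e (q • f) = (q : ℝ) • io e f := by
  unfold io
  rw [Finsupp.sum_smul_index' (by simp), Finsupp.smul_sum]
  simp [mul_smul]

@[simp] lemma io_zero (e : ℕ → 𝒲) : io e 0 = 0 := by simp [io]

lemma io_single (e : ℕ → 𝒲) (i : ℕ) (q : ℚ) : io e (Finsupp.single i q) = (q : ℝ) • e i := by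
  simp [io]

lemma io_neg (e : ℕ → 𝒲) (f : RE) : io e (-f) = - io e f := by
  have := io_smul e (-1) f
  simpa using this

lemma io_sub (e : ℕ → 𝒲) (f g : RE) : io e (f - g) = io e f - io e g := by
  rw [sub_eq_add_neg, io_add, io_neg, sub_eq_add_neg]

lemma io_sum (e : ℕ → 𝒲) {J : Type*} (s : Finset J) (q : J → ℚ) (f : J → RE) :
    io e (∑ i ∈ s, q i • f i) = ∑ i ∈ s, (q i : ℝ) • io e (f i) := by
  classical
  induction s using Finset.induction_on with
  | empty => simp
  | insert a s ha ih => rw [Finset.sum_insert ha, Finset.sum_insert ha, io_add, io_smul, ih]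

lemma io_mem_span (e : ℕ → 𝒲) (x : ℕ → RE) (s : Set ℕ) {f : RE}
    (hf : f ∈ Submodule.span ℚ (x '' s)) :
    io e f ∈ Submodule.span ℝ ((fun i => io e (x i)) '' s) := by
  induction hf using Submodule.span_induction with
  | mem v hv =>
    obtain ⟨i, hi, rfl⟩ := hv
    exact Submodule.subset_span ⟨i, hi, rfl⟩
  | zero => simp
  | add f g _ _ h1 h2 => rw [io_add]; exact Submodule.add_mem _ h1 h2
  | smul q f _ h => rw [io_smul]; exact Submodule.smul_mem _ _ h

/-! closure lemma -/
lemma closure_submodule {M : Type*} [AddCommGroup M] [Module ℝ M] [TopologicalSpace M]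
    [IsTopologicalAddGroup M] [ContinuousSMul ℝ M] (S : Set M) (h0 : (0:M) ∈ S)
    (ha : ∀ u ∈ S, ∀ v ∈ S, u + v ∈ S) (hq : ∀ (q : ℚ), ∀ u ∈ S, (q:ℝ) • u ∈ S) :
    ∃ N : Submodule ℝ M, (N : Set M) = closure S := by
  refine ⟨{ carrier := closure S, zero_mem' := subset_closure h0, add_mem' := ?_, smul_mem' := ?_ },
    rfl⟩
  · intro u v hu hv
    exact map_mem_closure₂ continuous_add hu hv ha
  · intro r u hu
    have hr : r ∈ closure (Set.range ((↑) : ℚ → ℝ)) := Rat.denseRange_cast r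
    refine map_mem_closure₂ continuous_smul hr hu ?_
    rintro _ ⟨q, rfl⟩ v hv
    exact hq q v hv

lemma span_le_closure {M : Type*} [AddCommGroup M] [Module ℝ M] [TopologicalSpace M]
    [IsTopologicalAddGroup M] [ContinuousSMul ℝ M] (S : Set M) (h0 : (0:M) ∈ S)
    (ha : ∀ u ∈ S, ∀ v ∈ S, u + v ∈ S) (hq : ∀ (q : ℚ), ∀ u ∈ S, (q:ℝ) • u ∈ S) :
    (Submodule.span ℝ S : Set M) ⊆ closure S := by
  obtain ⟨N, hN⟩ := closure_submodule S h0 ha hq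
  rw [← hN]
  have : Submodule.span ℝ S ≤ N := Submodule.span_le.2 (by rw [hN]; exact subset_closure)
  exact this

lemma bdd_closure (S : Set (𝒲 × 𝒲)) (K : ℝ)
    (h : ∀ p ∈ S, ‖p.1‖ ≤ K * ‖p.2‖ ∧ ‖p.2‖ ≤ K * ‖p.1‖) :
    ∀ p ∈ closure S, ‖p.1‖ ≤ K * ‖p.2‖ ∧ ‖p.2‖ ≤ K * ‖p.1‖ := by
  have hc : IsClosed {p : 𝒲 × 𝒲 | ‖p.1‖ ≤ K * ‖p.2‖ ∧ ‖p.2‖ ≤ K * ‖p.1‖} := by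
    have c1 : Continuous fun p : 𝒲 × 𝒲 => ‖p.1‖ := by fun_prop
    have c2 : Continuous fun p : 𝒲 × 𝒲 => ‖p.2‖ := by fun_prop
    exact (isClosed_le c1 (continuous_const.mul c2)).inter (isClosed_le c2 (continuous_const.mul c1))
  intro p hp
  exact (closure_minimal (show S ⊆ _ from h) hc) hp

/-! blocks -/
def RBlk (b y : ℕ → 𝒲) : Prop :=
  (∀ n, y n ≠ 0) ∧ ∃ N : ℕ → ℕ, StrictMono N ∧
    ∀ n, y n ∈ Submodule.span ℝ (b '' Set.Ico (N n) (N (n+1)))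

lemma RBlk.isBlockSeq {b y : ℕ → 𝒲} (h : RBlk b y) : IsBlockSeq b y := by
  obtain ⟨h0, N, hN, h⟩ := h
  refine ⟨h0, fun n => Finset.Ico (N n) (N (n+1)), fun n => ?_, fun n i hi j hj => ?_⟩
  · have := h n
    rw [← Finset.coe_Ico, Submodule.mem_span_image_finset_iff_exists_fun] at this
    obtain ⟨c, hc⟩ := this
    refine ⟨fun i => if h : i ∈ Finset.Ico (N n) (N (n+1)) then c ⟨i, h⟩ else 0, ?_⟩
    rw [← hc, ← Finset.sum_coe_sort (Finset.Ico (N n) (N (n+1)))]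
    refine Finset.sum_congr rfl fun i _ => ?_
    beta_reduce
    rw [dif_pos i.2]
  · simp only [Finset.mem_Ico] at hi hj
    omega

lemma IsBlockSeq.rblk {b y : ℕ → 𝒲} (h : IsBlockSeq b y) : RBlk b y := by
  obtain ⟨h0, D, hD, hlt⟩ := h
  have hne : ∀ n, (D n).Nonempty := by
    intro n
    rw [Finset.nonempty_iff_ne_empty]
    intro h
    obtain ⟨a, ha⟩ := hD n
    rw [h] at ha
    exact h0 n (by simpa using ha)
  refine ⟨h0, fun n => (D n).min' (hne n), strictMono_nat_of_lt_succ fun n => ?_, fun n => ?_⟩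
  · exact hlt n _ (Finset.min'_mem _ _) _ (Finset.min'_mem _ _)
  · obtain ⟨a, ha⟩ := hD n
    rw [ha]
    refine Submodule.sum_mem _ fun i hi => Submodule.smul_mem _ _ (Submodule.subset_span ⟨i, ⟨?_, ?_⟩, rfl⟩)
    · exact Finset.min'_le _ _ hi
    · exact hlt n i hi _ (Finset.min'_mem _ _)

section PRl
variable {b : ℕ → 𝒲} {C : ℝ} {Q : ℕ → 𝒲 →L[ℝ] 𝒲}

lemma PR.pos (h : PR b C Q) : 0 < C := by linarith [h.1]

lemma PR.low (h : PR b C Q) {k : ℕ} {s : Set ℕ} (hs : ∀ i ∈ s, i < k) {v : 𝒲}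
    (hv : v ∈ Submodule.span ℝ (b '' s)) : Q k v = v := by
  induction hv using Submodule.span_induction with
  | mem v hv =>
    obtain ⟨i, hi, rfl⟩ := hv
    rw [h.2.2.2, if_pos (hs i hi)]
  | zero => simp
  | add f g _ _ h1 h2 => rw [map_add, h1, h2]
  | smul q f _ h => rw [map_smul, h]

lemma PR.high (h : PR b C Q) {k : ℕ} {s : Set ℕ} (hs : ∀ i ∈ s, k ≤ i) {v : 𝒲}
    (hv : v ∈ Submodule.span ℝ (b '' s)) : Q k v = 0 := by
  induction hv using Submodule.span_induction with
  | mem v hv =>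
    obtain ⟨i, hi, rfl⟩ := hv
    rw [h.2.2.2, if_neg (not_lt.2 (hs i hi))]
  | zero => simp
  | add f g _ _ h1 h2 => rw [map_add, h1, h2, add_zero]
  | smul q f _ h => rw [map_smul, h, smul_zero]

lemma PR.blk (h : PR b C Q) {y : ℕ → 𝒲} (hy : RBlk b y) : ∃ Q', PR y C Q' := by
  obtain ⟨h0, N, hN, hy⟩ := hy
  refine ⟨fun k => Q (N k), h.1, h0, fun k v => h.2.2.1 _ _, fun k i => ?_⟩
  split_ifs with hik
  · exact h.low (fun j hj => lt_of_lt_of_le hj.2 (hN.monotone hik)) (hy i)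
  · exact h.high (fun j hj => le_trans (hN.monotone (not_lt.1 hik)) hj.1) (hy i)

/-- splitting bound -/
lemma PR.split (h : PR b C Q) {k : ℕ} {g f : 𝒲} {s t : Set ℕ} (hs : ∀ i ∈ s, i < k)
    (ht : ∀ i ∈ t, k ≤ i) (hg : g ∈ Submodule.span ℝ (b '' s))
    (hf : f ∈ Submodule.span ℝ (b '' t)) : ‖g‖ ≤ C * ‖g + f‖ ∧ ‖f‖ ≤ (1 + C) * ‖g + f‖ := by
  have h1 : Q k (g + f) = g := by rw [map_add, h.low hs hg, h.high ht hf, add_zero]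
  have h2 := h.2.2.1 k (g + f)
  rw [h1] at h2
  refine ⟨h2, ?_⟩
  calc ‖f‖ = ‖(g + f) - g‖ := by simp
    _ ≤ ‖g + f‖ + ‖g‖ := norm_sub_le _ _
    _ ≤ _ := by linarith

lemma PR.coef (h : PR b C Q) (n : ℕ) (a : ℕ → ℝ) (i : ℕ) (hi : i < n) :
    |a i| * ‖b i‖ ≤ 2 * C * ‖∑ j ∈ Finset.range n, a j • b j‖ := by
  set s := ∑ j ∈ Finset.range n, a j • b j with hs
  have hQ : ∀ k, k ≤ n → Q k s = ∑ j ∈ Finset.range k, a j • b j := by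
    intro k hk
    rw [hs, map_sum]
    rw [← Finset.sum_subset (Finset.range_mono hk)]
    · refine Finset.sum_congr rfl fun j hj => ?_
      rw [map_smul, h.2.2.2, if_pos (Finset.mem_range.1 hj)]
    · intro j _ hj
      rw [map_smul, h.2.2.2, if_neg (by simpa using hj), smul_zero]
  have h1 : a i • b i = Q (i+1) s - Q i s := by
    rw [hQ _ hi, hQ _ hi.le, Finset.sum_range_succ]; abel
  calc |a i| * ‖b i‖ = ‖a i • b i‖ := by rw [norm_smul, Real.norm_eq_abs]
    _ ≤ ‖Q (i+1) s‖ + ‖Q i s‖ := by rw [h1]; exact norm_sub_le _ _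
    _ ≤ C * ‖s‖ + C * ‖s‖ := add_le_add (h.2.2.1 _ _) (h.2.2.1 _ _)
    _ = _ := by ring

lemma PR.pert (h : PR b C Q) (p q : ℕ → 𝒲) (η : ℝ) (hη : 0 ≤ η) (n : ℕ)
    (hpq : ∀ i < n, ‖p i - q i‖ ≤ η / (4 * C) * (1/2)^i * ‖b i‖) (a : ℕ → ℝ) :
    ‖∑ i ∈ Finset.range n, a i • p i - ∑ i ∈ Finset.range n, a i • q i‖ ≤
      η * ‖∑ i ∈ Finset.range n, a i • b i‖ := by
  have hC := h.pos
  rw [← Finset.sum_sub_distrib]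
  set s := ∑ i ∈ Finset.range n, a i • b i with hs
  calc ‖∑ i ∈ Finset.range n, (a i • p i - a i • q i)‖
      ≤ ∑ i ∈ Finset.range n, ‖a i • p i - a i • q i‖ := norm_sum_le _ _
    _ ≤ ∑ i ∈ Finset.range n, (1/2)^i * (η / 2 * ‖s‖) := by
        refine Finset.sum_le_sum fun i hi => ?_
        have hi := Finset.mem_range.1 hi
        rw [← smul_sub, norm_smul, Real.norm_eq_abs]
        calc |a i| * ‖p i - q i‖ ≤ |a i| * (η / (4 * C) * (1/2)^i * ‖b i‖) := by
              gcongr; exact hpq i hi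
          _ = η / (4 * C) * (1/2)^i * (|a i| * ‖b i‖) := by ring
          _ ≤ η / (4 * C) * (1/2)^i * (2 * C * ‖s‖) := by
              exact mul_le_mul_of_nonneg_left (h.coef n a i hi) (by positivity)
          _ = _ := by field_simp; ring
    _ = (∑ i ∈ Finset.range n, (1/2:ℝ)^i) * (η / 2 * ‖s‖) := by rw [Finset.sum_mul]
    _ ≤ 2 * (η / 2 * ‖s‖) := by
        gcongr
        have := summable_geometric_two.sum_le_tsum (Finset.range n) (fun i _ => by positivity)
        rwa [tsum_geometric_two] at this
    _ = η * ‖s‖ := by ring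

end PRl

lemma io_inj {e : ℕ → 𝒲} {C : ℝ} {Q : ℕ → 𝒲 →L[ℝ] 𝒲} (h : PR e C Q) {f : RE}
    (hf : io e f = 0) : f = 0 := by
  obtain ⟨n, hn⟩ : ∃ n, f.support ⊆ Finset.range n := f.support.exists_nat_subset_range
  have h1 : io e f = ∑ i ∈ Finset.range n, (f i : ℝ) • e i := by
    unfold io
    exact Finsupp.sum_of_support_subset _ hn _ (by simp)
  ext i
  by_cases hi : i < n
  · have := h.coef n (fun i => (f i : ℝ)) i hi
    rw [← h1, hf] at this
    simp only [norm_zero, mul_zero] at this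
    have h2 : 0 < ‖e i‖ := norm_pos_iff.2 (h.2.1 i)
    have h3 : |(f i : ℝ)| = 0 := le_antisymm (by nlinarith [abs_nonneg (f i : ℝ)]) (abs_nonneg _)
    simpa using h3
  · have : i ∉ f.support := fun hh => hi (Finset.mem_range.1 (hn hh))
    simpa using this

lemma Blk.rblk {e : ℕ → 𝒲} {C : ℝ} {Q : ℕ → 𝒲 →L[ℝ] 𝒲} (h : PR e C Q) {x y : ℕ → RE}
    (hxy : Blk x y) : RBlk (fun i => io e (x i)) (fun i => io e (y i)) := by
  obtain ⟨h0, N, hN, hy⟩ := hxy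
  exact ⟨fun n hn => h0 n (io_inj h hn), N, hN, fun n => io_mem_span e x _ (hy n)⟩

noncomputable def e0 : ℕ → RE := fun i => Finsupp.single i 1

lemma e0_ne (n : ℕ) : e0 n ≠ 0 := by simp [e0]

lemma io_e0 (e : ℕ → 𝒲) : (fun i => io e (e0 i)) = e := by
  ext i; simp [e0, io_single]

lemma Blk.PR {e : ℕ → 𝒲} {C : ℝ} {Q : ℕ → 𝒲 →L[ℝ] 𝒲} (h : PR e C Q) {x : ℕ → RE}
    (hx : Blk e0 x) : ∃ Q', Rosendal.PR (fun i => io e (x i)) C Q' := by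
  have := hx.rblk h
  rw [io_e0] at this
  exact h.blk this

lemma io_span_dense (e : ℕ → 𝒲) (x : ℕ → RE) (s : Set ℕ) :
    (closedSpan ((fun i => io e (x i)) '' s) : Set 𝒲) ⊆
      closure (io e '' (Submodule.span ℚ (x '' s) : Set RE)) := by
  obtain ⟨N, hN⟩ := closure_submodule (io e '' (Submodule.span ℚ (x '' s) : Set RE))
    ⟨0, Submodule.zero_mem _, by simp⟩
    (by
      rintro _ ⟨f, hf, rfl⟩ _ ⟨g, hg, rfl⟩
      exact ⟨f + g, Submodule.add_mem _ hf hg, io_add _ _ _⟩)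
    (by
      rintro q _ ⟨f, hf, rfl⟩
      exact ⟨q • f, Submodule.smul_mem _ _ hf, io_smul _ _ _⟩)
  rw [← hN]
  refine Submodule.topologicalClosure_minimal _ ?_ (by rw [hN]; exact isClosed_closure)
  rw [Submodule.span_le]
  rintro _ ⟨i, hi, rfl⟩
  rw [hN]
  exact subset_closure ⟨x i, Submodule.subset_span ⟨i, hi, rfl⟩, rfl⟩

lemma span_bound (x : ℕ → RE) (s : Set ℕ) {f : RE} (hf : f ∈ Submodule.span ℚ (x '' s)) :
    ∃ k, f ∈ Submodule.span ℚ (x '' (s ∩ Set.Iio k)) := by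
  induction hf using Submodule.span_induction with
  | mem v hv =>
    obtain ⟨i, hi, rfl⟩ := hv
    exact ⟨i + 1, Submodule.subset_span ⟨i, ⟨hi, by simp⟩, rfl⟩⟩
  | zero => exact ⟨0, Submodule.zero_mem _⟩
  | add f g _ _ h1 h2 =>
    obtain ⟨k, hk⟩ := h1
    obtain ⟨l, hl⟩ := h2
    refine ⟨max k l, Submodule.add_mem _ ?_ ?_⟩
    · refine Submodule.span_mono (Set.image_mono ?_) hk
      exact Set.inter_subset_inter_right _ (Set.Iio_subset_Iio (le_max_left _ _))
    · refine Submodule.span_mono (Set.image_mono ?_) hl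
      exact Set.inter_subset_inter_right _ (Set.Iio_subset_Iio (le_max_right _ _))
  | smul q f _ h =>
    obtain ⟨k, hk⟩ := h
    exact ⟨k, Submodule.smul_mem _ _ hk⟩

lemma fg_bound (x : ℕ → RE) (s : Set ℕ) {G : Submodule ℚ RE} (hG : G.FG)
    (hf : G ≤ Submodule.span ℚ (x '' s)) :
    ∃ k, G ≤ Submodule.span ℚ (x '' (s ∩ Set.Iio k)) := by
  classical
  obtain ⟨t, rfl⟩ := hG
  induction t using Finset.induction_on with
  | empty => exact ⟨0, by simp⟩
  | insert a t ha ih =>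
    rw [Finset.coe_insert, Submodule.span_insert] at hf ⊢
    obtain ⟨k, hk⟩ := ih (le_sup_right.trans hf)
    obtain ⟨l, hl⟩ := span_bound x s (le_sup_left.trans hf (Submodule.mem_span_singleton_self a))
    refine ⟨max k l, sup_le ?_ (hk.trans ?_)⟩
    · rw [Submodule.span_singleton_le_iff_mem]
      refine Submodule.span_mono (Set.image_mono ?_) hl
      exact Set.inter_subset_inter_right _ (Set.Iio_subset_Iio (le_max_right _ _))
    · refine Submodule.span_mono (Set.image_mono ?_)
      exact Set.inter_subset_inter_right _ (Set.Iio_subset_Iio (le_max_left _ _))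

lemma hump {e : ℕ → 𝒲} {C : ℝ} {x : ℕ → RE} {Q : ℕ → 𝒲 →L[ℝ] 𝒲}
    (hx : PR (fun i => io e (x i)) C Q) (Y : Submodule ℝ 𝒲)
    (hY : (Y : Set 𝒲) ⊆ (closedSpan (Set.range fun i => io e (x i)) : Set 𝒲))
    (hfd : ¬ FiniteDimensional ℝ Y) (ε : ℕ → ℝ) (hε : ∀ n, 0 < ε n) :
    ∃ Z, Blk x Z ∧ ∃ t : ℕ → 𝒲, (∀ n, t n ∈ Y) ∧ ∀ n, ‖io e (Z n) - t n‖ ≤ ε n * ‖io e (Z n)‖ := by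
  classical
  set b : ℕ → 𝒲 := fun i => io e (x i) with hb
  have hQfin : ∀ N, ∀ v ∈ closedSpan (Set.range b), Q N v ∈ Submodule.span ℝ (b '' Set.Iio N) := by
    intro N
    have hfd : FiniteDimensional ℝ (Submodule.span ℝ (b '' Set.Iio N)) :=
      FiniteDimensional.span_of_finite ℝ ((Set.finite_Iio N).image b)
    have hcl : IsClosed (Submodule.span ℝ (b '' Set.Iio N) : Set 𝒲) :=
      Submodule.closed_of_finiteDimensional _
    have : closedSpan (Set.range b) ≤ (Submodule.span ℝ (b '' Set.Iio N)).comap (Q N).toLinearMap := by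
      refine Submodule.topologicalClosure_minimal _ ?_ (hcl.preimage (Q N).continuous)
      rw [Submodule.span_le]
      rintro _ ⟨i, rfl⟩
      show Q N (b i) ∈ Submodule.span ℝ (b '' Set.Iio N)
      rw [hx.2.2.2]
      split_ifs with h
      · exact Submodule.subset_span ⟨i, h, rfl⟩
      · exact Submodule.zero_mem _
    exact this
  have hker : ∀ N, ∃ u ∈ Y, u ≠ 0 ∧ Q N u = 0 := by
    intro N
    by_contra hcon
    push Not at hcon
    apply hfd
    have hfd' : FiniteDimensional ℝ (Submodule.span ℝ (b '' Set.Iio N)) :=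
      FiniteDimensional.span_of_finite ℝ ((Set.finite_Iio N).image b)
    let φ : Y →ₗ[ℝ] Submodule.span ℝ (b '' Set.Iio N) :=
      LinearMap.codRestrict _ ((Q N).toLinearMap.comp Y.subtype) (fun v => hQfin N _ (hY v.2))
    refine FiniteDimensional.of_injective φ ?_
    rw [← LinearMap.ker_eq_bot, eq_bot_iff]
    intro v hv
    have hv : Q N v = 0 := congrArg Subtype.val (LinearMap.mem_ker.1 hv)
    by_contra hne
    exact hcon v v.2 (fun h => hne (by simpa using h)) hv
  have hstep : ∀ N n, ∃ M f u, N < M ∧ f ≠ 0 ∧ f ∈ Submodule.span ℚ (x '' Set.Ico N M) ∧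
      u ∈ Y ∧ ‖io e f - u‖ ≤ ε n * ‖io e f‖ := by
    intro N n
    obtain ⟨u, huY, hu0, hQu⟩ := hker N
    have htail : closedSpan (Set.range b) ≤ (closedSpan (b '' Set.Ici N)).comap
        (ContinuousLinearMap.id ℝ 𝒲 - Q N).toLinearMap := by
      refine Submodule.topologicalClosure_minimal _ ?_
        ((Submodule.isClosed_topologicalClosure _).preimage
          (ContinuousLinearMap.id ℝ 𝒲 - Q N).continuous)
      rw [Submodule.span_le]
      rintro _ ⟨i, rfl⟩
      show b i - Q N (b i) ∈ closedSpan (b '' Set.Ici N)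
      rw [hx.2.2.2]
      split_ifs with h
      · simp
      · rw [sub_zero]
        exact Submodule.le_topologicalClosure _ (Submodule.subset_span ⟨i, not_lt.1 h, rfl⟩)
    have hu : u ∈ closure (io e '' (Submodule.span ℚ (x '' Set.Ici N) : Set RE)) := by
      apply io_span_dense
      have : u - Q N u ∈ closedSpan (b '' Set.Ici N) := htail (hY huY)
      rwa [hQu, sub_zero] at this
    have hupos : 0 < ‖u‖ := norm_pos_iff.2 hu0
    obtain ⟨_, ⟨f, hf, rfl⟩, hd⟩ := Metric.mem_closure_iff.1 hu
      (min (‖u‖/2) (ε n * (‖u‖/2))) (lt_min (by positivity) (mul_pos (hε n) (by positivity)))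
    rw [dist_eq_norm, norm_sub_rev] at hd
    have hd1 := hd.trans_le (min_le_left _ _)
    have hd2 := hd.trans_le (min_le_right _ _)
    have hnf : ‖u‖/2 ≤ ‖io e f‖ := by
      have := norm_sub_norm_le u (io e f)
      rw [norm_sub_rev] at this
      linarith
    obtain ⟨k, hk⟩ := span_bound x _ hf
    refine ⟨max k (N+1), f, u, by simp, ?_, ?_, huY, ?_⟩
    · rintro rfl
      simp at hnf
      linarith
    · refine Submodule.span_mono (Set.image_mono ?_) hk
      rintro i ⟨h1, h2⟩
      exact ⟨h1, lt_of_lt_of_le h2 (le_max_left _ _)⟩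
    · exact hd2.le.trans (mul_le_mul_of_nonneg_left hnf (hε n).le)
  choose M f u hM hf0 hf huY hfu using hstep
  let N : ℕ → ℕ := fun n => Nat.rec 0 (fun n N => M N n) n
  refine ⟨fun n => f (N n) n, ⟨fun n => hf0 _ _, N, strictMono_nat_of_lt_succ fun n => hM _ _,
    fun n => hf _ _⟩, fun n => u (N n) n, fun n => huY _ _, fun n => hfu _ _⟩

end analysis
end Rosendal

namespace Rosendal
section rank
variable {𝒲 : Type} [NormedAddCommGroup 𝒲] [NormedSpace ℝ 𝒲]

def Hge (T : Set (List 𝒲)) (β : Ordinal.{0}) (t : List 𝒲) : Prop :=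
  ∃ S : Ordinal.{0} → List 𝒲 → Prop, S β t ∧ ∀ β t, S β t → ∀ γ < β,
    ∃ s ∈ T, t <+: s ∧ t ≠ s ∧ S γ s

variable {T : Set (List 𝒲)}

lemma Hge.unfold {β γ : Ordinal.{0}} {t : List 𝒲} (h : Hge T β t) (hγ : γ < β) :
    ∃ s ∈ T, t <+: s ∧ t ≠ s ∧ Hge T γ s := by
  obtain ⟨S, hS, h⟩ := h
  obtain ⟨s, h1, h2, h3, h4⟩ := h _ _ hS _ hγ
  exact ⟨s, h1, h2, h3, S, h4, h⟩

lemma Hge.fold {β : Ordinal.{0}} {t : List 𝒲}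
    (h : ∀ γ < β, ∃ s ∈ T, t <+: s ∧ t ≠ s ∧ Hge T γ s) : Hge T β t := by
  refine ⟨fun γ s => (γ = β ∧ s = t) ∨ Hge T γ s, Or.inl ⟨rfl, rfl⟩, ?_⟩
  rintro γ s (⟨rfl, rfl⟩ | h') δ hδ
  · obtain ⟨s, h1, h2, h3, h4⟩ := h δ hδ
    exact ⟨s, h1, h2, h3, Or.inr h4⟩
  · obtain ⟨s, h1, h2, h3, h4⟩ := h'.unfold hδ
    exact ⟨s, h1, h2, h3, Or.inr h4⟩

lemma Hge.mono {β γ : Ordinal.{0}} {t : List 𝒲} (h : Hge T β t) (hγ : γ ≤ β) : Hge T γ t :=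
  Hge.fold fun _ hδ => h.unfold (hδ.trans_le hγ)

lemma Hge.prefix {β : Ordinal.{0}} {t s : List 𝒲} (h : Hge T β s) (hts : t <+: s) : Hge T β t := by
  refine Hge.fold fun γ hγ => ?_
  obtain ⟨u, h1, h2, h3, h4⟩ := h.unfold hγ
  refine ⟨u, h1, hts.trans h2, ?_, h4⟩
  rintro rfl
  exact h3 (h2.eq_of_length (le_antisymm h2.length_le hts.length_le))

lemma Hge.add_nat {β : Ordinal.{0}} {t : List 𝒲} (htT : t ∈ T) (m : ℕ) (h : Hge T (β + m) t) :
    ∃ s ∈ T, t <+: s ∧ t.length + m ≤ s.length ∧ Hge T β s := by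
  induction m generalizing t with
  | zero => exact ⟨t, htT, List.prefix_rfl, by simp, by simpa using h⟩
  | succ m ih =>
    obtain ⟨u, h1, h2, h3, h4⟩ := h.unfold (γ := β + m) (by
      push_cast
      rw [← add_assoc]
      exact lt_add_of_pos_right _ one_pos)
    obtain ⟨s, h5, h6, h7, h8⟩ := ih h1 h4
    refine ⟨s, h5, h2.trans h6, ?_, h8⟩
    have : t.length < u.length := lt_of_le_of_ne h2.length_le fun h => h3 (h2.eq_of_length h)
    omega

lemma treeRank_lower (hT : [] ∈ T) {β : Ordinal.{0}} (h : Hge T β []) :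
    ((Order.succ β : Ordinal.{0}) : WithTop Ordinal.{0}) ≤ treeRank T := by
  classical
  unfold treeRank
  split_ifs with hw
  · have claim : ∀ s : T, ∀ β, Hge T β s.1 → β ≤ (hw.apply s).rank := by
      intro s
      induction s using hw.induction with
      | _ s ih =>
        intro β hβ
        refine le_of_forall_lt fun γ hγ => ?_
        obtain ⟨u, h1, h2, h3, h4⟩ := hβ.unfold hγ
        have := ih ⟨u, h1⟩ ⟨h2, h3⟩ γ h4
        refine this.trans_lt ?_
        exact Acc.rank_lt_of_rel (hw.apply s) ⟨h2, h3⟩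
    rw [WithTop.coe_le_coe]
    have h1 := claim ⟨[], hT⟩ β h
    refine (Order.succ_le_succ h1).trans ?_
    exact Ordinal.le_iSup (fun s : T => Order.succ ((hw.apply s).rank)) ⟨[], hT⟩
  · exact le_top

lemma treeRank_upper {β : Ordinal.{0}} (h : ¬ Hge T β []) :
    treeRank T ≤ (β : WithTop Ordinal.{0}) := by
  classical
  have hw : WellFounded (fun t s : T => s.val <+: t.val ∧ s.val ≠ t.val) := by
    by_contra hw
    have : ∃ s : T, ¬ Acc (fun t s : T => s.val <+: t.val ∧ s.val ≠ t.val) s := by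
      by_contra hcon
      push Not at hcon
      exact hw ⟨hcon⟩
    obtain ⟨s, hs⟩ := this
    apply h
    refine Hge.prefix (s := s.1) ?_ (List.nil_prefix)
    refine ⟨fun _ t => ∃ ht : t ∈ T, ¬ Acc (fun t s : T => s.val <+: t.val ∧ s.val ≠ t.val) ⟨t, ht⟩,
      ⟨s.2, hs⟩, ?_⟩
    rintro β t ⟨ht, hacc⟩ γ _
    by_contra hcon
    push Not at hcon
    refine hacc ⟨_, fun u hu => ?_⟩
    by_contra hu'
    exact hu' (hcon u.1 u.2 hu.1 hu.2 u.2)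
  unfold treeRank
  rw [dif_pos hw, WithTop.coe_le_coe]
  refine Ordinal.iSup_le fun s => ?_
  rw [Order.succ_le_iff]
  by_contra hcon
  push Not at hcon
  apply h
  refine Hge.prefix (s := s.1) ?_ (List.nil_prefix)
  refine ⟨fun γ t => ∃ ht : t ∈ T, γ ≤ (hw.apply ⟨t, ht⟩).rank, ⟨s.2, hcon⟩, ?_⟩
  rintro β t ⟨ht, hr⟩ γ hγ
  have := hγ.trans_le hr
  rw [Acc.rank_eq, Ordinal.lt_iSup_iff] at this
  obtain ⟨⟨u, hu⟩, h1⟩ := this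
  exact ⟨u.1, u.2, hu.1, hu.2, u.2, Order.lt_succ_iff.1 h1⟩

lemma nil_mem_embTree (x : ℕ → 𝒲) (Y : Set 𝒲) (K : ℝ) : [] ∈ embTree x Y K := by
  refine ⟨by simp, fun a => by simp⟩

lemma embIndex_lower {x : ℕ → 𝒲} {Y : Set 𝒲} {β : Ordinal.{0}} {K : ℝ} (hK : 1 ≤ K)
    (h : Hge (embTree x Y K) β []) :
    ((Order.succ β : Ordinal.{0}) : WithTop Ordinal.{0}) ≤ embIndex x Y := by
  classical
  have h1 := treeRank_lower (nil_mem_embTree x Y K) h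
  unfold embIndex
  split_ifs with hc
  · exact le_top
  · push Not at hc
    obtain ⟨o, ho⟩ := WithTop.ne_top_iff_exists.1 (hc K hK)
    rw [← ho, WithTop.coe_le_coe] at h1
    rw [WithTop.coe_le_coe]
    refine h1.trans (le_csSup ?_ ⟨K, hK, ho⟩)
    have hsub : {o : Ordinal.{0} | ∃ K : ℝ, 1 ≤ K ∧
      (o : WithTop Ordinal) = treeRank (embTree x Y K)} ⊆
        Set.range (fun K : ℝ => (treeRank (embTree x Y K)).untopD 0) := by
      rintro o ⟨K, _, ho⟩
      exact ⟨K, by simp [← ho]⟩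
    exact (Ordinal.bddAbove_range _).mono hsub

lemma embIndex_upper {x : ℕ → 𝒲} {Y : Set 𝒲} {β : Ordinal.{0}}
    (h : ∀ K : ℝ, 1 ≤ K → ¬ Hge (embTree x Y K) β []) :
    embIndex x Y ≤ (β : WithTop Ordinal.{0}) := by
  classical
  unfold embIndex
  rw [if_neg]
  · rw [WithTop.coe_le_coe]
    refine csSup_le' ?_
    rintro o ⟨K, hK, ho⟩
    have := treeRank_upper (h K hK)
    rw [← ho, WithTop.coe_le_coe] at this
    exact this
  · rintro ⟨K, hK, ho⟩
    have := treeRank_upper (h K hK)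
    rw [ho] at this
    exact absurd this (by simp)

lemma le_embIndex {x : ℕ → 𝒲} {Y : Set 𝒲} {α : Ordinal.{0}}
    (h : ∀ γ < α, ∃ K : ℝ, 1 ≤ K ∧ Hge (embTree x Y K) γ []) :
    (α : WithTop Ordinal.{0}) ≤ embIndex x Y := by
  by_contra hcon
  push Not at hcon
  obtain ⟨o, ho⟩ := WithTop.ne_top_iff_exists.1 (ne_top_of_lt hcon)
  rw [← ho, WithTop.coe_lt_coe] at hcon
  obtain ⟨K, hK, h⟩ := h o hcon
  have := embIndex_lower hK h
  rw [← ho, WithTop.coe_le_coe] at this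
  exact absurd this (not_le.2 (Order.lt_succ o))

end rank
end Rosendal

namespace Rosendal

lemma mem_span_sum {R M : Type*} [Ring R] [AddCommGroup M] [Module R M] (v : ℕ → M) (m : ℕ) {p : M}
    (hp : p ∈ Submodule.span R (v '' Set.Iio m)) : ∃ c : ℕ → R, p = ∑ i ∈ Finset.range m, c i • v i := by
  induction hp using Submodule.span_induction with
  | mem u hu =>
    obtain ⟨i, hi, rfl⟩ := hu
    refine ⟨fun j => if j = i then 1 else 0, ?_⟩
    have hi : i < m := hi
    simp [ite_smul, Finset.sum_ite_eq', hi]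
  | zero => exact ⟨0, by simp⟩
  | add u w _ _ h1 h2 =>
    obtain ⟨c, rfl⟩ := h1
    obtain ⟨d, rfl⟩ := h2
    exact ⟨c + d, by simp [add_smul, Finset.sum_add_distrib]⟩
  | smul q u _ h =>
    obtain ⟨c, rfl⟩ := h
    exact ⟨q • c, by simp [mul_smul, Finset.smul_sum]⟩

lemma mem_span_range_sum {R M : Type*} [Ring R] [AddCommGroup M] [Module R M] (v : ℕ → M) {p : M}
    (hp : p ∈ Submodule.span R (Set.range v)) :
    ∃ (m : ℕ) (c : ℕ → R), p = ∑ i ∈ Finset.range m, c i • v i := by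
  suffices ∃ m, p ∈ Submodule.span R (v '' Set.Iio m) by
    obtain ⟨m, hm⟩ := this
    exact ⟨m, mem_span_sum v m hm⟩
  induction hp using Submodule.span_induction with
  | mem u hu =>
    obtain ⟨i, rfl⟩ := hu
    exact ⟨i + 1, Submodule.subset_span ⟨i, by simp, rfl⟩⟩
  | zero => exact ⟨0, Submodule.zero_mem _⟩
  | add u w _ _ h1 h2 =>
    obtain ⟨k, hk⟩ := h1
    obtain ⟨l, hl⟩ := h2
    exact ⟨max k l, Submodule.add_mem _
      (Submodule.span_mono (Set.image_mono (Set.Iio_subset_Iio (le_max_left _ _))) hk)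
      (Submodule.span_mono (Set.image_mono (Set.Iio_subset_Iio (le_max_right _ _))) hl)⟩
  | smul q u _ h =>
    obtain ⟨k, hk⟩ := h
    exact ⟨k, Submodule.smul_mem _ _ hk⟩

section emb
variable {𝒲 : Type} [NormedAddCommGroup 𝒲] [NormedSpace ℝ 𝒲]

lemma PR.finite_bound {b : ℕ → 𝒲} {C : ℝ} {Q : ℕ → 𝒲 →L[ℝ] 𝒲} (h : PR b C Q) (b' : ℕ → 𝒲)
    (m : ℕ) : ∃ M : ℝ, 0 ≤ M ∧ ∀ a : ℕ → ℝ, ‖∑ i ∈ Finset.range m, a i • b' i‖ ≤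
      M * ‖∑ i ∈ Finset.range m, a i • b i‖ := by
  have hC := h.pos
  refine ⟨∑ i ∈ Finset.range m, 2 * C * ‖b' i‖ / ‖b i‖, Finset.sum_nonneg fun i _ => by positivity,
    fun a => ?_⟩
  rw [Finset.sum_mul]
  refine (norm_sum_le _ _).trans (Finset.sum_le_sum fun i hi => ?_)
  have h1 := h.coef m a i (Finset.mem_range.1 hi)
  have h2 : 0 < ‖b i‖ := norm_pos_iff.2 (h.2.1 i)
  rw [norm_smul, Real.norm_eq_abs]
  rw [← le_div_iff₀ h2] at h1
  calc |a i| * ‖b' i‖ ≤ _ * ‖b' i‖ := mul_le_mul_of_nonneg_right h1 (norm_nonneg _)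
    _ = _ := by ring

lemma WG_prepend {L : Type*} {lt : L → L → Prop} {e : ℕ → 𝒲} {C : ℝ} {Q : ℕ → 𝒲 →L[ℝ] 𝒲}
    {x y Z : ℕ → RE} (hx : PR (fun i => io e (x i)) C Q) (he : ∃ Ce Qe, PR e Ce Qe)
    (m K : ℕ) (hy : Blk y (fun n => x (n + m))) {a : L}
    (h : ∀ Z, Blk y Z → WG (fun f => ‖io e f‖) lt K (tsp y 0) (tsp Z 0) a ⊥) (hZ : Blk x Z) :
    ∃ K', WG (fun f => ‖io e f‖) lt K' (tsp x 0) (tsp Z 0) a ⊥ := by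
  obtain ⟨Ce, Qe, hPe⟩ := he
  obtain ⟨Q', hZP⟩ := hx.blk (hZ.rblk hPe)
  obtain ⟨S, hS, hstep⟩ := h _ (hy.trans (hZ.shift_shift m))
  obtain ⟨M1, hM1, hb1⟩ := hx.finite_bound (fun i => io e (Z i)) m
  obtain ⟨M2, hM2, hb2⟩ := hZP.finite_bound (fun i => io e (x i)) m
  have hC := hx.pos
  obtain ⟨K', hK'⟩ := exists_nat_ge ((M1 + M2) * C + K * (1 + C))
  have htZ : tsp (fun n => Z (n + m)) 0 = tsp Z m := by
    unfold tsp
    congr 1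
    ext v
    constructor
    · rintro ⟨i, _, rfl⟩
      exact ⟨i + m, by simp, rfl⟩
    · rintro ⟨i, hi, rfl⟩
      have hi : m ≤ i := hi
      exact ⟨i - m, by simp, by simp [hi]⟩
  rw [htZ] at hstep
  let Γ0 : Submodule ℚ (RE × RE) := Submodule.span ℚ ((fun i => (x i, Z i)) '' Set.Iio m)
  let D : Submodule ℚ (RE × RE) := (tsp x m).comap (LinearMap.fst ℚ RE RE)
  refine ⟨K', fun a Δ => ∃ Γ, S a Γ ∧ Δ ≤ Γ0 ⊔ (Γ ⊓ D), ⟨⊥, hS, bot_le⟩, ?_⟩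
  rintro a Δ ⟨Γ, hSΓ, hΔ⟩ b hb Cc hCfg hCx
  obtain ⟨k, hk⟩ := fg_bound x _ hCfg hCx
  obtain ⟨Γ', hle, hsnd, hfst, hB, hS'⟩ := hstep a Γ hSΓ b hb (Submodule.span ℚ (x '' Set.Ico m k))
    (Submodule.fg_span ((Set.finite_Ico m k).image x)) (by
      refine le_trans ?_ (hy.tsp_le 0)
      refine Submodule.span_le.2 ?_
      rintro _ ⟨i, hi, rfl⟩
      exact Submodule.subset_span ⟨i - m, by simp, by simp [hi.1]⟩)
  refine ⟨Γ0 ⊔ (Γ' ⊓ D), hΔ.trans (sup_le_sup_left (inf_le_inf_right _ hle) _), ?_, ?_, ?_,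
    Γ', hS', le_rfl⟩
  · rw [Submodule.map_sup]
    refine sup_le ?_ ?_
    · rw [Submodule.map_le_iff_le_comap, Submodule.span_le]
      rintro _ ⟨i, hi, rfl⟩
      exact Submodule.subset_span ⟨i, by simp, rfl⟩
    · exact (Submodule.map_mono inf_le_left).trans (hsnd.trans (tsp_mono (Nat.zero_le _)))
  · refine hk.trans (Submodule.span_le.2 ?_)
    rintro _ ⟨i, ⟨_, hi⟩, rfl⟩
    have hi : i < k := hi
    by_cases him : i < m
    · exact ⟨(x i, Z i), Submodule.mem_sup_left (Submodule.subset_span ⟨i, him, rfl⟩), rfl⟩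
    · obtain ⟨⟨p, q⟩, hp, hpi⟩ := hfst (Submodule.subset_span ⟨i, ⟨not_lt.1 him, hi⟩, rfl⟩)
      simp only [LinearMap.fst_apply] at hpi
      subst hpi
      refine ⟨(x i, q), Submodule.mem_sup_right ⟨hp, ?_⟩, rfl⟩
      exact Submodule.subset_span ⟨i, not_lt.1 him, rfl⟩
  · intro p hp
    obtain ⟨p0, hp0, p1, ⟨hp1, hp1D⟩, rfl⟩ := Submodule.mem_sup.1 hp
    obtain ⟨c, hc⟩ := mem_span_sum _ _ hp0
    have e1 : p0.1 = ∑ i ∈ Finset.range m, c i • x i := by rw [hc, Prod.fst_sum]; simp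
    have e2 : p0.2 = ∑ i ∈ Finset.range m, c i • Z i := by rw [hc, Prod.snd_sum]; simp
    have f1 : ‖io e p0.2‖ ≤ M1 * ‖io e p0.1‖ := by
      rw [e1, e2, io_sum, io_sum]; exact hb1 _
    have f2 : ‖io e p0.1‖ ≤ M2 * ‖io e p0.2‖ := by
      rw [e1, e2, io_sum, io_sum]; exact hb2 _
    obtain ⟨g1, g2⟩ := hB p1 hp1
    have m1 : p0.1 ∈ Submodule.span ℚ (x '' Set.Iio m) := by
      rw [e1]; exact Submodule.sum_mem _ fun i hi => Submodule.smul_mem _ _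
        (Submodule.subset_span ⟨i, Finset.mem_range.1 hi, rfl⟩)
    have m2 : p0.2 ∈ Submodule.span ℚ (Z '' Set.Iio m) := by
      rw [e2]; exact Submodule.sum_mem _ fun i hi => Submodule.smul_mem _ _
        (Submodule.subset_span ⟨i, Finset.mem_range.1 hi, rfl⟩)
    have s1 := hx.split (k := m) (fun i hi => hi) (fun i hi => hi) (io_mem_span e x _ m1)
      (io_mem_span e x _ hp1D)
    have s2 := hZP.split (k := m) (fun i hi => hi) (fun i hi => hi) (io_mem_span e Z _ m2)
      (io_mem_span e Z _ (hsnd ⟨p1, hp1, rfl⟩))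
    simp only [LinearMap.fst_apply, LinearMap.snd_apply] at s1 s2
    simp only [Prod.fst_add, Prod.snd_add, io_add]
    have hK : (0:ℝ) ≤ K := Nat.cast_nonneg K
    have key : ∀ (g f g' f' : 𝒲) (M : ℝ), 0 ≤ M → M ≤ M1 + M2 → ‖g'‖ ≤ M * ‖g‖ → ‖f'‖ ≤ K * ‖f‖ →
        (‖g‖ ≤ C * ‖g + f‖ ∧ ‖f‖ ≤ (1 + C) * ‖g + f‖) → ‖g' + f'‖ ≤ K' * ‖g + f‖ := by
      intro g f g' f' M hM hM' h1 h2 ⟨h3, h4⟩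
      calc ‖g' + f'‖ ≤ ‖g'‖ + ‖f'‖ := norm_add_le _ _
        _ ≤ M * (C * ‖g + f‖) + K * ((1 + C) * ‖g + f‖) :=
            add_le_add (h1.trans (mul_le_mul_of_nonneg_left h3 hM))
              (h2.trans (mul_le_mul_of_nonneg_left h4 hK))
        _ ≤ (M1 + M2) * (C * ‖g + f‖) + K * ((1 + C) * ‖g + f‖) := by gcongr
        _ = ((M1 + M2) * C + K * (1 + C)) * ‖g + f‖ := by ring
        _ ≤ _ := by gcongr
    exact ⟨key _ _ _ _ M2 hM2 (by linarith) f2 g1 s2, key _ _ _ _ M1 hM1 (by linarith) f1 g2 s1⟩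

noncomputable abbrev lcQ (Z : ℕ → RE) : RE →ₗ[ℚ] RE := Finsupp.linearCombination ℚ Z

lemma io_eq_sum (_u : ℕ → 𝒲) (c : RE) : ∃ n, ∀ u : ℕ → 𝒲, io u c = ∑ i ∈ Finset.range n, (c i : ℝ) • u i := by
  obtain ⟨n, hn⟩ : ∃ n, c.support ⊆ Finset.range n := c.support.exists_nat_subset_range
  exact ⟨n, fun u => Finsupp.sum_of_support_subset _ hn _ (by simp)⟩

lemma io_lcQ (e : ℕ → 𝒲) (Z : ℕ → RE) (c : RE) : io e (lcQ Z c) = io (fun i => io e (Z i)) c := by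
  induction c using Finsupp.induction_linear with
  | zero => simp
  | add f g h1 h2 => rw [map_add, io_add, io_add, h1, h2]
  | single i q => rw [Finsupp.linearCombination_single, io_smul, io_single]

def Dr (e t : ℕ → 𝒲) (Z : ℕ → RE) (Γ : Submodule ℚ (RE × RE)) : Set (𝒲 × 𝒲) :=
  {p | ∃ (f c : RE), (f, lcQ Z c) ∈ Γ ∧ p = (io e f, io t c)}

lemma Dr_bdd {e t : ℕ → 𝒲} {Z : ℕ → RE} {Γ : Submodule ℚ (RE × RE)} {K : ℕ}
    (ht : ∀ c, ‖io t c‖ ≤ 2 * ‖io (fun i => io e (Z i)) c‖ ∧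
      ‖io (fun i => io e (Z i)) c‖ ≤ 2 * ‖io t c‖)
    (hB : Bdd (fun f => ‖io e f‖) K Γ) :
    ∀ p ∈ Submodule.span ℝ (Dr e t Z Γ), ‖p.1‖ ≤ (2 * K : ℝ) * ‖p.2‖ ∧ ‖p.2‖ ≤ (2 * K : ℝ) * ‖p.1‖ := by
  intro p hp
  refine bdd_closure (Dr e t Z Γ) _ ?_ p (span_le_closure _ ?_ ?_ ?_ hp)
  · rintro _ ⟨f, c, hfc, rfl⟩
    obtain ⟨h1, h2⟩ := hB _ hfc
    obtain ⟨h3, h4⟩ := ht c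
    simp only [io_lcQ] at h1 h2 ⊢
    have hK : (0:ℝ) ≤ K := Nat.cast_nonneg K
    constructor <;> nlinarith
  · exact ⟨0, 0, by rw [map_zero]; exact Γ.zero_mem, by rw [io_zero, io_zero]; rfl⟩
  · rintro _ ⟨f, c, hfc, rfl⟩ _ ⟨f', c', hfc', rfl⟩
    refine ⟨f + f', c + c', ?_, ?_⟩
    · rw [map_add]; exact Γ.add_mem hfc hfc'
    · simp [io_add]
  · rintro q _ ⟨f, c, hfc, rfl⟩
    refine ⟨q • f, q • c, ?_, ?_⟩
    · rw [map_smul]; exact Γ.smul_mem q hfc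
    · simp [io_smul]

lemma Dr_mono {e t : ℕ → 𝒲} {Z : ℕ → RE} {Γ Γ' : Submodule ℚ (RE × RE)} (h : Γ ≤ Γ') :
    Dr e t Z Γ ⊆ Dr e t Z Γ' := by
  rintro _ ⟨f, c, hfc, rfl⟩
  exact ⟨f, c, h hfc, rfl⟩

def Good (e t : ℕ → 𝒲) (Z : ℕ → RE) (z : ℕ → 𝒲) (Y : Submodule ℝ 𝒲) (Γ : Submodule ℚ (RE × RE))
    (l : List 𝒲) : Prop :=
  (∀ v ∈ l, v ∈ Y) ∧ ∀ i < l.length, (z i, l.getD i 0) ∈ Submodule.span ℝ (Dr e t Z Γ)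

lemma Good.tree {e t : ℕ → 𝒲} {Z : ℕ → RE} {z : ℕ → 𝒲} {Y : Submodule ℝ 𝒲}
    {Γ : Submodule ℚ (RE × RE)} {l : List 𝒲} {K : ℕ}
    (ht : ∀ c, ‖io t c‖ ≤ 2 * ‖io (fun i => io e (Z i)) c‖ ∧
      ‖io (fun i => io e (Z i)) c‖ ≤ 2 * ‖io t c‖)
    (hB : Bdd (fun f => ‖io e f‖) K Γ) (h : Good e t Z z Y Γ l) :
    l ∈ embTree z (Y : Set 𝒲) (2 * K + 1) := by
  refine ⟨h.1, fun a => ?_⟩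
  have hm : (∑ i ∈ Finset.range l.length, a i • z i, ∑ i ∈ Finset.range l.length, a i • l.getD i 0) ∈
      Submodule.span ℝ (Dr e t Z Γ) := by
    have : ∑ i ∈ Finset.range l.length, a i • (z i, l.getD i 0) ∈ Submodule.span ℝ (Dr e t Z Γ) :=
      Submodule.sum_mem _ fun i hi => Submodule.smul_mem _ _ (h.2 i (Finset.mem_range.1 hi))
    convert this using 1
    ext
    · rw [Prod.fst_sum]; rfl
    · rw [Prod.snd_sum]; rfl
  obtain ⟨h1, h2⟩ := Dr_bdd ht hB _ hm
  simp only at h1 h2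
  have hK : (0:ℝ) ≤ K := Nat.cast_nonneg K
  constructor
  · rw [one_div, inv_mul_le_iff₀ (by positivity)]
    nlinarith [norm_nonneg (∑ i ∈ Finset.range l.length, a i • z i)]
  · nlinarith [norm_nonneg (∑ i ∈ Finset.range l.length, a i • l.getD i 0)]

lemma Good.step {L : Type*} {lt : L → L → Prop} {e t : ℕ → 𝒲} {x Z : ℕ → RE} {z : ℕ → 𝒲}
    {Y : Submodule ℝ 𝒲} {K : ℕ} {S : L → Submodule ℚ (RE × RE) → Prop}
    (hS : ∀ a Γ, S a Γ → ∀ b, lt b a → ∀ C : Submodule ℚ RE, C.FG → C ≤ tsp x 0 →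
      ∃ Γ', Γ ≤ Γ' ∧ Γ'.map (LinearMap.snd ℚ RE RE) ≤ tsp Z 0 ∧
        C ≤ Γ'.map (LinearMap.fst ℚ RE RE) ∧ Bdd (fun f => ‖io e f‖) K Γ' ∧ S b Γ')
    (htY : ∀ n, t n ∈ Y) (hz : ∀ n, z n ∈ Submodule.span ℝ (Set.range fun i => io e (x i)))
    {a b : L} {Γ : Submodule ℚ (RE × RE)} (hSΓ : S a Γ) (hb : lt b a) {l : List 𝒲}
    (hl : Good e t Z z Y Γ l) :
    ∃ Γ' v, S b Γ' ∧ Bdd (fun f => ‖io e f‖) K Γ' ∧ Good e t Z z Y Γ' (l ++ [v]) := by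
  obtain ⟨M, c, hc⟩ := mem_span_range_sum _ (hz l.length)
  obtain ⟨Γ', hle, hsnd, hfst, hB, hS'⟩ := hS a Γ hSΓ b hb (Submodule.span ℚ (x '' Set.Iio M))
    (Submodule.fg_span ((Set.finite_Iio M).image x))
    (Submodule.span_mono (Set.image_mono (fun i _ => Nat.zero_le i)))
  have hw : ∀ i, ∃ w, i < M → w ∈ Y ∧ (io e (x i), w) ∈ Submodule.span ℝ (Dr e t Z Γ') := by
    intro i
    by_cases hi : i < M
    · obtain ⟨⟨p, q⟩, hp, hpi⟩ := hfst (Submodule.subset_span ⟨i, hi, rfl⟩)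
      simp only [LinearMap.fst_apply] at hpi
      subst hpi
      have hq : q ∈ tsp Z 0 := hsnd ⟨(x i, q), hp, rfl⟩
      have hq' : q ∈ Submodule.span ℚ (Set.range Z) := by
        refine Submodule.span_mono ?_ hq
        exact Set.image_subset_range _ _
      rw [← Finsupp.range_linearCombination] at hq'
      obtain ⟨d, rfl⟩ := hq'
      refine ⟨io t d, fun _ => ⟨?_, Submodule.subset_span ⟨x i, d, hp, rfl⟩⟩⟩
      exact Submodule.sum_mem _ fun j _ => Submodule.smul_mem _ _ (htY j)
    · exact ⟨0, fun h => absurd h hi⟩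
  choose w hw using hw
  refine ⟨Γ', ∑ i ∈ Finset.range M, c i • w i, hS', hB, ?_, ?_⟩
  · intro v hv
    rcases List.mem_append.1 hv with hv | hv
    · exact hl.1 v hv
    · rw [List.mem_singleton] at hv
      subst hv
      exact Submodule.sum_mem _ fun i hi => Submodule.smul_mem _ _ (hw i (Finset.mem_range.1 hi)).1
  · intro i hi
    rw [List.length_append, List.length_singleton] at hi
    rcases Nat.lt_succ_iff_lt_or_eq.1 hi with hi | rfl
    · rw [List.getD_append _ _ _ _ hi]
      exact Submodule.span_mono (Dr_mono hle) (hl.2 i hi)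
    · rw [List.getD_append_right _ _ _ _ le_rfl]
      have : (z l.length, ∑ i ∈ Finset.range M, c i • w i) =
          ∑ i ∈ Finset.range M, c i • (io e (x i), w i) := by
        ext
        · rw [Prod.fst_sum, hc]; rfl
        · rw [Prod.snd_sum]; rfl
      simp only [Nat.sub_self, List.getD_cons_zero]
      rw [this]
      exact Submodule.sum_mem _ fun i hi => Submodule.smul_mem _ _ (hw i (Finset.mem_range.1 hi)).2

lemma hump_equiv {e : ℕ → 𝒲} {C : ℝ} {x : ℕ → RE} {Q : ℕ → 𝒲 →L[ℝ] 𝒲} (he : ∃ Ce Qe, PR e Ce Qe)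
    (hx : PR (fun i => io e (x i)) C Q) (Y : Submodule ℝ 𝒲)
    (hY : (Y : Set 𝒲) ⊆ (closedSpan (Set.range fun i => io e (x i)) : Set 𝒲))
    (hfd : ¬ FiniteDimensional ℝ Y) :
    ∃ Z, Blk x Z ∧ ∃ t : ℕ → 𝒲, (∀ n, t n ∈ Y) ∧ ∀ c, ‖io t c‖ ≤ 2 * ‖io (fun i => io e (Z i)) c‖ ∧
      ‖io (fun i => io e (Z i)) c‖ ≤ 2 * ‖io t c‖ := by
  obtain ⟨Ce, Qe, he⟩ := he
  have hC := hx.pos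
  obtain ⟨Z, hZ, t, htY, ht⟩ := hump hx Y hY hfd (fun i => (1/2) / (4 * C) * (1/2)^i)
    (fun n => by positivity)
  obtain ⟨Q', hZP⟩ := hx.blk (hZ.rblk he)
  refine ⟨Z, hZ, t, htY, fun c => ?_⟩
  obtain ⟨n, hn⟩ := io_eq_sum e c
  have := hZP.pert (fun i => io e (Z i)) t (1/2) (by norm_num) n (fun i _ => ht i) (fun i => (c i : ℝ))
  rw [hn t, hn (fun i => io e (Z i))]
  set A := ∑ i ∈ Finset.range n, (c i : ℝ) • io e (Z i)
  set B := ∑ i ∈ Finset.range n, (c i : ℝ) • t i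
  have h1 := norm_sub_norm_le A B
  have h2 := norm_sub_norm_le B A
  rw [norm_sub_rev] at h2
  constructor <;> linarith [norm_nonneg A, norm_nonneg B]

/-- O1 -/
lemma alpha_minimal {e : ℕ → 𝒲} {C : ℝ} {x : ℕ → RE} {Q : ℕ → 𝒲 →L[ℝ] 𝒲} (he : ∃ Ce Qe, PR e Ce Qe)
    (hx : PR (fun i => io e (x i)) C Q) {α : Ordinal.{0}}
    (h : ∀ γ < α, ∀ Z, Blk x Z → ∃ K, WG (fun f => ‖io e f‖) (fun a b : Ordinal.{0} => a < b) K
      (tsp x 0) (tsp Z 0) γ ⊥) :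
    IsAlphaMinimal (fun i => io e (x i)) α := by
  intro z hz Y hY hfd
  obtain ⟨Z, hZ, t, htY, ht⟩ := hump_equiv he hx Y hY hfd
  obtain ⟨_, N, _, hzN⟩ := hz.rblk
  have hz' : ∀ n, z n ∈ Submodule.span ℝ (Set.range fun i => io e (x i)) := fun n =>
    Submodule.span_mono (Set.image_subset_range _ _) (hzN n)
  refine le_embIndex fun γ hγ => ?_
  obtain ⟨K, S, hS, hstep⟩ := h γ hγ Z hZ
  refine ⟨2 * K + 1, by linarith [(Nat.cast_nonneg K : (0:ℝ) ≤ K)],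
    fun ξ l => ∃ Γ, S ξ Γ ∧ Good e t Z z Y Γ l, ⟨⊥, hS, by simp, by simp⟩, ?_⟩
  rintro ξ l ⟨Γ, hSΓ, hl⟩ ξ' hξ'
  obtain ⟨Γ', v, h1, h2, h3⟩ := Good.step hstep htY hz' hSΓ hξ' hl
  exact ⟨l ++ [v], h3.tree ht h2, List.prefix_append _ _, by simp, Γ', h1, h3⟩

lemma ext_emb [CompleteSpace 𝒲] (b w : ℕ → 𝒲) (Y : Submodule ℝ 𝒲) (hY : IsClosed (Y : Set 𝒲)) (K : ℝ)
    (hK : 1 ≤ K) (hw : ∀ n, w n ∈ Y) (h : ∀ n, SeqEquiv K n w b) :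
    LinIsoEmbeds (closedSpan (Set.range b)) Y := by
  let Gr : Submodule ℝ (𝒲 × 𝒲) := (Submodule.span ℝ (Set.range fun i => (b i, w i))).topologicalClosure
  have hGr : ∀ p ∈ Gr, ‖p.1‖ ≤ K * ‖p.2‖ ∧ ‖p.2‖ ≤ K * ‖p.1‖ := by
    refine bdd_closure _ K ?_
    intro p hp
    obtain ⟨n, c, rfl⟩ := mem_span_range_sum _ hp
    obtain ⟨h1, h2⟩ := h n c
    rw [one_div, inv_mul_le_iff₀ (by linarith)] at h1
    rw [Prod.fst_sum, Prod.snd_sum]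
    exact ⟨h2, h1⟩
  have hcl : IsClosed (Gr : Set (𝒲 × 𝒲)) := Submodule.isClosed_topologicalClosure _
  have : CompleteSpace Gr := hcl.completeSpace_coe
  let φ : Gr →L[ℝ] 𝒲 := (ContinuousLinearMap.fst ℝ 𝒲 𝒲).comp Gr.subtypeL
  have hφ : AntilipschitzWith K.toNNReal φ := by
    refine ContinuousLinearMap.antilipschitz_of_bound φ fun p => ?_
    have h1 := hGr p p.2
    rw [Real.coe_toNNReal _ (by linarith)]
    show ‖(p : 𝒲 × 𝒲)‖ ≤ K * ‖(p : 𝒲 × 𝒲).1‖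
    rw [Prod.norm_def]
    refine max_le ?_ h1.2
    nlinarith [norm_nonneg (p : 𝒲 × 𝒲).1]
  have hrange : IsClosed (Set.range φ) := hφ.isClosed_range φ.uniformContinuous
  have hrange' : IsClosed ((LinearMap.range φ.toLinearMap : Submodule ℝ 𝒲) : Set 𝒲) := by
    have : ((LinearMap.range φ.toLinearMap : Submodule ℝ 𝒲) : Set 𝒲) = Set.range φ := by
      ext v; exact Iff.rfl
    rw [this]; exact hrange
  have hsub : closedSpan (Set.range b) ≤ LinearMap.range φ.toLinearMap := by
    refine Submodule.topologicalClosure_minimal _ ?_ hrange'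
    rw [Submodule.span_le]
    rintro _ ⟨i, rfl⟩
    exact ⟨⟨(b i, w i), Submodule.le_topologicalClosure _ (Submodule.subset_span ⟨i, rfl⟩)⟩, rfl⟩
  have hex : ∀ v : closedSpan (Set.range b), ∃ u, ((v : 𝒲), u) ∈ Gr := by
    intro v
    obtain ⟨⟨⟨p, q⟩, hp⟩, hpv⟩ := hsub v.2
    have : p = v := hpv
    exact ⟨q, this ▸ hp⟩
  choose T hT using hex
  have huniq : ∀ v u u', (v, u) ∈ Gr → (v, u') ∈ Gr → u = u' := by
    intro v u u' h1 h2
    have := (hGr _ (Gr.sub_mem h1 h2)).2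
    simp only [Prod.mk_sub_mk, sub_self, norm_zero, mul_zero] at this
    exact sub_eq_zero.1 (norm_le_zero_iff.1 this)
  have hGY : Gr ≤ Y.comap (LinearMap.snd ℝ 𝒲 𝒲) := by
    refine Submodule.topologicalClosure_minimal _ ?_ (hY.preimage continuous_snd)
    rw [Submodule.span_le]
    rintro _ ⟨i, rfl⟩
    exact hw i
  refine ⟨{ toFun := T, map_add' := fun u v => ?_, map_smul' := fun r u => ?_ }, ?_, ?_⟩
  · exact huniq _ _ _ (hT (u + v)) (Gr.add_mem (hT u) (hT v))
  · exact huniq _ _ _ (hT (r • u)) (Gr.smul_mem r (hT u))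
  · exact fun v => hGY (hT v)
  · refine ⟨K⁻¹, K, by positivity, fun v => ?_⟩
    obtain ⟨h1, h2⟩ := hGr _ (hT v)
    refine ⟨?_, h2⟩
    rw [inv_mul_le_iff₀ (by linarith)]
    exact h1

/-- O2 -/
lemma minimal_of_WG [CompleteSpace 𝒲] {e : ℕ → 𝒲} {C : ℝ} {x : ℕ → RE} {Q : ℕ → 𝒲 →L[ℝ] 𝒲}
    (he : ∃ Ce Qe, PR e Ce Qe) (hx : PR (fun i => io e (x i)) C Q)
    (h : ∀ Z, Blk x Z → ∃ K, WG (fun f => ‖io e f‖) (fun _ _ : Unit => True) K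
      (tsp x 0) (tsp Z 0) () ⊥) :
    IsMinimalSpace (closedSpan (Set.range fun i => io e (x i))) := by
  intro Y hY hYcl hfd
  obtain ⟨Z, hZ, t, htY, ht⟩ := hump_equiv he hx Y hY hfd
  obtain ⟨K, S, hS, hstep⟩ := h Z hZ
  set z : ℕ → 𝒲 := fun i => io e (x i) with hz
  have hz' : ∀ n, z n ∈ Submodule.span ℝ (Set.range fun i => io e (x i)) := fun n =>
    Submodule.subset_span ⟨n, rfl⟩
  let St := {p : Submodule ℚ (RE × RE) × List 𝒲 // S () p.1 ∧ Good e t Z z Y p.1 p.2}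
  have hnext : ∀ p : St, ∃ q : St, Bdd (fun f => ‖io e f‖) K q.1.1 ∧ ∃ v, q.1.2 = p.1.2 ++ [v] := by
    rintro ⟨⟨Γ, l⟩, h1, h2⟩
    obtain ⟨Γ', v, h3, h4, h5⟩ := Good.step hstep htY hz' h1 (b := ()) trivial h2
    exact ⟨⟨(Γ', l ++ [v]), h3, h5⟩, h4, v, rfl⟩
  choose nx hnB hnv using hnext
  let st : ℕ → St := fun n => Nat.rec ⟨(⊥, []), hS, by simp, by simp⟩ (fun _ p => nx p) n
  have hlen : ∀ n, (st n).1.2.length = n := by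
    intro n
    induction n with
    | zero => rfl
    | succ n ih =>
      obtain ⟨v, hv⟩ := hnv (st n)
      show (nx (st n)).1.2.length = _
      rw [hv, List.length_append, ih]; rfl
  let w : ℕ → 𝒲 := fun i => (st (i+1)).1.2.getD i 0
  have hget : ∀ n i, i < n → (st n).1.2.getD i 0 = w i := by
    intro n
    induction n with
    | zero => intro i hi; omega
    | succ n ih =>
      intro i hi
      rcases Nat.lt_succ_iff_lt_or_eq.1 hi with hi | rfl
      · rw [← ih i hi]
        obtain ⟨v, hv⟩ := hnv (st n)
        show (nx (st n)).1.2.getD i 0 = _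
        rw [hv, List.getD_append _ _ _ _ (by rw [hlen]; exact hi)]
      · rfl
  have htree : ∀ n, (st (n+1)).1.2 ∈ embTree z (Y : Set 𝒲) (2 * K + 1) := fun n =>
    (st (n+1)).2.2.tree ht (hnB (st n))
  have hK1 : (1:ℝ) ≤ 2 * K + 1 := by linarith [(Nat.cast_nonneg K : (0:ℝ) ≤ K)]
  refine ext_emb z w Y hYcl (2 * K + 1) hK1 ?_ ?_
  · intro n
    refine (htree n).1 _ ?_
    show (st (n+1)).1.2.getD n 0 ∈ _
    rw [List.getD_eq_getElem _ _ (lt_of_lt_of_eq (Nat.lt_succ_self n) (hlen (n+1)).symm)]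
    exact List.getElem_mem _
  · intro n a
    rcases n with _ | n
    · simp
    · have := (htree n).2 a
      have hl : (st (n+1)).1.2.length = n + 1 := hlen (n+1)
      have hs : ∑ i ∈ Finset.range (n+1), a i • (st (n+1)).1.2.getD i 0 =
          ∑ i ∈ Finset.range (n+1), a i • w i :=
        Finset.sum_congr rfl (fun i hi => congrArg (a i • ·) (hget (n+1) i (Finset.mem_range.1 hi)))
      generalize (st (n+1)).1.2 = l at this hl hs
      simp only [hl, hs] at this
      exact this

lemma PR.infinite {b : ℕ → 𝒲} {C : ℝ} {Q : ℕ → 𝒲 →L[ℝ] 𝒲} (h : PR b C Q) :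
    ¬ FiniteDimensional ℝ (closedSpan (Set.range b)) := by
  intro hfd
  have hli : LinearIndependent ℝ b := by
    rw [linearIndependent_iff']
    intro s g hg i hi
    obtain ⟨n, hn⟩ := s.exists_nat_subset_range
    have h1 : ∑ j ∈ Finset.range n, (if j ∈ s then g j else 0) • b j = 0 := by
      rw [← hg, ← Finset.sum_subset hn]
      · exact Finset.sum_congr rfl fun j hj => by rw [if_pos hj]
      · intro j _ hj; rw [if_neg hj, zero_smul]
    have h2 := h.coef n (fun j => if j ∈ s then g j else 0) i (Finset.mem_range.1 (hn hi))
    rw [h1] at h2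
    simp only [norm_zero, mul_zero, if_pos hi] at h2
    have h3 : 0 < ‖b i‖ := norm_pos_iff.2 (h.2.1 i)
    have h4 : |g i| = 0 := le_antisymm (by nlinarith [abs_nonneg (g i)]) (abs_nonneg _)
    simpa using h4
  have hmem : ∀ i, b i ∈ closedSpan (Set.range b) := fun i =>
    Submodule.le_topologicalClosure _ (Submodule.subset_span ⟨i, rfl⟩)
  have hli' : LinearIndependent ℝ (fun i => (⟨b i, hmem i⟩ : closedSpan (Set.range b))) :=
    LinearIndependent.of_comp (closedSpan (Set.range b)).subtype hli
  exact (Infinite.not_finite (α := ℕ)) hli'.finite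

end emb
end Rosendal

namespace Rosendal

noncomputable abbrev om1 : Ordinal.{0} := (Cardinal.aleph 1).ord

lemma om1_succ {β : Ordinal.{0}} (h : β < om1) : β + 1 < om1 := by
  have := (Cardinal.isSuccLimit_ord (c := Cardinal.aleph 1) (Cardinal.aleph0_le_aleph 1)).succ_lt h
  simpa using this

lemma pig {I : Type} [Countable I] (P : I → Ordinal.{0} → Prop)
    (mono : ∀ i β β', β' ≤ β → P i β → P i β') (h : ∀ β < om1, ∃ i, P i β) :
    ∃ i, ∀ β < om1, P i β := by
  by_contra hc
  push Not at hc
  choose f hf hP using hc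
  have hlt : iSup f < om1 := by
    have hf' : ∀ i, f i < Ordinal.omega 1 := by
      intro i; have := hf i; rwa [om1, Cardinal.ord_aleph] at this
    rw [om1, Cardinal.ord_aleph]
    exact Ordinal.iSup_lt_omega_one hf'
  obtain ⟨i, hi⟩ := h _ hlt
  exact hP i (mono i _ _ (Ordinal.le_iSup f i) hi)

abbrev olt : Ordinal.{0} → Ordinal.{0} → Prop := fun a b => a < b

lemma WW.label {ν : RE → ℝ} {K : ℕ} {U : Submodule ℚ RE} {V : ℕ → Submodule ℚ RE}
    {β β' : Ordinal.{0}} {Γ : Submodule ℚ (RE × RE)} {G : Submodule ℚ RE} (hβ : β' ≤ β)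
    (h : WW ν olt K U V β Γ G) : WW ν olt K U V β' Γ G :=
  WW.fold fun _ hb n C hC hCU => h.unfold (lt_of_lt_of_le hb hβ) n C hC hCU

section fusion
variable (ν : RE → ℝ) (K : ℕ) (x : ℕ → RE)

abbrev Pos := Finset (RE × RE) × Finset RE

def Fit (k : ℕ) (b : ℕ → RE × ℕ) (s : Set Pos) (β : Ordinal.{0}) : Prop :=
  ∃ (y : ℕ → RE) (N : ℕ → ℕ), StrictMono N ∧
    (∀ n, y n ≠ 0 ∧ y n ∈ Submodule.span ℚ (x '' Set.Ico (N n) (N (n+1)))) ∧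
    (∀ i < k, b i = (y i, N i)) ∧
    ∀ p ∈ s, WW ν olt K (tsp y 0) (tsp x) β (Submodule.span ℚ p.1) (Submodule.span ℚ p.2)

variable {ν K x}

lemma Fit.label {k : ℕ} {b : ℕ → RE × ℕ} {s : Set Pos} {β β' : Ordinal.{0}} (hβ : β' ≤ β)
    (h : Fit ν K x k b s β) : Fit ν K x k b s β' := by
  obtain ⟨y, N, h1, h2, h3, h4⟩ := h
  exact ⟨y, N, h1, h2, h3, fun p hp => (h4 p hp).label hβ⟩

def GoodF (ν : RE → ℝ) (K : ℕ) (x : ℕ → RE) (k : ℕ) (b : ℕ → RE × ℕ) (s : Set Pos) : Prop :=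
  ∀ β < om1, Fit ν K x k b s β

lemma GoodF.ext1 {k : ℕ} {b : ℕ → RE × ℕ} {s : Set Pos} (h : GoodF ν K x k b s) :
    ∃ b', (∀ i < k, b' i = b i) ∧ GoodF ν K x (k+1) b' s := by
  obtain ⟨q, hq⟩ := pig (I := RE × ℕ) (fun q β => Fit ν K x (k+1) (Function.update b k q) s β)
    (fun q β β' hβ hF => hF.label hβ) (by
      intro β hβ
      obtain ⟨y, N, h1, h2, h3, h4⟩ := h β hβ
      refine ⟨(y k, N k), y, N, h1, h2, fun i hi => ?_, h4⟩
      rcases Nat.lt_succ_iff_lt_or_eq.1 hi with hi | rfl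
      · rw [Function.update_of_ne hi.ne]; exact h3 i hi
      · rw [Function.update_self])
  exact ⟨_, fun i hi => Function.update_of_ne hi.ne _ _, hq⟩

lemma GoodF.ext {k : ℕ} {b : ℕ → RE × ℕ} {s : Set Pos} (h : GoodF ν K x k b s) (m : ℕ) :
    ∃ b', (∀ i < k, b' i = b i) ∧ GoodF ν K x (k+m) b' s := by
  induction m with
  | zero => exact ⟨b, fun _ _ => rfl, h⟩
  | succ m ih =>
    obtain ⟨b', h1, h2⟩ := ih
    obtain ⟨b'', h3, h4⟩ := h2.ext1
    exact ⟨b'', fun i hi => (h3 i (by omega)).trans (h1 i hi), h4⟩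

lemma GoodF.move {k : ℕ} {b : ℕ → RE × ℕ} {s : Set Pos} (h : GoodF ν K x k b s) {p : Pos}
    (hp : p ∈ s) (n k' : ℕ) (hk : k' ≤ k) :
    ∃ (F : Submodule ℚ RE) (q : Pos), Legal ν K (tsp x n)
      (Submodule.span ℚ ((fun i => (b i).1) '' Set.Iio k')) (Submodule.span ℚ p.1)
      (Submodule.span ℚ p.2) F (Submodule.span ℚ q.1) ∧
      Submodule.span ℚ (q.2 : Set RE) = Submodule.span ℚ p.2 ⊔ F ∧ GoodF ν K x k b (insert q s) := by
  classical
  obtain ⟨q, hq⟩ := pig (I := Finset (RE × RE) × Finset RE) (fun q β =>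
      Legal ν K (tsp x n) (Submodule.span ℚ ((fun i => (b i).1) '' Set.Iio k'))
      (Submodule.span ℚ p.1) (Submodule.span ℚ p.2) (Submodule.span ℚ q.2) (Submodule.span ℚ q.1) ∧
      Fit ν K x k b (insert (q.1, p.2 ∪ q.2) s) β)
    (fun q β β' hβ hF => ⟨hF.1, hF.2.label hβ⟩) (by
      intro β hβ
      obtain ⟨y, N, h1, h2, h3, h4⟩ := h _ (om1_succ hβ)
      have hC : Submodule.span ℚ ((fun i => (b i).1) '' Set.Iio k') =
          Submodule.span ℚ (y '' Set.Iio k') := by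
        congr 1
        refine Set.image_congr fun i hi => ?_
        rw [h3 i (lt_of_lt_of_le hi hk)]
      rw [hC]
      obtain ⟨F, Γ', hL, hW⟩ := (h4 p hp).unfold (b := β) (by simp) n
        (Submodule.span ℚ (y '' Set.Iio k')) (Submodule.fg_span ((Set.finite_Iio _).image y))
        (Submodule.span_mono (Set.image_mono fun i _ => Nat.zero_le i))
      obtain ⟨f, rfl⟩ := hL.1
      obtain ⟨g, rfl⟩ := hL.2.2.1
      refine ⟨(g, f), hL, y, N, h1, h2, h3, ?_⟩
      rintro r (rfl | hr)
      · simp only [Finset.coe_union, Submodule.span_union]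
        exact hW
      · exact (h4 r hr).label (by simp))
  have h0 : (0 : Ordinal.{0}) < om1 := by
    have := (Cardinal.isSuccLimit_ord (c := Cardinal.aleph 1) (Cardinal.aleph0_le_aleph 1)).bot_lt
    simpa using this
  exact ⟨_, (q.1, p.2 ∪ q.2), (hq 0 h0).1, by simp [Submodule.span_union], fun β hβ => (hq β hβ).2⟩

/-- O4 -/
lemma fusion (h : ∀ β < om1, ∃ y, Blk x y ∧ ∃ K, WW ν olt K (tsp y 0) (tsp x) β ⊥ ⊥) :
    ∃ y, Blk x y ∧ ∃ K, WW ν (fun _ _ : Unit => True) K (tsp y 0) (tsp x) () ⊥ ⊥ := by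
  classical
  obtain ⟨K, hK⟩ := pig (fun (K : ℕ) β => ∃ y, Blk x y ∧ WW ν olt K (tsp y 0) (tsp x) β ⊥ ⊥)
    (fun K β β' hβ ⟨y, h1, h2⟩ => ⟨y, h1, h2.label hβ⟩) (by
      intro β hβ
      obtain ⟨y, h1, K, h2⟩ := h β hβ
      exact ⟨K, y, h1, h2⟩)
  have hG0 : GoodF ν K x 0 (fun _ => (0, 0)) {((∅, ∅) : Pos)} := by
    intro β hβ
    obtain ⟨y, ⟨hy, N, hN, h1⟩, h2⟩ := hK β hβ
    refine ⟨y, N, hN, fun n => ⟨hy n, h1 n⟩, by simp, ?_⟩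
    rintro p rfl
    simpa using h2
  let St := {t : ℕ × (ℕ → RE × ℕ) × Set Pos // GoodF ν K x t.1 t.2.1 t.2.2}
  have hstep : ∀ (t : St) (d : Pos × ℕ × ℕ), ∃ t' : St, t.1.1 < t'.1.1 ∧ d.2.2 ≤ t'.1.1 ∧
      (∀ i < t.1.1, t'.1.2.1 i = t.1.2.1 i) ∧ t.1.2.2 ⊆ t'.1.2.2 ∧
      (d.1 ∈ t.1.2.2 → ∃ (F : Submodule ℚ RE) (q : Pos), q ∈ t'.1.2.2 ∧ Legal ν K (tsp x d.2.1)
        (Submodule.span ℚ ((fun i => (t'.1.2.1 i).1) '' Set.Iio d.2.2)) (Submodule.span ℚ d.1.1)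
        (Submodule.span ℚ d.1.2) F (Submodule.span ℚ q.1) ∧
        Submodule.span ℚ (q.2 : Set RE) = Submodule.span ℚ d.1.2 ⊔ F) := by
    rintro ⟨⟨k, b, s⟩, hg⟩ ⟨p, n, k'⟩
    obtain ⟨b', hb', hg'⟩ := hg.ext (k' + 1)
    by_cases hp : p ∈ s
    · obtain ⟨F, q, h1, h2, h3⟩ := hg'.move hp n k' (by omega)
      exact ⟨⟨(_, b', insert q s), h3⟩, by simp only; omega, by simp only; omega, hb',
        Set.subset_insert _ _, fun _ => ⟨F, q, Set.mem_insert _ _, h1, h2⟩⟩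
    · exact ⟨⟨(_, b', s), hg'⟩, by simp only; omega, by simp only; omega, hb', subset_rfl,
        fun h => absurd h hp⟩
  choose nx hnx1 hnx2 hnx3 hnx4 hnx5 using hstep
  obtain ⟨g, hg⟩ := exists_surjective_nat (Pos × ℕ × ℕ)
  let st : ℕ → St := fun n => Nat.rec ⟨(0, _, _), hG0⟩ (fun j t => nx t (g j.unpair.1)) n
  have hst : ∀ j, st (j+1) = nx (st j) (g j.unpair.1) := fun _ => rfl
  have hk : ∀ j, (st j).1.1 < (st (j+1)).1.1 := fun j => hnx1 _ _
  have hkm : StrictMono fun j => (st j).1.1 := strictMono_nat_of_lt_succ hk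
  have hki : ∀ j, j ≤ (st j).1.1 := fun j => hkm.le_apply (x := j)
  have hagr : ∀ j m i, i < (st j).1.1 → (st (j+m)).1.2.1 i = (st j).1.2.1 i := by
    intro j m
    induction m with
    | zero => intro i _; rfl
    | succ m ih =>
      intro i hi
      rw [← ih i hi]
      exact hnx3 (st (j+m)) _ i (lt_of_lt_of_le hi (hkm.monotone (Nat.le_add_right j m)))
  have hs : ∀ j m, (st j).1.2.2 ⊆ (st (j+m)).1.2.2 := by
    intro j m
    induction m with
    | zero => exact subset_rfl
    | succ m ih => exact ih.trans (hnx4 _ _)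
  let B : ℕ → RE × ℕ := fun i => (st (i+1)).1.2.1 i
  have hB : ∀ j i, i < (st j).1.1 → (st j).1.2.1 i = B i := by
    intro j i hi
    have hi' : i < (st (i+1)).1.1 := hki (i+1)
    rcases le_total j (i+1) with hji | hji
    · obtain ⟨m, hm⟩ := Nat.exists_eq_add_of_le hji
      show _ = (st (i+1)).1.2.1 i
      rw [hm]; exact (hagr j m i hi).symm
    · obtain ⟨m, rfl⟩ := Nat.exists_eq_add_of_le hji
      exact hagr (i+1) m i hi'
  have h0 : (0 : Ordinal.{0}) < om1 := by
    have := (Cardinal.isSuccLimit_ord (c := Cardinal.aleph 1) (Cardinal.aleph0_le_aleph 1)).bot_lt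
    simpa using this
  have hBp : ∀ n, (B n).2 < (B (n+1)).2 ∧ (B n).1 ≠ 0 ∧
      (B n).1 ∈ Submodule.span ℚ (x '' Set.Ico (B n).2 (B (n+1)).2) := by
    intro n
    obtain ⟨y, N, h1, h2, h3, _⟩ := (st (n+2)).2 0 h0
    have e1 : B n = (y n, N n) := by
      rw [← hB (n+2) n (lt_of_lt_of_le (by omega) (hki (n+2)))]
      exact h3 n (lt_of_lt_of_le (by omega) (hki (n+2)))
    have e2 : B (n+1) = (y (n+1), N (n+1)) := by
      rw [← hB (n+2) (n+1) (lt_of_lt_of_le (by omega) (hki (n+2)))]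
      exact h3 (n+1) (lt_of_lt_of_le (by omega) (hki (n+2)))
    rw [e1, e2]
    exact ⟨h1 (by omega), (h2 n).1, (h2 n).2⟩
  refine ⟨fun n => (B n).1, ⟨fun n => (hBp n).2.1, fun n => (B n).2,
    strictMono_nat_of_lt_succ fun n => (hBp n).1, fun n => (hBp n).2.2⟩, K, ?_⟩
  refine ⟨fun _ Γ G => ∃ j, ∃ p ∈ (st j).1.2.2, Γ = Submodule.span ℚ p.1 ∧ G = Submodule.span ℚ p.2,
    ⟨0, (∅, ∅), rfl, by simp, by simp⟩, ?_⟩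
  rintro _ _ _ ⟨j, p, hp, rfl, rfl⟩ _ _ n C hC hCU
  obtain ⟨k', hk'⟩ := fg_bound _ _ hC hCU
  obtain ⟨i, hi⟩ := hg (p, n, k')
  have hle : j ≤ Nat.pair i j := Nat.right_le_pair i j
  obtain ⟨m, hm⟩ := Nat.exists_eq_add_of_le hle
  have hp' : p ∈ (st (Nat.pair i j)).1.2.2 := by rw [hm]; exact hs j m hp
  have hnew := hst (Nat.pair i j)
  rw [Nat.unpair_pair] at hnew
  simp only [hi] at hnew
  have hkk := hnx2 (st (Nat.pair i j)) (p, n, k')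
  obtain ⟨F, q, hq, hL, hqG⟩ := hnx5 (st (Nat.pair i j)) (p, n, k') hp'
  rw [← hnew] at hq hL hkk
  refine ⟨F, Submodule.span ℚ q.1, ?_, Nat.pair i j + 1, q, hq, rfl, hqG.symm⟩
  obtain ⟨l1, l2, l3, l4, l5, l6, l7⟩ := hL
  refine ⟨l1, l2, l3, l4, l5, ?_, l7⟩
  refine hk'.trans (le_trans ?_ l6)
  refine Submodule.span_mono ?_
  rintro _ ⟨r, ⟨_, hr⟩, rfl⟩
  refine ⟨r, hr, ?_⟩
  exact congrArg Prod.fst (hB (Nat.pair i j + 1) r (lt_of_lt_of_le hr hkk))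

end fusion
end Rosendal

namespace Rosendal
section reloc
variable {𝒲 : Type} [NormedAddCommGroup 𝒲] [NormedSpace ℝ 𝒲]

lemma PR.l1 {b : ℕ → 𝒲} {C : ℝ} {Q : ℕ → 𝒲 →L[ℝ] 𝒲} (h : PR b C Q) (w : ℕ → 𝒲) (l : ℕ → ℝ) (m : ℕ)
    (hw : ∀ i < m, ‖w i‖ ≤ 2 * (l i * ‖b i‖)) (hl : ∀ i < m, 0 ≤ l i) (a : ℕ → ℝ) :
    ‖∑ i ∈ Finset.range m, a i • w i‖ ≤ 4 * C * m * ‖∑ i ∈ Finset.range m, (a i * l i) • b i‖ := by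
  refine (norm_sum_le _ _).trans ?_
  have : ∀ i ∈ Finset.range m, ‖a i • w i‖ ≤ 4 * C * ‖∑ i ∈ Finset.range m, (a i * l i) • b i‖ := by
    intro i hi
    have hi := Finset.mem_range.1 hi
    have h1 := h.coef m (fun i => a i * l i) i hi
    rw [abs_mul, abs_of_nonneg (hl i hi)] at h1
    rw [norm_smul, Real.norm_eq_abs]
    have h2 := mul_le_mul_of_nonneg_left (hw i hi) (abs_nonneg (a i))
    linarith
  refine (Finset.sum_le_card_nsmul _ _ _ this).trans (le_of_eq ?_)
  rw [Finset.card_range, nsmul_eq_mul]; ring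

lemma exists_rho {e : ℕ → 𝒲} {C : ℝ} {x : ℕ → RE} {Q : ℕ → 𝒲 →L[ℝ] 𝒲}
    (hx : PR (fun i => io e (x i)) C Q) (x' : ℕ → RE) : ∃ ρ : RE →ₗ[ℚ] RE, ∀ i, ρ (x i) = x' i := by
  have hinj : LinearMap.ker (lcQ x) = ⊥ := by
    rw [LinearMap.ker_eq_bot']
    intro d hd
    refine io_inj hx ?_
    rw [← io_lcQ, hd, io_zero]
  obtain ⟨g, hg⟩ := LinearMap.exists_leftInverse_of_injective _ hinj
  refine ⟨(lcQ x').comp g, fun i => ?_⟩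
  have h1 : x i = lcQ x (Finsupp.single i 1) := by simp [lcQ]
  have h2 : g (lcQ x (Finsupp.single i 1)) = Finsupp.single i 1 := LinearMap.congr_fun hg _
  rw [h1, LinearMap.comp_apply, h2]
  simp [lcQ]

lemma reloc_map {e : ℕ → 𝒲} {C : ℝ} {x : ℕ → RE} {Q : ℕ → 𝒲 →L[ℝ] 𝒲} (he : ∃ Ce Qe, PR e Ce Qe)
    (hx : PR (fun i => io e (x i)) C Q) (m : ℕ) : ∃ M : ℕ, ∀ c, m ≤ c → ∃ ρ : RE →ₗ[ℚ] RE,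
      (∀ i, m ≤ i → ρ (x i) = x i) ∧ (Submodule.span ℚ (x '' Set.Iio m)).map ρ ≤ tsp x c ∧
      ∀ q ∈ Submodule.span ℚ (x '' Set.Iio m) ⊔ tsp x (c + m),
        ‖io e q‖ ≤ M * ‖io e (ρ q)‖ ∧ ‖io e (ρ q)‖ ≤ M * ‖io e q‖ := by
  obtain ⟨Ce, Qe, he⟩ := he
  have hC := hx.pos
  have hxne : ∀ i, x i ≠ 0 := fun i h => hx.2.1 i (by simp only [h, io_zero])
  obtain ⟨M, hM⟩ := exists_nat_ge (4 * C * m * C + (1 + C))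
  refine ⟨M, fun c hc => ?_⟩
  have hlam : ∀ i, ∃ l : ℚ, 0 < l ∧ ‖io e (x i)‖ ≤ 2 * (l * ‖io e (x (i + c))‖) ∧
      l * ‖io e (x (i + c))‖ ≤ 2 * ‖io e (x i)‖ := by
    intro i
    have h1 : 0 < ‖io e (x i)‖ := norm_pos_iff.2 (hx.2.1 i)
    have h2 : 0 < ‖io e (x (i + c))‖ := norm_pos_iff.2 (hx.2.1 (i + c))
    obtain ⟨l, hl1, hl2⟩ := exists_rat_btwn (show ‖io e (x i)‖ / 2 / ‖io e (x (i + c))‖ <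
      2 * ‖io e (x i)‖ / ‖io e (x (i + c))‖ by gcongr; linarith)
    rw [div_lt_iff₀ h2] at hl1
    have h3 : (0:ℝ) < l := by
      by_contra hcon
      have := mul_nonpos_of_nonpos_of_nonneg (not_lt.1 hcon) h2.le
      linarith
    rw [lt_div_iff₀ h2] at hl2
    exact ⟨l, by exact_mod_cast h3, by linarith, hl2.le⟩
  choose l hl0 hl1 hl2 using hlam
  obtain ⟨ρ, hρ⟩ := exists_rho hx (fun i => if i < m then l i • x (i + c) else x i)
  have hρ1 : ∀ i < m, ρ (x i) = l i • x (i + c) := fun i hi => by rw [hρ, if_pos hi]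
  have hρ2 : ∀ i, m ≤ i → ρ (x i) = x i := fun i hi => by rw [hρ, if_neg (not_lt.2 hi)]
  obtain ⟨Q', hxc⟩ := hx.blk (((Blk.refl hxne).shift c).rblk he)
  refine ⟨ρ, hρ2, ?_, ?_⟩
  · rw [Submodule.map_le_iff_le_comap, Submodule.span_le]
    rintro _ ⟨i, hi, rfl⟩
    show ρ (x i) ∈ tsp x c
    rw [hρ1 i hi]
    exact Submodule.smul_mem _ _ (Submodule.subset_span ⟨i + c, by simp, rfl⟩)
  · intro q hq
    obtain ⟨g, hg, f, hf, rfl⟩ := Submodule.mem_sup.1 hq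
    have hρf : ρ f = f := by
      have : tsp x (c + m) ≤ LinearMap.eqLocus ρ LinearMap.id := by
        refine Submodule.span_le.2 ?_
        rintro _ ⟨i, hi, rfl⟩
        exact hρ2 i (le_trans (Nat.le_add_left m c) hi)
      exact this hf
    obtain ⟨a, ha⟩ := mem_span_sum _ _ hg
    have e1 : io e g = ∑ i ∈ Finset.range m, (a i : ℝ) • io e (x i) := by rw [ha, io_sum]
    have hρg : ρ g = ∑ i ∈ Finset.range m, (a i * l i) • x (i + c) := by
      rw [ha, map_sum]
      refine Finset.sum_congr rfl fun i hi => ?_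
      rw [map_smul, hρ1 i (Finset.mem_range.1 hi), mul_smul]
    have e2 : io e (ρ g) = ∑ i ∈ Finset.range m, ((a i : ℝ) * l i) • io e (x (i + c)) := by
      rw [hρg, io_sum]; push_cast; rfl
    have hρgm : ρ g ∈ Submodule.span ℚ (x '' Set.Iio (c + m)) := by
      rw [hρg]
      refine Submodule.sum_mem _ fun i hi => Submodule.smul_mem _ _ (Submodule.subset_span ⟨i + c, ?_, rfl⟩)
      have := Finset.mem_range.1 hi
      show i + c < c + m
      omega
    have n1 : ‖io e g‖ ≤ 4 * C * m * ‖io e (ρ g)‖ := by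
      rw [e1, e2]
      exact hxc.l1 (fun i => io e (x i)) (fun i => l i) m (fun i _ => hl1 i)
        (fun i _ => by exact_mod_cast (hl0 i).le) _
    have n2 : ‖io e (ρ g)‖ ≤ 4 * C * m * ‖io e g‖ := by
      have := hx.l1 (fun i => (l i : ℝ) • io e (x (i + c))) (fun i => 1) m (fun i _ => by
        rw [norm_smul, Real.norm_eq_abs, abs_of_pos (by exact_mod_cast hl0 i), one_mul]
        exact hl2 i) (fun i _ => zero_le_one) (fun i => (a i : ℝ))
      simp only [mul_one, smul_smul] at this
      rw [e1, e2]; exact this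
    have s1 := hx.split (k := m) (fun i hi => hi)
      (fun i (hi : i ∈ Set.Ici (c + m)) => le_trans (Nat.le_add_left m c) hi) (io_mem_span e x _ hg)
      (io_mem_span e x _ hf)
    have s2 := hx.split (k := c + m) (fun i hi => hi) (fun i hi => hi) (io_mem_span e x _ hρgm)
      (io_mem_span e x _ hf)
    rw [map_add, hρf, io_add, io_add]
    have key : ∀ g g' f : 𝒲, ‖g‖ ≤ 4 * C * m * ‖g'‖ →
        (‖g'‖ ≤ C * ‖g' + f‖ ∧ ‖f‖ ≤ (1 + C) * ‖g' + f‖) → ‖g + f‖ ≤ M * ‖g' + f‖ := by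
      intro g g' f h1 ⟨h2, h3⟩
      calc ‖g + f‖ ≤ ‖g‖ + ‖f‖ := norm_add_le _ _
        _ ≤ 4 * C * m * (C * ‖g' + f‖) + (1 + C) * ‖g' + f‖ :=
          add_le_add (h1.trans (mul_le_mul_of_nonneg_left h2 (by positivity))) h3
        _ = (4 * C * m * C + (1 + C)) * ‖g' + f‖ := by ring
        _ ≤ _ := by gcongr
    exact ⟨key _ _ _ n1 s2, key _ _ _ n2 s1⟩

lemma reloc {L : Type*} {lt : L → L → Prop} {e : ℕ → 𝒲} {C : ℝ} {x : ℕ → RE} {Q : ℕ → 𝒲 →L[ℝ] 𝒲}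
    (he : ∃ Ce Qe, PR e Ce Qe) (hx : PR (fun i => io e (x i)) C Q) {U : Submodule ℚ RE} {K : ℕ} {a : L}
    {G0 : Submodule ℚ RE} (hG : G0.FG) (hG0 : G0 ≤ tsp x 0)
    (h : WW (fun f => ‖io e f‖) lt K U (tsp x) a ⊥ G0) :
    ∃ K', WW (fun f => ‖io e f‖) lt K' U (tsp x) a ⊥ ⊥ := by
  obtain ⟨m, hm⟩ := fg_bound x _ hG hG0
  have hm : G0 ≤ Submodule.span ℚ (x '' Set.Iio m) :=
    hm.trans (Submodule.span_mono (Set.image_mono Set.inter_subset_right))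
  obtain ⟨M, hM⟩ := reloc_map he hx m
  refine ⟨K * M, WW.fold fun b hb n D hD hDU => ?_⟩
  obtain ⟨ρ, hρ2, hρ1, hρ⟩ := hM (max n m) (le_max_right _ _)
  set c := max n m with hc
  let ρ2 : RE × RE →ₗ[ℚ] RE × RE := LinearMap.prodMap LinearMap.id ρ
  have hid : ∀ F : Submodule ℚ RE, F ≤ tsp x m → F.map ρ = F := by
    intro F hF
    have h1 : tsp x m ≤ LinearMap.eqLocus ρ LinearMap.id := by
      refine Submodule.span_le.2 ?_
      rintro _ ⟨i, hi, rfl⟩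
      exact hρ2 i hi
    ext v
    constructor
    · rintro ⟨u, hu, rfl⟩
      have : ρ u = u := h1 (hF hu)
      rwa [this]
    · intro hv
      exact ⟨v, hv, h1 (hF hv)⟩
  have hbd : ∀ (Γ : Submodule ℚ (RE × RE)), Bdd (fun f => ‖io e f‖) K Γ →
      Γ.map (LinearMap.snd ℚ RE RE) ≤ G0 ⊔ tsp x (c + m) →
      Bdd (fun f => ‖io e f‖) (K * M) (Γ.map ρ2) := by
    rintro Γ hB hs _ ⟨⟨p, q⟩, hpq, rfl⟩
    have h1 := hB _ hpq
    have h2 := hρ q (sup_le_sup_right hm _ (hs ⟨(p, q), hpq, rfl⟩))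
    show ‖io e p‖ ≤ (K * M : ℕ) * ‖io e (ρ q)‖ ∧ ‖io e (ρ q)‖ ≤ (K * M : ℕ) * ‖io e p‖
    simp only at h1
    have hK : (0:ℝ) ≤ K := Nat.cast_nonneg K
    have hM : (0:ℝ) ≤ M := Nat.cast_nonneg M
    push_cast
    constructor <;> nlinarith
  have hsnd : ∀ (Γ : Submodule ℚ (RE × RE)) G, Γ.map (LinearMap.snd ℚ RE RE) ≤ G →
      (Γ.map ρ2).map (LinearMap.snd ℚ RE RE) ≤ G.map ρ := by
    rintro Γ G hΓ _ ⟨_, ⟨⟨p, q⟩, hpq, rfl⟩, rfl⟩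
    exact ⟨q, hΓ ⟨(p, q), hpq, rfl⟩, rfl⟩
  have hfst : ∀ (Γ : Submodule ℚ (RE × RE)) (D : Submodule ℚ RE), D ≤ Γ.map (LinearMap.fst ℚ RE RE) →
      D ≤ (Γ.map ρ2).map (LinearMap.fst ℚ RE RE) := by
    intro Γ D hD d hd
    obtain ⟨⟨p, q⟩, hpq, rfl⟩ := hD hd
    exact ⟨(p, ρ q), ⟨(p, q), hpq, rfl⟩, rfl⟩
  obtain ⟨F, Γ', ⟨l1, l2, l3, l4, l5, l6, l7⟩, hW⟩ := h.unfold hb (c + m) D hD hDU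
  have hGF : G0 ⊔ F ≤ G0 ⊔ tsp x (c + m) := sup_le_sup_left l2 _
  refine ⟨(G0 ⊔ F).map ρ, Γ'.map ρ2, ⟨(hG.sup l1).map _, ?_, l3.map _, bot_le, ?_, hfst _ _ l6,
    hbd _ l7 (l5.trans hGF)⟩, ?_⟩
  · rw [Submodule.map_sup, hid F (l2.trans (tsp_mono (by omega)))]
    refine sup_le ?_ (l2.trans (tsp_mono (by omega)))
    exact (Submodule.map_mono hm).trans (hρ1.trans (tsp_mono (by omega)))
  · rw [bot_sup_eq]; exact hsnd _ _ l5
  · refine ⟨fun a Δ H => ∃ Γ G, WW (fun f => ‖io e f‖) lt K U (tsp x) a Γ G ∧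
      G ≤ G0 ⊔ tsp x (c + m) ∧ Δ = Γ.map ρ2 ∧ H = G.map ρ,
      ⟨Γ', G0 ⊔ F, hW, hGF, rfl, by rw [bot_sup_eq]⟩, ?_⟩
    rintro a _ _ ⟨Γ, G, hWG, hGc, rfl, rfl⟩ b hb n' D hD hDU
    obtain ⟨F, Γ', ⟨l1, l2, l3, l4, l5, l6, l7⟩, hW⟩ := hWG.unfold hb (max n' (c + m)) D hD hDU
    have hGF : G ⊔ F ≤ G0 ⊔ tsp x (c + m) :=
      sup_le hGc (l2.trans ((tsp_mono (le_max_right _ _)).trans le_sup_right))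
    have hF : F.map ρ = F := hid F (l2.trans (tsp_mono (by omega)))
    refine ⟨F, Γ'.map ρ2, ⟨l1, l2.trans (tsp_mono (le_max_left _ _)), l3.map _, Submodule.map_mono l4,
      ?_, hfst _ _ l6, hbd _ l7 (l5.trans hGF)⟩, Γ', G ⊔ F, hW, hGF, rfl, ?_⟩
    · have := hsnd _ _ l5
      rwa [Submodule.map_sup, hF] at this
    · rw [Submodule.map_sup, hF]

end reloc
end Rosendal

namespace Rosendal
section tight
variable {𝒲 : Type} [NormedAddCommGroup 𝒲] [NormedSpace ℝ 𝒲]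

lemma block_approx {e : ℕ → 𝒲} {C : ℝ} {x : ℕ → RE} {Q : ℕ → 𝒲 →L[ℝ] 𝒲}
    (hx : PR (fun i => io e (x i)) C Q) {y : ℕ → 𝒲} (hy : RBlk (fun i => io e (x i)) y) :
    ∃ Z, Blk x Z ∧ ∀ i, ‖y i - io e (Z i)‖ ≤ (1/2) / (4 * C) * (1/2)^i * ‖y i‖ := by
  obtain ⟨hy0, N, hN, hyN⟩ := hy
  have hC := hx.1
  have hC0 := hx.pos
  have key : ∀ i, ∃ f ∈ Submodule.span ℚ (x '' Set.Ico (N i) (N (i+1))),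
      ‖y i - io e f‖ ≤ (1/2) / (4 * C) * (1/2)^i * ‖y i‖ := by
    intro i
    have h1 := io_span_dense e x _ (Submodule.le_topologicalClosure _ (hyN i))
    have hp : 0 < ‖y i‖ := norm_pos_iff.2 (hy0 i)
    obtain ⟨_, ⟨f, hf, rfl⟩, hd⟩ := Metric.mem_closure_iff.1 h1
      ((1/2) / (4 * C) * (1/2)^i * ‖y i‖) (by positivity)
    rw [dist_eq_norm] at hd
    exact ⟨f, hf, hd.le⟩
  choose Z hZ hd using key
  refine ⟨Z, ⟨fun n hn => ?_, N, hN, hZ⟩, hd⟩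
  have h1 := hd n
  rw [hn, io_zero, sub_zero] at h1
  have hp : 0 < ‖y n‖ := norm_pos_iff.2 (hy0 n)
  have h2 : (1/2:ℝ) / (4 * C) ≤ 1/8 := by
    rw [div_le_div_iff₀ (by positivity) (by norm_num)]; linarith
  have h3 : (1/2:ℝ)^n ≤ 1 := pow_le_one₀ (by norm_num) (by norm_num)
  have h4 : (1/2:ℝ) / (4 * C) * (1/2)^n ≤ 1/8 * 1 := by gcongr
  nlinarith

noncomputable def Gam (Z : ℕ → RE) (v : List RE) : Submodule ℚ (RE × RE) :=
  Submodule.span ℚ ((fun i => (Z i, v.getD i 0)) '' Set.Iio v.length)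

lemma Gam_nil (Z : ℕ → RE) : Gam Z [] = ⊥ := by
  simp [Gam]

lemma Gam_fg (Z : ℕ → RE) (v : List RE) : (Gam Z v).FG :=
  Submodule.fg_span ((Set.finite_Iio _).image _)

lemma Gam_bdd {e : ℕ → 𝒲} {C : ℝ} {Q : ℕ → 𝒲 →L[ℝ] 𝒲} {y : ℕ → 𝒲} (hy : PR y C Q) {Z : ℕ → RE}
    (hZ : ∀ i, ‖y i - io e (Z i)‖ ≤ (1/2) / (4 * C) * (1/2)^i * ‖y i‖) {K0 : ℝ} (hK0 : 1 ≤ K0)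
    {Y : Set 𝒲} {t : List 𝒲} (ht : t ∈ embTree y Y K0) {v : List RE} (hlen : v.length = t.length)
    (hc : ∀ i < v.length, ‖t.getD i 0 - io e (v.getD i 0)‖ ≤ (1/(2*K0)) / (4 * C) * (1/2)^i * ‖y i‖)
    {Kn : ℕ} (hKn : 4 * K0 ≤ Kn) : Bdd (fun f => ‖io e f‖) Kn (Gam Z v) := by
  intro p hp
  obtain ⟨c, rfl⟩ := mem_span_sum _ _ hp
  set n := v.length with hn
  have h1 := hy.pert y (fun i => io e (Z i)) (1/2) (by norm_num) n (fun i _ => hZ i) (fun i => (c i : ℝ))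
  have h2 := hy.pert (fun i => t.getD i 0) (fun i => io e (v.getD i 0)) (1/(2*K0)) (by positivity) n
    hc (fun i => (c i : ℝ))
  have h3 := ht.2 (fun i => (c i : ℝ))
  rw [← hlen] at h3
  have e1 : io e ((∑ i ∈ Finset.range n, c i • (Z i, v.getD i 0)).1) =
      ∑ i ∈ Finset.range n, (c i : ℝ) • io e (Z i) := by
    rw [Prod.fst_sum, ← io_sum]; rfl
  have e2 : io e ((∑ i ∈ Finset.range n, c i • (Z i, v.getD i 0)).2) =
      ∑ i ∈ Finset.range n, (c i : ℝ) • io e (v.getD i 0) := by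
    rw [Prod.snd_sum, ← io_sum]; rfl
  show ‖io e _‖ ≤ Kn * ‖io e _‖ ∧ ‖io e _‖ ≤ Kn * ‖io e _‖
  rw [e1, e2]
  set sy := ∑ i ∈ Finset.range n, (c i : ℝ) • y i
  set sz := ∑ i ∈ Finset.range n, (c i : ℝ) • io e (Z i)
  set st := ∑ i ∈ Finset.range n, (c i : ℝ) • t.getD i 0
  set sv := ∑ i ∈ Finset.range n, (c i : ℝ) • io e (v.getD i 0)
  obtain ⟨h3, h4⟩ := h3
  have a1 := norm_sub_norm_le sy sz
  have a2 := norm_sub_norm_le sz sy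
  have a3 := norm_sub_norm_le st sv
  have a4 := norm_sub_norm_le sv st
  rw [norm_sub_rev] at a2 a4
  have hK : 0 < K0 := by linarith
  have p1 : ‖st‖ ≤ K0 * ‖sy‖ := by
    rw [one_div, inv_mul_le_iff₀ hK] at h3; exact h3
  have p2 : 1/(2*K0) * ‖sy‖ ≤ ‖sy‖ := by
    have : 1/(2*K0) ≤ 1 := by rw [div_le_one (by positivity)]; linarith
    exact mul_le_of_le_one_left (norm_nonneg _) this
  have p3 : K0 * (1/(2*K0) * ‖sy‖) = ‖sy‖/2 := by field_simp
  have n1 := norm_nonneg sy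
  have n2 := norm_nonneg sv
  have n3 := norm_nonneg sz
  have n4 := norm_nonneg st
  constructor
  · have q1 : ‖sy‖ ≤ 2 * (K0 * ‖sv‖) := by nlinarith
    have q2 : 4 * K0 * ‖sv‖ ≤ Kn * ‖sv‖ := by gcongr
    linarith [mul_nonneg hK.le n2]
  · have q1 : ‖sv‖ ≤ 2 * K0 * ‖sy‖ := by nlinarith
    have q3 : ‖sy‖ ≤ 2 * ‖sz‖ := by linarith
    have q2 : 4 * K0 * ‖sz‖ ≤ Kn * ‖sz‖ := by gcongr
    nlinarith

lemma strat (ν : RE → ℝ) (Z x : ℕ → RE) (K : ℕ) (ξ : Ordinal.{0}) (Γ : Submodule ℚ (RE × RE))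
    (G : Submodule ℚ RE) : ∃ n : ℕ, ¬ WW ν olt K (tsp Z 0) (tsp x) ξ Γ G →
      ∃ ξ' < ξ, ∃ k : ℕ, ∀ F Γ', Legal ν K (tsp x n) (Submodule.span ℚ (Z '' Set.Iio k)) Γ G F Γ' →
        ¬ WW ν olt K (tsp Z 0) (tsp x) ξ' Γ' (G ⊔ F) := by
  by_cases h : WW ν olt K (tsp Z 0) (tsp x) ξ Γ G
  · exact ⟨0, fun h' => absurd h h'⟩
  · have h' := mt WW.fold h
    push Not at h'
    obtain ⟨ξ', hξ, n, D, hD, hDU, hh⟩ := h'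
    refine ⟨n, fun _ => ⟨ξ', hξ, ?_⟩⟩
    obtain ⟨k, hk⟩ := fg_bound Z _ hD hDU
    refine ⟨k, fun F Γ' hL => hh F Γ' ?_⟩
    obtain ⟨h1, h2, h3, h4, h5, h6, h7⟩ := hL
    exact ⟨h1, h2, h3, h4, h5, hk.trans (le_trans
      (Submodule.span_mono (Set.image_mono Set.inter_subset_right)) h6), h7⟩

end tight
end Rosendal

namespace Rosendal
section tight
variable {𝒲 : Type} [NormedAddCommGroup 𝒲] [NormedSpace ℝ 𝒲]

lemma getD_range_map (w : ℕ → RE) (n i : ℕ) (hi : i < n) :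
    ((List.range n).map w).getD i 0 = w i := by
  simp [List.getD_eq_getElem?_getD, hi]

lemma exists_cuts (nn : ℕ → Finset ℕ → ℕ) : ∃ a : ℕ → ℕ, StrictMono a ∧
    ∀ j, ∀ m ≤ j, ∀ J ⊆ Finset.range (a j), nn m J ≤ a (j+1) := by
  let a : ℕ → ℕ := fun j => Nat.rec 0 (fun j r => r + 1 +
    (Finset.range (j+1)).sup (fun m => (Finset.range r).powerset.sup (fun J => nn m J))) j
  have ha : ∀ j, a (j+1) = a j + 1 +
    (Finset.range (j+1)).sup (fun m => (Finset.range (a j)).powerset.sup (fun J => nn m J)) :=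
    fun j => rfl
  refine ⟨a, strictMono_nat_of_lt_succ fun n => by rw [ha]; omega, fun j m hm J hJ => ?_⟩
  rw [ha]
  have h1 : nn m J ≤ (Finset.range (a j)).powerset.sup (fun J => nn m J) :=
    Finset.le_sup (f := fun J => nn m J) (Finset.mem_powerset.2 hJ)
  have h2 := Finset.le_sup (f := fun m => (Finset.range (a j)).powerset.sup (fun J => nn m J))
    (Finset.mem_range.2 (Nat.lt_succ_of_le hm))
  exact (h1.trans h2).trans (Nat.le_add_left _ _)

lemma tight_step {e : ℕ → 𝒲} {C : ℝ} {Q : ℕ → 𝒲 →L[ℝ] 𝒲} {x : ℕ → RE}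
    {y : ℕ → 𝒲} (hy : PR y C Q) {Z : ℕ → RE}
    (hZ : ∀ i, ‖y i - io e (Z i)‖ ≤ (1/2) / (4 * C) * (1/2)^i * ‖y i‖)
    (α : Ordinal.{0}) (g : ℕ → ℕ × Set.Iic α × List RE) (hg : Function.Surjective g)
    (nn : ℕ × Set.Iic α × List RE → Finset ℕ → ℕ)
    (hnn : ∀ p (J : Finset ℕ), ¬ WW (fun f => ‖io e f‖) olt p.1 (tsp Z 0) (tsp x) p.2.1.1 (Gam Z p.2.2)
      (Submodule.span ℚ (x '' J)) →
      ∃ ξ' < p.2.1.1, ∃ k : ℕ, ∀ F Γ', Legal (fun f => ‖io e f‖) p.1 (tsp x (nn p J))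
        (Submodule.span ℚ (Z '' Set.Iio k)) (Gam Z p.2.2) (Submodule.span ℚ (x '' J)) F Γ' →
        ¬ WW (fun f => ‖io e f‖) olt p.1 (tsp Z 0) (tsp x) ξ' Γ' (Submodule.span ℚ (x '' J) ⊔ F))
    (a : ℕ → ℕ) (ha : StrictMono a)
    (hcut : ∀ j, ∀ m ≤ j, ∀ J ⊆ Finset.range (a j), nn (g m) J ≤ a (j+1))
    (A : Set ℕ) (hA : A.Infinite) (Res : Set ℕ)
    (hRes : ∀ j ∈ A, ∀ i ∈ Res, a j ≤ i → a (j+1) ≤ i)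
    {K0 : ℝ} (hK0 : 1 ≤ K0) {Kn : ℕ} (hKn : 4 * K0 ≤ Kn) (ξ : Ordinal.{0}) :
    ∀ (hξ : ξ ≤ α), ∀ j ∈ A, ∀ (J : Finset ℕ), (∀ i, i ∈ J ↔ i ∈ Res ∧ i < a j) → ∀ v : List RE,
      ∀ t ∈ embTree y (closedSpan ((fun i => io e (x i)) '' Res) : Set 𝒲) K0,
      (∃ m ≤ j, g m = (Kn, ⟨ξ, hξ⟩, v)) →
      (∀ i < v.length, v.getD i 0 ∈ Submodule.span ℚ (x '' J)) →
      v.length = t.length →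
      (∀ i < v.length, ‖t.getD i 0 - io e (v.getD i 0)‖ ≤ (1/(2*K0)) / (4 * C) * (1/2)^i * ‖y i‖) →
      ¬ WW (fun f => ‖io e f‖) olt Kn (tsp Z 0) (tsp x) ξ (Gam Z v) (Submodule.span ℚ (x '' J)) →
      ¬ Hge (embTree y (closedSpan ((fun i => io e (x i)) '' Res) : Set 𝒲) K0) (Ordinal.omega0 * ξ) t := by
  classical
  induction ξ using WellFoundedLT.induction with
  | ind ξ ih =>
  intro hξ j hj J hJ v t ht ⟨m, hm, hgm⟩ hvJ hlen hclose hW hH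
  have hC0 := hy.pos
  obtain ⟨ξ', hξ', k, hk⟩ := hnn (Kn, ⟨ξ, hξ⟩, v) J hW
  simp only at hξ' hk
  have hH1 : Hge (embTree y (closedSpan ((fun i => io e (x i)) '' Res) : Set 𝒲) K0)
      (Ordinal.omega0 * ξ' + k) t := by
    refine hH.mono ?_
    calc Ordinal.omega0 * ξ' + k ≤ Ordinal.omega0 * ξ' + Ordinal.omega0 := by
          gcongr; exact (Ordinal.natCast_lt_omega0 k).le
      _ = Ordinal.omega0 * (Order.succ ξ') := by rw [Ordinal.mul_succ]
      _ ≤ _ := by gcongr; exact Order.succ_le_of_lt hξ'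
  obtain ⟨t', ht', htt, hlen', hH2⟩ := hH1.add_nat ht
  have happ : ∀ i, ∃ f ∈ Submodule.span ℚ (x '' Res), ‖t'.getD i 0 - io e f‖ ≤
      (1/(2*K0)) / (4 * C) * (1/2)^i * ‖y i‖ := by
    intro i
    have h1 : t'.getD i 0 ∈ (closedSpan ((fun i => io e (x i)) '' Res) : Set 𝒲) := by
      by_cases hi : i < t'.length
      · rw [List.getD_eq_getElem _ _ hi]
        exact ht'.1 _ (List.getElem_mem hi)
      · rw [List.getD_eq_default _ _ (not_lt.1 hi)]
        exact Submodule.zero_mem _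
    have hp : 0 < ‖y i‖ := norm_pos_iff.2 (hy.2.1 i)
    obtain ⟨_, ⟨f, hf, rfl⟩, hd⟩ := Metric.mem_closure_iff.1 (io_span_dense e x _ h1)
      ((1/(2*K0)) / (4 * C) * (1/2)^i * ‖y i‖) (by positivity)
    rw [dist_eq_norm] at hd
    exact ⟨f, hf, hd.le⟩
  choose f hf hfd using happ
  let w : ℕ → RE := fun i => if i < v.length then v.getD i 0 else f i
  have hw1 : ∀ i, i < v.length → w i = v.getD i 0 := fun i hi => if_pos hi
  have hw2 : ∀ i, ¬ i < v.length → w i = f i := fun i hi => if_neg hi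
  have hwR : ∀ i, w i ∈ Submodule.span ℚ (x '' Res) := by
    intro i
    by_cases hi : i < v.length
    · rw [hw1 i hi]
      exact Submodule.span_mono (Set.image_mono fun i hi => ((hJ i).1 hi).1) (hvJ i hi)
    · rw [hw2 i hi]; exact hf i
  choose kb hkb using fun i => span_bound x Res (hwR i)
  let L := (Finset.range t'.length).sup kb
  have hL : ∀ i < t'.length, kb i ≤ L := fun i hi => Finset.le_sup (Finset.mem_range.2 hi)
  let v' : List RE := (List.range t'.length).map w
  have hv'len : v'.length = t'.length := by simp [v']
  have hv' : ∀ i < t'.length, v'.getD i 0 = w i := fun i hi => getD_range_map w _ i hi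
  obtain ⟨m', hm'⟩ := hg (Kn, ⟨ξ', hξ'.le.trans hξ⟩, v')
  obtain ⟨j', hj', hjj⟩ := hA.exists_gt (max j (max m' L))
  have hj1 : j < j' := lt_of_le_of_lt (le_max_left _ _) hjj
  have hj2 : m' ≤ j' := (lt_of_le_of_lt ((le_max_left _ _).trans (le_max_right _ _)) hjj).le
  have hj3 : L ≤ a j' := (lt_of_le_of_lt ((le_max_right _ _).trans (le_max_right _ _)) hjj).le.trans
    ha.le_apply
  let J' : Finset ℕ := (Finset.range (a j')).filter (· ∈ Res)
  have hJ' : ∀ i, i ∈ J' ↔ i ∈ Res ∧ i < a j' := by intro i; simp [J', and_comm]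
  have hsub : J ⊆ J' := fun i hi => (hJ' i).2 ⟨((hJ i).1 hi).1, ((hJ i).1 hi).2.trans (ha hj1)⟩
  have hlt : v.length + k ≤ t'.length := by rw [hlen]; exact hlen'
  have hclose' : ∀ i < v'.length, ‖t'.getD i 0 - io e (v'.getD i 0)‖ ≤
      (1/(2*K0)) / (4 * C) * (1/2)^i * ‖y i‖ := by
    intro i hi
    rw [hv'len] at hi
    rw [hv' i hi]
    by_cases hiv : i < v.length
    · rw [hw1 i hiv]
      obtain ⟨s, rfl⟩ := htt
      rw [List.getD_append _ _ _ _ (by omega)]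
      exact hclose i hiv
    · rw [hw2 i hiv]; exact hfd i
  have hvJ' : ∀ i < v'.length, v'.getD i 0 ∈ Submodule.span ℚ (x '' J') := by
    intro i hi
    rw [hv'len] at hi
    rw [hv' i hi]
    refine Submodule.span_mono (Set.image_mono ?_) (hkb i)
    intro r hr
    exact (hJ' r).2 ⟨hr.1, lt_of_lt_of_le hr.2 ((hL i hi).trans hj3)⟩
  have hspan : Submodule.span ℚ (x '' J) ⊔ Submodule.span ℚ (x '' (J' \ J : Finset ℕ)) =
      Submodule.span ℚ (x '' J') := by
    rw [← Submodule.span_union, ← Set.image_union, ← Finset.coe_union,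
      Finset.union_sdiff_of_subset hsub]
  have hcutj : nn (Kn, ⟨ξ, hξ⟩, v) J ≤ a (j+1) := by
    rw [← hgm]
    exact hcut j m hm J (fun i hi => Finset.mem_range.2 ((hJ i).1 hi).2)
  have hW' := hk (Submodule.span ℚ (x '' (J' \ J : Finset ℕ))) (Gam Z v') (by
    refine ⟨Submodule.fg_span ((Finset.finite_toSet _).image _), ?_, Gam_fg _ _, ?_, ?_, ?_, ?_⟩
    · refine Submodule.span_mono (Set.image_mono ?_)
      intro i hi
      have hi : i ∈ J' \ J := hi
      rw [Finset.mem_sdiff] at hi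
      obtain ⟨h1, h2⟩ := (hJ' i).1 hi.1
      have h3 : a j ≤ i := by
        by_contra hc
        exact hi.2 ((hJ i).2 ⟨h1, not_le.1 hc⟩)
      exact hcutj.trans (hRes j hj i h1 h3)
    · refine Submodule.span_mono ?_
      rintro _ ⟨i, hi, rfl⟩
      have hi : i < v.length := hi
      have hi' : i < t'.length := by omega
      refine ⟨i, by rw [hv'len]; exact hi', ?_⟩
      simp only
      rw [hv' i hi', hw1 i hi]
    · rw [hspan, Gam, Submodule.map_span, Submodule.span_le]
      rintro _ ⟨_, ⟨i, hi, rfl⟩, rfl⟩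
      exact hvJ' i hi
    · rw [Submodule.span_le]
      rintro _ ⟨i, hi, rfl⟩
      have hi : i < k := hi
      refine ⟨(Z i, v'.getD i 0), Submodule.subset_span ⟨i, ?_, rfl⟩, rfl⟩
      show i < v'.length
      omega
    · exact Gam_bdd hy hZ hK0 ht' hv'len hclose' hKn)
  rw [hspan] at hW'
  exact ih ξ' hξ' (hξ'.le.trans hξ) j' hj' J' hJ' v' t' ht' ⟨m', hj2, hm'⟩ hvJ' hv'len hclose' hW' hH2

lemma tight {e : ℕ → 𝒲} {C : ℝ} {Q : ℕ → 𝒲 →L[ℝ] 𝒲} {x : ℕ → RE} (he : ∃ Ce Qe, PR e Ce Qe)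
    (hx : PR (fun i => io e (x i)) C Q) (α : Ordinal.{0}) [Countable (Set.Iic α)]
    (hP : ∀ Z, Blk x Z → ∀ K, ¬ WW (fun f => ‖io e f‖) olt K (tsp Z 0) (tsp x) α ⊥ ⊥) :
    IsAlphaTight (fun i => io e (x i)) (Ordinal.omega0 * α) := by
  classical
  intro y hy
  obtain ⟨Z, hZ, hZc⟩ := block_approx hx hy.rblk
  obtain ⟨Qy, hyP⟩ := hx.blk hy.rblk
  haveI : Nonempty (ℕ × Set.Iic α × List RE) := ⟨(0, ⟨α, Set.mem_Iic.2 le_rfl⟩, [])⟩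
  obtain ⟨g, hg⟩ := exists_surjective_nat (ℕ × Set.Iic α × List RE)
  choose nn hnn using fun (p : ℕ × Set.Iic α × List RE) (J : Finset ℕ) =>
    strat (fun f => ‖io e f‖) Z x p.1 p.2.1.1 (Gam Z p.2.2) (Submodule.span ℚ (x '' J))
  obtain ⟨a, ha, hcut⟩ := exists_cuts (fun m J => nn (g m) J)
  refine ⟨fun j => Finset.Icc (a j) (a (j+1) - 1), ⟨fun m => ⟨_, _, ?_, rfl⟩, fun m i hi j hj => ?_⟩,
    fun A hA => ?_⟩
  · have := ha (Nat.lt_succ_self m)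
    simp only [Nat.succ_eq_add_one] at this
    omega
  · have := ha (Nat.lt_succ_self m)
    simp only [Nat.succ_eq_add_one] at this
    rw [Finset.mem_Icc] at hi hj
    omega
  set Res : Set ℕ := {n | ∀ m ∈ A, n ∉ Finset.Icc (a m) (a (m+1) - 1)} with hResd
  have hres : residualSpace (fun i => io e (x i)) (fun j => Finset.Icc (a j) (a (j+1) - 1)) A =
      closedSpan ((fun i => io e (x i)) '' Res) := by
    unfold residualSpace
    congr 1
    ext v
    constructor
    · rintro ⟨n, h1, rfl⟩; exact ⟨n, h1, rfl⟩
    · rintro ⟨n, h1, rfl⟩; exact ⟨n, h1, rfl⟩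
  rw [hres]
  have hR : ∀ j ∈ A, ∀ i ∈ Res, a j ≤ i → a (j+1) ≤ i := by
    intro j hj i hi hji
    have h1 := hi j hj
    rw [Finset.mem_Icc] at h1
    omega
  refine embIndex_upper fun K0 hK0 => ?_
  obtain ⟨Kn, hKn⟩ := exists_nat_ge (4 * K0)
  obtain ⟨m, hm⟩ := hg (Kn, ⟨α, Set.mem_Iic.2 le_rfl⟩, [])
  obtain ⟨j, hj, hjm⟩ := hA.exists_gt m
  let J : Finset ℕ := (Finset.range (a j)).filter (· ∈ Res)
  have hJ : ∀ i, i ∈ J ↔ i ∈ Res ∧ i < a j := by intro i; simp [J, and_comm]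
  refine tight_step hyP hZc α g hg nn hnn a ha hcut A hA Res hR hK0 hKn α le_rfl j hj J hJ [] []
    (nil_mem_embTree _ _ _) ⟨m, hjm.le, hm⟩ (by simp) rfl (by simp) ?_
  rw [Gam_nil]
  intro hW
  obtain ⟨K', hW'⟩ := reloc he hx (Submodule.fg_span ((Finset.finite_toSet _).image _))
    (Submodule.span_mono (Set.image_mono fun i _ => Nat.zero_le i)) hW
  exact hP Z hZ K' hW'

end tight
end Rosendal

namespace Rosendal
section fin
variable {𝒲 : Type} [NormedAddCommGroup 𝒲] [NormedSpace ℝ 𝒲]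

lemma countable_Iio {α : Ordinal.{0}} (h : α < om1) : Countable (Set.Iio α) := by
  have h1 : α.card < Cardinal.aleph 1 := Cardinal.lt_ord.1 h
  rw [← Cardinal.mk_le_aleph0_iff, Ordinal.mk_Iio_ordinal, ← Cardinal.lift_aleph0.{1,0}, Cardinal.lift_le]
  rw [← Cardinal.succ_aleph0, Order.lt_succ_iff] at h1
  exact h1

lemma countable_Iic {α : Ordinal.{0}} (h : α < om1) : Countable (Set.Iic α) := by
  have := countable_Iio (om1_succ h)
  have h2 : Set.Iic α = Set.Iio (α + 1) := by ext; simp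
  rw [h2]; exact this

lemma core_ord {ν : RE → ℝ} {γ : Ordinal.{0}} (hγ : γ < om1) (x0 : ℕ → RE) (h0 : ∀ n, x0 n ≠ 0)
    (h : ∀ x, Blk x0 x → ∃ y, Blk x y ∧ ∃ K, WW ν olt K (tsp y 0) (tsp x) γ ⊥ ⊥) :
    ∃ x, Blk x0 x ∧ ∃ y, Blk x y ∧ ∃ K, ∀ Z, Blk x Z → WG ν olt K (tsp y 0) (tsp Z 0) γ ⊥ := by
  haveI := countable_Iic hγ
  obtain ⟨x, hx, y, hy, K, hZ⟩ := core (L := Set.Iic γ) ν (fun a b => a.1 < b.1)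
    ⟨γ, Set.mem_Iic.2 le_rfl⟩ x0 h0 (by
      intro x hx
      obtain ⟨y, hy, K, S, hS, hstep⟩ := h x hx
      exact ⟨y, hy, K, fun a => S a.1, hS, fun a Γ G hS b hb n C hC hCU =>
        hstep a.1 Γ G hS b.1 hb n C hC hCU⟩)
  refine ⟨x, hx, y, hy, K, fun Z hZZ => ?_⟩
  obtain ⟨S, hS, hstep⟩ := hZ Z hZZ
  refine ⟨fun a Γ => ∃ h : a ≤ γ, S ⟨a, h⟩ Γ, ⟨le_rfl, hS⟩, ?_⟩
  rintro a Γ ⟨ha, hS⟩ b hb C hC hCU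
  have hb : b < a := hb
  obtain ⟨Γ', h1, h2, h3, h4, h5⟩ := hstep ⟨a, ha⟩ Γ hS ⟨b, hb.le.trans ha⟩ hb C hC hCU
  exact ⟨Γ', h1, h2, h3, h4, hb.le.trans ha, h5⟩

theorem final_aux [CompleteSpace 𝒲] (e : ℕ → 𝒲) (he : IsSchauderBasis e) :
    (∃ X : Submodule ℝ 𝒲, IsClosed (X : Set 𝒲) ∧ ¬FiniteDimensional ℝ X ∧
      IsMinimalSpace X) ∨
    (∃ x : ℕ → 𝒲, IsBlockSeq e x ∧
      ∃ α : Ordinal.{0}, α < (Cardinal.aleph 1).ord ∧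
        IsAlphaMinimal x α ∧ IsAlphaTight x (Ordinal.omega0 * α)) := by
  obtain ⟨C, Q, hPe⟩ := schauder_PR he
  have he' : ∃ Ce Qe, PR e Ce Qe := ⟨C, Q, hPe⟩
  by_cases hU : ∀ x, Blk e0 x → ∃ y, Blk x y ∧ ∃ K, WW (fun f => ‖io e f‖) (fun _ _ : Unit => True) K
      (tsp y 0) (tsp x) () ⊥ ⊥
  · left
    obtain ⟨x, hx, y, hy, K, hZ⟩ := core _ _ () e0 e0_ne hU
    obtain ⟨Qy, hyP⟩ := (hx.trans hy).PR hPe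
    refine ⟨closedSpan (Set.range fun i => io e (y i)), Submodule.isClosed_topologicalClosure _,
      hyP.infinite, minimal_of_WG he' hyP fun Z hyZ => ⟨K, hZ Z (hy.trans hyZ)⟩⟩
  · right
    push Not at hU
    obtain ⟨x, hx, hxU⟩ := hU
    let P : Ordinal.{0} → (ℕ → RE) → Prop := fun β x => ∀ y, Blk x y → ∀ K,
      ¬ WW (fun f => ‖io e f‖) olt K (tsp y 0) (tsp x) β ⊥ ⊥
    have hPh : ∀ β x x', Blk x x' → P β x → P β x' := by
      intro β x x' hxx hP y hy K hW
      exact hP y (hxx.trans hy) K (hW.mono le_rfl (fun n => ⟨n, hxx.tsp_le n⟩))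
    obtain ⟨β, hβ, hβP⟩ : ∃ β < om1, P β x := by
      by_contra hcon
      have h1 : ∀ β < om1, ∃ y, Blk x y ∧ ∃ K, WW (fun f => ‖io e f‖) olt K (tsp y 0) (tsp x) β ⊥ ⊥ := by
        intro β hβ
        by_contra hc
        refine hcon ⟨β, hβ, fun y hy K hW => hc ⟨y, hy, K, hW⟩⟩
      obtain ⟨y, hy, K, hW⟩ := fusion h1
      exact hxU y hy K hW
    let S : Set Ordinal.{0} := {β | ∃ x', Blk x x' ∧ P β x'}
    have hSne : S.Nonempty := ⟨β, x, Blk.refl hx.ne, hβP⟩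
    obtain ⟨x', hxx', hPα⟩ : sInf S ∈ S := csInf_mem hSne
    have hmin : ∀ γ < sInf S, γ ∉ S := fun γ hγ => notMem_of_lt_csInf hγ (OrderBot.bddBelow _)
    have hα : sInf S ≤ β := csInf_le (OrderBot.bddBelow _) ⟨x, Blk.refl hx.ne, hβP⟩
    generalize sInf S = α at *
    have hα1 : α < om1 := hα.trans_lt hβ
    haveI := countable_Iio hα1
    haveI := countable_Iic hα1
    obtain ⟨z, hz, hzQ⟩ := diag (I := Set.Iio α) (fun γ x => ∃ m K : ℕ, ∃ y, Blk y (fun n => x (n + m)) ∧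
        ∀ Z, Blk y Z → WG (fun f => ‖io e f‖) olt K (tsp y 0) (tsp Z 0) γ.1 ⊥) x' hxx'.ne (by
      rintro ⟨γ, hγ⟩ u hu
      have hγ : γ < α := hγ
      obtain ⟨x2, hx2, y, hy, K, hZ⟩ := core_ord (ν := fun f => ‖io e f‖) (hγ.trans hα1) u hu.ne (by
        intro w hw
        by_contra hc
        exact hmin γ hγ ⟨w, hxx'.trans (hu.trans hw), fun y hy K hW => hc ⟨y, hy, K, hW⟩⟩)
      exact ⟨y, hx2.trans hy, 0, K, y, Blk.refl hy.ne, fun Z hyZ => hZ Z (hy.trans hyZ)⟩) (by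
      rintro γ u u' hu' ⟨m, K, y, hy, h⟩ ⟨m2, hb⟩
      refine ⟨m2 + m, K, y, hy.trans ?_, h⟩
      have := hb.shift_shift m
      have e1 : (fun n => u' (n + (m2 + m))) = fun n => u' (n + m + m2) := by
        funext n; congr 1; omega
      rw [e1]; exact this)
    have hz0 : Blk e0 z := hx.trans (hxx'.trans hz)
    obtain ⟨Qz, hzP⟩ := hz0.PR hPe
    refine ⟨fun i => io e (z i), ?_, α, hα1, ?_, ?_⟩
    · have := (hz0.rblk hPe).isBlockSeq
      rwa [io_e0] at this
    · refine alpha_minimal he' hzP fun γ hγ Z hZ => ?_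
      obtain ⟨m, K, y, hy, h⟩ := hzQ ⟨γ, hγ⟩
      exact WG_prepend hzP he' m K hy h hZ
    · exact tight he' hzP α (hPh α x' z hz hPα)

end fin
end Rosendal

namespace Rosendal

/-- A Banach space with a Schauder basis either has a minimal
infinite-dimensional closed subspace, or has a block subspace `[x n]` that is both
`α`-minimal and `ω·α`-tight for some countable ordinal `α`. -/
theorem minimal_subspace_or_alpha_minimal_omega_alpha_tight
    (𝒲 : Type) [NormedAddCommGroup 𝒲] [NormedSpace ℝ 𝒲] [CompleteSpace 𝒲]
    (e : ℕ → 𝒲) (he : IsSchauderBasis e) :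
    (∃ X : Submodule ℝ 𝒲, IsClosed (X : Set 𝒲) ∧ ¬FiniteDimensional ℝ X ∧
      IsMinimalSpace X) ∨
    (∃ x : ℕ → 𝒲, IsBlockSeq e x ∧
      ∃ α : Ordinal, α < (Cardinal.aleph 1).ord ∧
        IsAlphaMinimal x α ∧ IsAlphaTight x (Ordinal.omega0 * α)) := by
  exact final_aux e he

end Rosendal
end

section
/- Suppose 𝒲 is a locally minimal Banach space with a Schauder basis (e_n). Then 𝒲 = [e_n] is ω²-minimal. -/
open Filter Topology

namespace Rosendal

/-- `𝒲` is locally minimal: some constant `K ≥ 1` is such that every finite-dimensional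
subspace of `𝒲` embeds with constant `K` into every infinite-dimensional subspace of `𝒲`. -/
def LocallyMinimal (𝒲 : Type) [NormedAddCommGroup 𝒲] [NormedSpace ℝ 𝒲] : Prop :=
  ∃ K : ℝ, 1 ≤ K ∧ ∀ F Y : Submodule ℝ 𝒲, FiniteDimensional ℝ F →
    ¬FiniteDimensional ℝ Y → KEmbeds K F Y

section Helpers

variable {𝒲 : Type} [NormedAddCommGroup 𝒲] [NormedSpace ℝ 𝒲]

theorem exists_partialSum_bound [CompleteSpace 𝒲] (e : ℕ → 𝒲) (he : IsSchauderBasis e) :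
    ∃ B : ℝ, 1 ≤ B ∧ ∃ P : ℕ → 𝒲 →ₗ[ℝ] 𝒲, (∀ N x, ‖P N x‖ ≤ B * ‖x‖) ∧
      ∀ N i, P N (e i) = if i < N then e i else 0 := by
  choose a ha hu using he
  have hadd : ∀ x y, a (x + y) = a x + a y := by
    intro x y
    refine (hu (x + y) _ ?_).symm
    have := (ha x).add (ha y)
    simpa [add_smul, Finset.sum_add_distrib] using this
  have hsmul : ∀ (c : ℝ) x, a (c • x) = c • a x := by
    intro c x
    refine (hu (c • x) _ ?_).symm
    have := (ha x).const_smul c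
    simpa [mul_smul, Finset.smul_sum] using this
  have hbd : ∀ x, ∃ C, ∀ N, ‖∑ i ∈ Finset.range N, a x i • e i‖ ≤ C := by
    intro x
    obtain ⟨C, hC⟩ := (Metric.isBounded_range_of_tendsto _ (ha x)).exists_norm_le
    exact ⟨C, fun N => hC _ ⟨N, rfl⟩⟩
  choose C hC using hbd
  let S : 𝒲 →ₗ[ℝ] BoundedContinuousFunction ℕ 𝒲 :=
    { toFun := fun x => BoundedContinuousFunction.ofNormedAddCommGroupDiscrete
        (fun N => ∑ i ∈ Finset.range N, a x i • e i) (C x) (hC x)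
      map_add' := by
        intro x y
        ext N
        simp [hadd, add_smul, Finset.sum_add_distrib]
      map_smul' := by
        intro c x
        ext N
        simp [hsmul, mul_smul, Finset.smul_sum] }
  have hS : ∀ x N, S x N = ∑ i ∈ Finset.range N, a x i • e i := fun x N => rfl
  have hcont : Continuous S := by
    apply S.continuous_of_seq_closed_graph
    intro u x g hux hg
    have hgN : ∀ N, Tendsto (fun k => S (u k) N) atTop (𝓝 (g N)) := by
      intro N
      exact ((BoundedContinuousFunction.evalCLM ℝ N).continuous.tendsto g).comp hg
    have hspan : ∀ N, ∃ b : ℝ, b • e N = g (N + 1) - g N := by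
      intro N
      have h1 : Tendsto (fun k => S (u k) (N + 1) - S (u k) N) atTop (𝓝 (g (N + 1) - g N)) :=
        (hgN _).sub (hgN _)
      have hcl : IsClosed ((Submodule.span ℝ {e N} : Submodule ℝ 𝒲) : Set 𝒲) :=
        Submodule.closed_of_finiteDimensional _
      have : g (N + 1) - g N ∈ (Submodule.span ℝ {e N} : Submodule ℝ 𝒲) := by
        refine hcl.mem_of_tendsto h1 (Eventually.of_forall fun k => ?_)
        simp only [hS, Finset.sum_range_succ, add_sub_cancel_left]
        exact Submodule.smul_mem _ _ (Submodule.mem_span_singleton_self _)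
      exact Submodule.mem_span_singleton.mp this
    choose b hb using hspan
    have hg0 : g 0 = 0 := by
      refine tendsto_nhds_unique (hgN 0) ?_
      simp [hS]
    have hgsum : ∀ N, g N = ∑ i ∈ Finset.range N, b i • e i := by
      intro N
      induction N with
      | zero => simp [hg0]
      | succ n ih => rw [Finset.sum_range_succ, ← ih, hb]; abel
    have hlim : Tendsto (fun N => ∑ i ∈ Finset.range N, b i • e i) atTop (𝓝 x) := by
      rw [Metric.tendsto_atTop]
      intro ε hε
      obtain ⟨k, hk1, hk2⟩ := ((Metric.tendsto_nhds.mp hux (ε / 3) (by positivity)).and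
        (Metric.tendsto_nhds.mp hg (ε / 3) (by positivity))).exists
      obtain ⟨N0, hN0⟩ := Metric.tendsto_atTop.mp (ha (u k)) (ε / 3) (by positivity)
      refine ⟨N0, fun N hN => ?_⟩
      have h1 := hN0 N hN
      have h2 : dist (S (u k) N) (g N) ≤ dist (S (u k)) g :=
        BoundedContinuousFunction.dist_coe_le_dist N
      rw [hS, hgsum] at h2
      have h3 := dist_triangle4 (∑ i ∈ Finset.range N, b i • e i)
        (∑ i ∈ Finset.range N, a (u k) i • e i) (u k) x
      rw [dist_comm (∑ i ∈ Finset.range N, b i • e i)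
        (∑ i ∈ Finset.range N, a (u k) i • e i)] at h3
      have hk2' : dist (S (u k)) g < ε / 3 := hk2
      linarith
    have hbx : b = a x := hu x b hlim
    ext N
    rw [hgsum, hS, hbx]
  let S' : 𝒲 →L[ℝ] BoundedContinuousFunction ℕ 𝒲 := ⟨S, hcont⟩
  refine ⟨max 1 ‖S'‖, le_max_left _ _,
    fun N => (BoundedContinuousFunction.evalCLM ℝ N).toLinearMap.comp S, ?_, ?_⟩
  · intro N x
    have h1 : ‖S x N‖ ≤ ‖S x‖ := BoundedContinuousFunction.norm_coe_le_norm _ _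
    have h2 : ‖S' x‖ ≤ ‖S'‖ * ‖x‖ := S'.le_opNorm x
    have h3 : ‖S'‖ * ‖x‖ ≤ max 1 ‖S'‖ * ‖x‖ := by gcongr; exact le_max_right _ _
    exact h1.trans (le_trans h2 h3)
  · intro N i
    have : a (e i) = Pi.single i 1 := by
      refine (hu _ _ ?_).symm
      refine tendsto_const_nhds.congr' ?_
      filter_upwards [eventually_gt_atTop i] with n hn
      rw [Finset.sum_eq_single i]
      · simp
      · intro j _ hj; simp [hj]
      · intro h; simp at h; omega
    change S (e i) N = _
    rw [hS, this]
    split_ifs with h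
    · rw [Finset.sum_eq_single i]
      · simp
      · intro j _ hj; simp [hj]
      · intro h'; simp at h'; omega
    · apply Finset.sum_eq_zero
      intro j hj
      have : j ≠ i := by simp at hj; omega
      simp [this]

theorem block_bound [CompleteSpace 𝒲] (e : ℕ → 𝒲) (he : IsSchauderBasis e)
    (z : ℕ → 𝒲) (hz : IsBlockSeq e z) :
    ∃ B : ℝ, 1 ≤ B ∧ ∀ (a : ℕ → ℝ) (k n : ℕ), k ≤ n →
      ‖∑ i ∈ Finset.range k, a i • z i‖ ≤ B * ‖∑ i ∈ Finset.range n, a i • z i‖ := by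
  obtain ⟨B, hB, P, hP, hPe⟩ := exists_partialSum_bound e he
  obtain ⟨hz0, D, hD, hlt⟩ := hz
  have hne : ∀ n, (D n).Nonempty := by
    intro n
    rw [Finset.nonempty_iff_ne_empty]
    intro h
    obtain ⟨c, hc⟩ := hD n
    rw [h] at hc
    exact hz0 n (by simpa using hc)
  have hlt' : ∀ i d, ∀ p ∈ D i, ∀ q ∈ D (i + d + 1), p < q := by
    intro i d
    induction d with
    | zero => exact hlt i
    | succ d ih =>
      intro p hp q hq
      obtain ⟨r, hr⟩ := hne (i + d + 1)
      exact (ih p hp r hr).trans (hlt _ r hr q hq)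
  refine ⟨B, hB, fun a k n hkn => ?_⟩
  have hmin := (D k).min'_mem (hne k)
  set N := (D k).min' (hne k) with hN
  have hPz : ∀ i, P N (z i) = if i < k then z i else 0 := by
    intro i
    obtain ⟨c, hc⟩ := hD i
    rw [hc, map_sum]
    simp only [map_smul, hPe]
    split_ifs with hik
    · refine Finset.sum_congr rfl fun p hp => ?_
      have : p < N := by
        obtain ⟨d, rfl⟩ := Nat.exists_eq_add_of_lt hik
        exact hlt' i d p hp N hmin
      simp [this]
    · refine Finset.sum_eq_zero fun p hp => ?_
      have : ¬ p < N := by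
        rcases (not_lt.mp hik).eq_or_lt with h | h
        · subst h
          exact not_lt.mpr ((D k).min'_le p hp)
        · obtain ⟨d, rfl⟩ := Nat.exists_eq_add_of_lt h
          exact (hlt' k d N hmin p hp).asymm
      simp [this]
  have : P N (∑ i ∈ Finset.range n, a i • z i) = ∑ i ∈ Finset.range k, a i • z i := by
    obtain ⟨m, rfl⟩ := Nat.exists_eq_add_of_le hkn
    rw [map_sum, Finset.sum_range_add]
    simp only [map_smul, hPz]
    rw [Finset.sum_eq_zero (s := Finset.range m), add_zero]
    · refine Finset.sum_congr rfl fun i hi => ?_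
      rw [if_pos (Finset.mem_range.mp hi)]
    · intro i _
      rw [if_neg (by omega), smul_zero]
  rw [← this]
  exact hP _ _

theorem mazur (F Y : Submodule ℝ 𝒲) (hF : FiniteDimensional ℝ F) (hY : ¬FiniteDimensional ℝ Y) :
    ∃ Y' : Submodule ℝ 𝒲, Y' ≤ Y ∧ ¬FiniteDimensional ℝ Y' ∧
      ∀ f ∈ F, ∀ y ∈ Y', ‖f‖ ≤ 2 * ‖f + y‖ := by
  have : ProperSpace F := FiniteDimensional.proper_real F
  obtain ⟨t, hts, htf, hcov⟩ := (isCompact_sphere (0 : F) 1).finite_cover_balls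
    (show (0 : ℝ) < 1 / 2 by norm_num)
  have hφ : ∀ x : 𝒲, ∃ g : StrongDual ℝ 𝒲, ‖g‖ ≤ 1 ∧ g x = ‖x‖ := fun x =>
    exists_dual_vector'' ℝ x
  choose φ hφ1 hφ2 using hφ
  have : Finite t := htf
  let L : 𝒲 →ₗ[ℝ] (t → ℝ) := LinearMap.pi fun x => (φ (x : F)).toLinearMap
  refine ⟨Y ⊓ LinearMap.ker L, inf_le_left, ?_, ?_⟩
  · intro h
    apply hY
    have h2 : (Y ⊓ LinearMap.ker L).FG := (Module.Finite.iff_fg).mp h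
    have h1 : (Y.map L).FG := IsNoetherian.noetherian _
    exact Module.Finite.iff_fg.mpr (Submodule.fg_of_fg_map_of_fg_inf_ker L h1 h2)
  · intro f hf y hy
    by_cases hf0 : f = 0
    · subst hf0; simp
    have hn : 0 < ‖f‖ := norm_pos_iff.mpr hf0
    let f' : F := ‖f‖⁻¹ • ⟨f, hf⟩
    have hf' : f' ∈ Metric.sphere (0 : F) 1 := by
      simp [f', norm_smul, hn.ne']
    obtain ⟨x, hx, hxf⟩ := Set.mem_iUnion₂.mp (hcov hf')
    have hx1 : ‖(x : 𝒲)‖ = 1 := by simpa using hts hx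
    have hLy : φ (x : 𝒲) y = 0 := by
      have := LinearMap.mem_ker.mp hy.2
      exact congrFun this ⟨x, hx⟩
    have hd : ‖(f' : 𝒲) - x‖ < 1 / 2 := by
      simpa [dist_eq_norm] using hxf
    have h1 : |φ (x : 𝒲) ((f' : 𝒲) - x)| ≤ 1 / 2 := by
      have := (φ (x : 𝒲)).le_of_opNorm_le (hφ1 x) ((f' : 𝒲) - x)
      rw [Real.norm_eq_abs] at this
      linarith
    have h2 : (1 : ℝ) / 2 ≤ φ (x : 𝒲) (f' : 𝒲) := by
      rw [map_sub, hφ2, hx1, ] at h1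
      have h1' : |φ (x : 𝒲) (f' : 𝒲) - 1| ≤ 1 / 2 := by simpa using h1
      linarith [(abs_le.mp h1').1]
    have h3 : φ (x : 𝒲) f = ‖f‖ * φ (x : 𝒲) (f' : 𝒲) := by
      simp [f', hn.ne']
    have h4 : φ (x : 𝒲) (f + y) ≤ ‖f + y‖ := by
      have := (φ (x : 𝒲)).le_of_opNorm_le (hφ1 x) (f + y)
      rw [Real.norm_eq_abs] at this
      linarith [le_abs_self (φ (x : 𝒲) (f + y))]
    rw [map_add, hLy, h3] at h4
    nlinarith

theorem seqEquiv_mono {K K' : ℝ} (hK : 1 ≤ K) (h : K ≤ K') {k : ℕ} {x y : ℕ → 𝒲}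
    (hs : SeqEquiv K k x y) : SeqEquiv K' k x y := by
  intro a
  obtain ⟨h1, h2⟩ := hs a
  refine ⟨le_trans ?_ h1, h2.trans ?_⟩
  · gcongr
  · gcongr

theorem embTree_mono {z : ℕ → 𝒲} {Y : Set 𝒲} {K K' : ℝ} (hK : 1 ≤ K) (h : K ≤ K') :
    embTree z Y K ⊆ embTree z Y K' :=
  fun _ hl => ⟨hl.1, seqEquiv_mono hK h hl.2⟩

theorem embTree_prefix {z : ℕ → 𝒲} {Y : Set 𝒲} {K : ℝ} {s u : List 𝒲}
    (h : s ++ u ∈ embTree z Y K) : s ∈ embTree z Y K := by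
  refine ⟨fun v hv => h.1 v (List.mem_append_left _ hv), fun a => ?_⟩
  have := h.2 (fun i => if i < s.length then a i else 0)
  have key : ∀ w w' : ℕ → 𝒲, (∀ i < s.length, w i = w' i) →
      ∑ i ∈ Finset.range (s ++ u).length, (if i < s.length then a i else 0) • w i
      = ∑ i ∈ Finset.range s.length, a i • w' i := by
    intro w w' hw
    rw [List.length_append, Finset.sum_range_add, Finset.sum_eq_zero (s := Finset.range u.length),
      add_zero]
    · refine Finset.sum_congr rfl fun i hi => ?_
      rw [if_pos (Finset.mem_range.mp hi), hw i (Finset.mem_range.mp hi)]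
    · intro i _
      rw [if_neg (by omega), zero_smul]
  rw [key z z fun _ _ => rfl, key (fun i => (s ++ u).getD i 0) (fun i => s.getD i 0)] at this
  · exact this
  · intro i hi
    exact List.getD_append _ _ _ _ hi

theorem extend (z : ℕ → 𝒲) {B K : ℝ} (hB1 : 1 ≤ B) (hK : 1 ≤ K)
    (hB : ∀ (a : ℕ → ℝ) (k n : ℕ), k ≤ n →
      ‖∑ i ∈ Finset.range k, a i • z i‖ ≤ B * ‖∑ i ∈ Finset.range n, a i • z i‖)
    (hloc : ∀ F Y : Submodule ℝ 𝒲, FiniteDimensional ℝ F →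
      ¬FiniteDimensional ℝ Y → KEmbeds K F Y)
    (Y : Submodule ℝ 𝒲) (hY : ¬FiniteDimensional ℝ Y) (C : ℝ) (hC : 1 ≤ C) :
    ∃ C1, C ≤ C1 ∧ ∀ s ∈ embTree z (Y : Set 𝒲) C, ∀ m : ℕ, ∃ u : List 𝒲, u.length = m ∧
      s ++ u ∈ embTree z (Y : Set 𝒲) C1 := by
  have hC1 : C ≤ (2 * C + 3 * K) * (1 + B) := by nlinarith
  refine ⟨(2 * C + 3 * K) * (1 + B), hC1, fun s hs m => ?_⟩
  set C1 := (2 * C + 3 * K) * (1 + B) with hC1def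
  have hC1pos : 0 < C1 := by linarith
  set k := s.length with hk
  let F : Submodule ℝ 𝒲 := Submodule.span ℝ {v | v ∈ s}
  have hF : FiniteDimensional ℝ F := FiniteDimensional.span_of_finite ℝ s.finite_toSet
  obtain ⟨Y', hY'Y, hY', hmaz⟩ := mazur F Y hF hY
  let G : Submodule ℝ 𝒲 := Submodule.span ℝ (Set.range fun j : Fin m => z (k + j))
  have hG : FiniteDimensional ℝ G := FiniteDimensional.span_of_finite ℝ (Set.finite_range _)
  obtain ⟨T, hTY, hT⟩ := hloc G Y' hG hY'
  have hzG : ∀ j : Fin m, z (k + j) ∈ G := fun j => Submodule.subset_span ⟨j, rfl⟩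
  let u : List 𝒲 := List.ofFn fun j : Fin m => T ⟨z (k + j), hzG j⟩
  have hu : u.length = m := by simp [u]
  refine ⟨u, hu, ?_, ?_⟩
  · intro v hv
    rcases List.mem_append.mp hv with h | h
    · exact hs.1 v h
    · obtain ⟨j, rfl⟩ := (List.mem_ofFn' _ _).mp h
      exact hY'Y (hTY _)
  · intro a
    rw [List.length_append, ← hk, hu, Finset.sum_range_add]
    have e1 : ∑ i ∈ Finset.range k, a i • (s ++ u).getD i 0
        = ∑ i ∈ Finset.range k, a i • s.getD i 0 := by
      refine Finset.sum_congr rfl fun i hi => ?_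
      rw [List.getD_append _ _ _ _ (Finset.mem_range.mp hi)]
    let v : G := ∑ j : Fin m, a (k + j) • ⟨z (k + j), hzG j⟩
    have e2 : ∑ i ∈ Finset.range m, a (k + i) • (s ++ u).getD (k + i) 0 = T v := by
      rw [← Fin.sum_univ_eq_sum_range (fun i => a (k + i) • (s ++ u).getD (k + i) 0)]
      simp only [v, map_sum, map_smul]
      refine Finset.sum_congr rfl fun j _ => ?_
      rw [List.getD_append_right _ _ _ _ (by omega)]
      simp [u, ← hk]
    have e3 : (v : 𝒲) = ∑ i ∈ Finset.range m, a (k + i) • z (k + i) := by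
      rw [← Fin.sum_univ_eq_sum_range (fun i => a (k + i) • z (k + i))]
      simp [v]
    rw [e1, e2]
    set f := ∑ i ∈ Finset.range k, a i • s.getD i 0 with hf
    set w := ∑ i ∈ Finset.range k, a i • z i with hw
    have hfF : f ∈ F := by
      refine Submodule.sum_mem _ fun i hi => Submodule.smul_mem _ _ (Submodule.subset_span ?_)
      have hi' : i < s.length := Finset.mem_range.mp hi
      rw [List.getD_eq_getElem _ _ hi']
      exact List.getElem_mem hi'
    have h1 := hmaz f hfF (T v) (hTY v)
    obtain ⟨h2, h3⟩ := hs.2 a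
    rw [← hk] at h2 h3
    change 1 / C * ‖f‖ ≤ ‖w‖ at h2
    change ‖w‖ ≤ C * ‖f‖ at h3
    obtain ⟨h4, h5⟩ := hT v
    have h6 := hB a k (k + m) (by omega)
    rw [Finset.sum_range_add] at h6 ⊢
    rw [← hw, ← e3] at h6 ⊢
    have hvn : ‖v‖ = ‖(v : 𝒲)‖ := rfl
    rw [hvn] at h4 h5
    set p := ‖w + (v : 𝒲)‖
    set q := ‖f + T v‖
    have hp : 0 ≤ p := norm_nonneg _
    have hq : 0 ≤ q := norm_nonneg _
    have h2' : ‖f‖ ≤ C * ‖w‖ := by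
      rw [one_div, inv_mul_le_iff₀ (by linarith)] at h2; exact h2
    have h4' : ‖(v : 𝒲)‖ ≤ K * ‖T v‖ := by
      rw [one_div, inv_mul_le_iff₀ (by linarith)] at h4; exact h4
    have hvp : ‖(v : 𝒲)‖ ≤ (1 + B) * p := by
      have : ‖(v : 𝒲)‖ ≤ p + ‖w‖ := by
        have := norm_sub_le (w + (v : 𝒲)) w
        simpa using this
      linarith
    have hTq : ‖T v‖ ≤ 3 * q := by
      have : ‖T v‖ ≤ q + ‖f‖ := by
        have := norm_sub_le (f + T v) f
        simpa using this
      linarith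
    have hqp : q ≤ C1 * p := by
      have t1 : q ≤ ‖f‖ + ‖T v‖ := norm_add_le _ _
      have t2 : C * ‖w‖ ≤ C * (B * p) := by gcongr
      have t3 : K * ‖(v : 𝒲)‖ ≤ K * ((1 + B) * p) := by gcongr
      have t4 : 0 ≤ (2 * C + C * B + 2 * K * (1 + B)) * p := by positivity
      rw [hC1def]
      nlinarith
    have hpq : p ≤ C1 * q := by
      have t1 : p ≤ ‖w‖ + ‖(v : 𝒲)‖ := norm_add_le _ _
      have t2 : C * ‖f‖ ≤ C * (2 * q) := by gcongr
      have t3 : K * ‖T v‖ ≤ K * (3 * q) := by gcongr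
      have t4 : 0 ≤ ((2 * C + 3 * K) * B) * q := by positivity
      rw [hC1def]
      nlinarith
    refine ⟨?_, hpq⟩
    rw [one_div, inv_mul_le_iff₀ hC1pos]
    exact hqp

theorem rank_chain {z : ℕ → 𝒲} {Y : Set 𝒲} {K : ℝ}
    (h : WellFounded (fun t s : embTree z Y K => s.val <+: t.val ∧ s.val ≠ t.val))
    (s : List 𝒲) (hs : s ∈ embTree z Y K) (u : List 𝒲) (hu : s ++ u ∈ embTree z Y K) :
    (h.apply ⟨s ++ u, hu⟩).rank + (u.length : Ordinal.{0}) ≤ (h.apply ⟨s, hs⟩).rank := by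
  induction u using List.reverseRecOn with
  | nil => simp
  | append_singleton u x ih =>
    have hu0 : s ++ u ∈ embTree z Y K := by
      rw [← List.append_assoc] at hu
      exact embTree_prefix hu
    have hlt := Acc.rank_lt_of_rel (h.apply ⟨s ++ u, hu0⟩)
      (a := ⟨s ++ (u ++ [x]), hu⟩) ⟨by simp, by simp⟩
    refine le_trans ?_ (ih hu0)
    have hc : (((u ++ [x]).length : ℕ) : Ordinal.{0}) = 1 + (u.length : Ordinal.{0}) := by
      rw [List.length_append, List.length_singleton, add_comm]; push_cast; rfl
    rw [hc, ← add_assoc]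
    gcongr
    exact Order.add_one_le_of_lt hlt

theorem rank_ge (z : ℕ → 𝒲) {B K : ℝ} (hB1 : 1 ≤ B) (hK : 1 ≤ K)
    (hB : ∀ (a : ℕ → ℝ) (k n : ℕ), k ≤ n →
      ‖∑ i ∈ Finset.range k, a i • z i‖ ≤ B * ‖∑ i ∈ Finset.range n, a i • z i‖)
    (hloc : ∀ F Y : Submodule ℝ 𝒲, FiniteDimensional ℝ F →
      ¬FiniteDimensional ℝ Y → KEmbeds K F Y)
    (Y : Submodule ℝ 𝒲) (hY : ¬FiniteDimensional ℝ Y)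
    (h : ∀ C : ℝ, 1 ≤ C → WellFounded (fun t s : embTree z (Y : Set 𝒲) C =>
      s.val <+: t.val ∧ s.val ≠ t.val)) (n : ℕ) :
    ∀ C : ℝ, 1 ≤ C → ∃ C' : ℝ, ∃ hC' : 1 ≤ C', C ≤ C' ∧
      ∀ s ∈ embTree z (Y : Set 𝒲) C, ∃ hs : s ∈ embTree z (Y : Set 𝒲) C',
        Ordinal.omega0.{0} * (n : Ordinal.{0}) ≤ ((h C' hC').apply ⟨s, hs⟩).rank := by
  induction n with
  | zero => exact fun C hC => ⟨C, hC, le_rfl, fun s hs => ⟨hs, by simp⟩⟩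
  | succ n ih =>
    intro C hC
    obtain ⟨C1, hCC1, hext⟩ := extend z hB1 hK hB hloc Y hY C hC
    obtain ⟨C', hC', hC1C', hr⟩ := ih C1 (hC.trans hCC1)
    refine ⟨C', hC', hCC1.trans hC1C', fun s hs => ?_⟩
    have hs' := embTree_mono hC (hCC1.trans hC1C') hs
    refine ⟨hs', ?_⟩
    rw [Nat.cast_succ, mul_add, mul_one,
      Ordinal.add_le_iff_of_isSuccLimit Ordinal.isSuccLimit_omega0]
    intro o ho
    obtain ⟨m, rfl⟩ := Ordinal.lt_omega0.mp ho
    obtain ⟨u, rfl, hu⟩ := hext s hs m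
    obtain ⟨hu', hru⟩ := hr _ hu
    refine le_trans ?_ (rank_chain (h C' hC') s hs' u hu')
    gcongr

end Helpers

/-- A locally minimal Banach space `𝒲` with a Schauder basis `(e n)` is
`ω²`-minimal. -/
theorem locallyMinimal_omega_sq_minimal
    (𝒲 : Type) [NormedAddCommGroup 𝒲] [NormedSpace ℝ 𝒲] [CompleteSpace 𝒲]
    (e : ℕ → 𝒲) (he : IsSchauderBasis e) (hloc : LocallyMinimal 𝒲) :
    IsAlphaMinimal e (Ordinal.omega0 * Ordinal.omega0) := by
  intro z hz Y _ hY
  obtain ⟨B, hB1, hB⟩ := block_bound e he z hz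
  obtain ⟨K, hK, hl⟩ := hloc
  unfold embIndex
  split_ifs with htop
  · exact le_top
  · have h : ∀ C : ℝ, 1 ≤ C → WellFounded (fun t s : embTree z (Y : Set 𝒲) C =>
        s.val <+: t.val ∧ s.val ≠ t.val) := by
      intro C hC
      by_contra hw
      exact htop ⟨C, hC, by rw [treeRank, dif_neg hw]⟩
    rw [WithTop.coe_le_coe]
    rw [Ordinal.mul_le_iff_of_isSuccLimit Ordinal.isSuccLimit_omega0]
    intro o ho
    obtain ⟨n, rfl⟩ := Ordinal.lt_omega0.mp ho
    obtain ⟨C, hC, -, hr⟩ := rank_ge z hB1 hK hB hl Y hY h n 1 le_rfl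
    obtain ⟨hs, hrs⟩ := hr [] ⟨by simp, by intro a; simp⟩
    refine hrs.trans ?_
    have hmem : (⨆ s : embTree z (Y : Set 𝒲) C, Order.succ (((h C hC).apply s).rank)) ∈
        {o : Ordinal.{0} | ∃ K : ℝ, 1 ≤ K ∧
          (o : WithTop Ordinal) = treeRank (embTree z (Y : Set 𝒲) K)} :=
      ⟨C, hC, by rw [treeRank, dif_pos (h C hC)]⟩
    have hbdd : BddAbove {o : Ordinal.{0} | ∃ K : ℝ, 1 ≤ K ∧
          (o : WithTop Ordinal) = treeRank (embTree z (Y : Set 𝒲) K)} := by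
      have hsub : {o : Ordinal.{0} | ∃ K : ℝ, 1 ≤ K ∧
          (o : WithTop Ordinal) = treeRank (embTree z (Y : Set 𝒲) K)} ⊆
          Set.range (fun K : ℝ => (treeRank (embTree z (Y : Set 𝒲) K)).untopD 0) := by
        rintro o ⟨K, _, ho⟩
        exact ⟨K, by simp [← ho]⟩
      exact Ordinal.bddAbove_of_small.mono hsub
    refine le_trans ?_ (le_csSup hbdd hmem)
    refine le_trans (Order.le_succ _) ?_
    exact Ordinal.le_iSup (fun s : embTree z (Y : Set 𝒲) C =>
      Order.succ (((h C hC).apply s).rank)) ⟨[], hs⟩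

end Rosendal
end

section
/- If a Banach space 𝒲 with Schauder basis (e_n) is tight with constants, then 𝒲 = [e_n] is ω-tight; in fact, for any block sequence (y_n) in 𝒲, if I_0 < I_1 < … are intervals witnessing tightness with constants, then for every infinite A ⊆ ℕ, Emb((y_n), [e_n : n ∉ ⋃_{j∈A} I_j]) ≤ ω. -/
open Filter Topology

namespace Rosendal

variable {𝒲 : Type} [NormedAddCommGroup 𝒲] [NormedSpace ℝ 𝒲]

/-- The basis `(e n)` is tight with constants: for every block sequence `(y n)` there are
successive intervals `I 0 < I 1 < …` such that for every integer `K ≥ 1`,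
`[y n]_{n ∈ I K}` does not embed with constant `K` into `[e n]_{n ∉ I K}`. -/
def TightWithConstants (e : ℕ → 𝒲) : Prop :=
  ∀ y : ℕ → 𝒲, IsBlockSeq e y →
    ∃ I : ℕ → Finset ℕ, IntervalSeq I ∧
      ∀ K : ℕ, 1 ≤ K →
        ¬KEmbeds (K : ℝ) (closedSpan {v | ∃ n ∈ I K, v = y n})
          (closedSpan {v | ∃ n : ℕ, n ∉ I K ∧ v = e n})

theorem aux_kembeds (y : ℕ → 𝒲) (J : Finset ℕ) (Y Z : Submodule ℝ 𝒲) (hYZ : Y ≤ Z)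
    (K M : ℝ) (hK : 1 ≤ K) (hKM : K ≤ M) (l : List 𝒲)
    (hl : l ∈ embTree y (Y : Set 𝒲) K) (hJ : ∀ j ∈ J, j < l.length) :
    KEmbeds M (closedSpan {v | ∃ n ∈ J, v = y n}) Z := by
  obtain ⟨hlY, heq⟩ := hl
  let f : (ℕ → ℝ) →ₗ[ℝ] 𝒲 := ∑ i ∈ J, (LinearMap.proj i : (ℕ → ℝ) →ₗ[ℝ] ℝ).smulRight (y i)
  let g : (ℕ → ℝ) →ₗ[ℝ] 𝒲 :=
    ∑ i ∈ J, (LinearMap.proj i : (ℕ → ℝ) →ₗ[ℝ] ℝ).smulRight (l.getD i 0)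
  have hf : ∀ c, f c = ∑ i ∈ J, c i • y i := fun c => by simp [f]
  have hg : ∀ c, g c = ∑ i ∈ J, c i • l.getD i 0 := fun c => by simp [g]
  have hF : closedSpan {v | ∃ n ∈ J, v = y n} ≤ LinearMap.range f := by
    have hfin : {v | ∃ n ∈ J, v = y n}.Finite := by
      refine ((J.finite_toSet).image y).subset ?_
      rintro v ⟨n, hn, rfl⟩
      exact ⟨n, hn, rfl⟩
    haveI : FiniteDimensional ℝ (Submodule.span ℝ {v | ∃ n ∈ J, v = y n}) :=
      FiniteDimensional.span_of_finite ℝ hfin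
    unfold closedSpan
    rw [(Submodule.closed_of_finiteDimensional _).submodule_topologicalClosure_eq,
      Submodule.span_le]
    rintro v ⟨n, hn, rfl⟩
    refine ⟨Pi.single n 1, ?_⟩
    rw [hf, Finset.sum_eq_single n]
    · simp
    · intro b _ hb
      simp [hb]
    · intro h
      exact absurd hn h
  obtain ⟨s, hs⟩ := f.rangeRestrict.exists_rightInverse_of_surjective (LinearMap.range_rangeRestrict f)
  refine ⟨g ∘ₗ s ∘ₗ Submodule.inclusion hF, ?_, ?_⟩
  · intro v
    apply hYZ
    simp only [LinearMap.comp_apply]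
    rw [hg]
    refine Submodule.sum_mem _ fun i hi => Submodule.smul_mem _ _ ?_
    rw [List.getD_eq_getElem _ _ (hJ i hi)]
    exact hlY _ (List.getElem_mem _)
  · intro v
    simp only [LinearMap.comp_apply]
    set c := s (Submodule.inclusion hF v) with hc
    have hv : f c = v := by
      have := congrArg Subtype.val (LinearMap.congr_fun hs (Submodule.inclusion hF v))
      simpa using this
    have hsum : ∀ z : ℕ → 𝒲, ∑ i ∈ Finset.range l.length, (if i ∈ J then c i else 0) • z i
        = ∑ i ∈ J, c i • z i := by
      intro z
      symm
      have hsub : J ⊆ Finset.range l.length := fun j hj => Finset.mem_range.2 (hJ j hj)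
      rw [← Finset.sum_subset hsub]
      · exact Finset.sum_congr rfl fun i hi => by simp [hi]
      · intro i _ hi
        simp [hi]
    have := heq (fun i => if i ∈ J then c i else 0)
    simp only [hsum] at this
    rw [← hf, ← hg, hv] at this
    obtain ⟨h1, h2⟩ := this
    have hK0 : 0 < K := by linarith
    have hM0 : 0 < M := by linarith
    have hvn : ‖(v : 𝒲)‖ = ‖v‖ := rfl
    rw [hvn] at h1 h2
    constructor
    · have : ‖v‖ ≤ M * ‖g c‖ := h2.trans (by gcongr)
      rw [one_div, inv_mul_le_iff₀ hM0]
      exact this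
    · rw [one_div, inv_mul_le_iff₀ hK0] at h1
      exact h1.trans (by gcongr)

theorem aux_treeRank (T : Set (List 𝒲)) (N : ℕ) (hT : ∀ l ∈ T, l.length ≤ N) :
    treeRank T ≤ (Ordinal.omega0 : WithTop Ordinal) := by
  have hlt : ∀ t s : T, (s.val <+: t.val ∧ s.val ≠ t.val) →
      N - t.val.length < N - s.val.length := by
    rintro t s ⟨h1, h2⟩
    have h3 := h1.length_le
    have h4 : s.val.length ≠ t.val.length := fun h => h2 (h1.eq_of_length h)
    have h5 := hT _ t.2
    omega
  have hwf : WellFounded (fun t s : T => s.val <+: t.val ∧ s.val ≠ t.val) :=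
    Subrelation.wf (fun {t s} h => hlt t s h) (measure fun s : T => N - s.val.length).wf
  have hr : ∀ s : T, (hwf.apply s).rank ≤ ((N - s.val.length : ℕ) : Ordinal) := by
    intro s
    induction s using hwf.induction with
    | _ s ih =>
      rw [Acc.rank_eq]
      refine Ordinal.iSup_le fun b => ?_
      refine Order.succ_le_of_lt ((ih b.1 b.2).trans_lt ?_)
      exact_mod_cast hlt _ _ b.2
  unfold treeRank
  rw [dif_pos hwf]
  refine WithTop.coe_le_coe.2 (Ordinal.iSup_le fun s => ?_)
  exact Order.succ_le_of_lt ((hr s).trans_lt (Ordinal.nat_lt_omega0 _))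

theorem aux_main (e y : ℕ → 𝒲) (I : ℕ → Finset ℕ)
    (h : ∀ K : ℕ, 1 ≤ K →
          ¬KEmbeds (K : ℝ) (closedSpan {v | ∃ n ∈ I K, v = y n})
            (closedSpan {v | ∃ n : ℕ, n ∉ I K ∧ v = e n}))
    (A : Set ℕ) (hA : A.Infinite) :
    embIndex y (residualSpace e I A : Set 𝒲) ≤ (Ordinal.omega0 : WithTop Ordinal) := by
  have key : ∀ K : ℝ, 1 ≤ K → treeRank (embTree y (residualSpace e I A : Set 𝒲) K) ≤
      (Ordinal.omega0 : WithTop Ordinal) := by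
    intro K hK
    obtain ⟨m, hmA, hm⟩ := hA.exists_gt (⌈K⌉₊)
    have hKm : K ≤ m := (Nat.le_ceil K).trans (by exact_mod_cast hm.le)
    have hm1 : 1 ≤ m := by omega
    refine aux_treeRank _ ((I m).sup id) fun l hl => ?_
    by_contra hlen
    push Not at hlen
    refine h m hm1 (aux_kembeds y (I m) (residualSpace e I A) _ ?_ K m hK hKm l hl ?_)
    · refine Submodule.topologicalClosure_mono (Submodule.span_mono ?_)
      rintro v ⟨n, hn, rfl⟩
      exact ⟨n, hn m hmA, rfl⟩
    · intro j hj
      exact (Finset.le_sup (f := id) hj).trans_lt hlen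
  unfold embIndex
  rw [if_neg]
  · refine WithTop.coe_le_coe.2 (csSup_le' ?_)
    rintro o ⟨K, hK, ho⟩
    exact WithTop.coe_le_coe.1 (ho ▸ key K hK)
  · rintro ⟨K, hK, ht⟩
    have := key K hK
    rw [ht, top_le_iff] at this
    exact WithTop.coe_ne_top this

/-- If `𝒲 = [e n]` is tight with constants then it is `ω`-tight; in fact,
for any block sequence `(y n)`, any intervals witnessing tightness with constants witness
that `Emb((y n), [e n : n ∉ ⋃_{j ∈ A} I j]) ≤ ω` for every infinite `A ⊆ ℕ`. -/
theorem tightWithConstants_omega_tight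
    (𝒲 : Type) [NormedAddCommGroup 𝒲] [NormedSpace ℝ 𝒲] [CompleteSpace 𝒲]
    (e : ℕ → 𝒲) (he : IsSchauderBasis e) (htwc : TightWithConstants e) :
    IsAlphaTight e Ordinal.omega0 ∧
    ∀ y : ℕ → 𝒲, IsBlockSeq e y →
      ∀ I : ℕ → Finset ℕ, IntervalSeq I →
        (∀ K : ℕ, 1 ≤ K →
          ¬KEmbeds (K : ℝ) (closedSpan {v | ∃ n ∈ I K, v = y n})
            (closedSpan {v | ∃ n : ℕ, n ∉ I K ∧ v = e n})) →
        ∀ A : Set ℕ, A.Infinite →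
          embIndex y (residualSpace e I A : Set 𝒲) ≤ (Ordinal.omega0 : WithTop Ordinal) := by
  refine ⟨fun y hy => ?_, fun y _ I _ h A hA => aux_main e y I h A hA⟩
  obtain ⟨I, hI, h⟩ := htwc y hy
  exact ⟨I, hI, fun A hA => aux_main e y I h A hA⟩

end Rosendal
end
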